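/- Let K be an algebraically closed field, let n >= 1, and let z in FPF_n(I_n). Then I^ss_z = I(X^ss_z); in particular, I^ss_z is a prime ideal of R_n. -/

import Mathlib

namespace Paper

/-!
We model a permutation of the positive integers `{1, 2, 3, ...}` as an `Equiv.Perm ℕ`
that fixes `0`; all notions below refer only to positive inputs.
-/

/-- The rank `r_w(i,j) = #{a ∈ [i] : w(a) ∈ [j]}` of the `i × j` partial
permutation matrix of `w`, where `[k] = {1, ..., k}`. -/
def rnk (w : Equiv.Perm ℕ) (i j : ℕ) : ℕ :=
  ((Finset.Icc 1 i).filter fun a => w a ∈ Finset.Icc 1 j).card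

/-- Right descent set `Des_R(w) = {i ≥ 1 : w(i) > w(i+1)}`. -/
def DesR (w : Equiv.Perm ℕ) : Set ℕ := {i | 1 ≤ i ∧ w (i + 1) < w i}

/-- Left descent set `Des_L(w) = Des_R(w⁻¹)`. -/
def DesL (w : Equiv.Perm ℕ) : Set ℕ := DesR w⁻¹

/-- `S_∞`: permutations of the positive integers fixing all but finitely many points. -/
def SInfty : Set (Equiv.Perm ℕ) :=
  {w | w 0 = 0 ∧ Set.Finite {i : ℕ | w i ≠ i}}

/-- `S^{m,n}_∞ = {w ∈ S_∞ : Des_R(w) ⊆ [m], Des_L(w) ⊆ [n]}`. -/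
def SmnInfty (m n : ℕ) : Set (Equiv.Perm ℕ) :=
  {w | w ∈ SInfty ∧ DesR w ⊆ Set.Icc 1 m ∧ DesL w ⊆ Set.Icc 1 n}

/-- The Rothe diagram `D(w) = {(i,j) : 0 < j < w(i), 0 < i < w⁻¹(j)}`. -/
def Rothe (w : Equiv.Perm ℕ) : Set (ℕ × ℕ) :=
  {p | 0 < p.2 ∧ p.2 < w p.1 ∧ 0 < p.1 ∧ p.1 < w⁻¹ p.2}

/-- The function `1_FPF`, sending `i ↦ i - (-1)^i` on positive integers (it fixes `0`). -/
def oneFPF : ℕ → ℕ := fun i => if i % 2 = 1 then i + 1 else i - 1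

/-- `I^FPF_∞`: fixed-point-free involutions of the positive integers agreeing with
`1_FPF` at all sufficiently large inputs. -/
def IFPFInfty : Set (Equiv.Perm ℕ) :=
  {z | z 0 = 0 ∧ (∀ i, 1 ≤ i → z i ≠ i) ∧ z * z = 1 ∧ ∃ N, ∀ i, N ≤ i → z i = oneFPF i}

/-- The skew-symmetric Rothe diagram `D^ss(z) = {(i,j) : 0 < j < z(i), j < i < z(j)}`. -/
def Dss (z : Equiv.Perm ℕ) : Set (ℕ × ℕ) :=
  {p | 0 < p.2 ∧ p.2 < z p.1 ∧ p.2 < p.1 ∧ p.1 < z p.2}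

/-- `FPF_n(I_n) = {z ∈ I^FPF_∞ : D^ss(z) ⊆ [n] × [n]}`. -/
def FPFIn (n : ℕ) : Set (Equiv.Perm ℕ) :=
  {z | z ∈ IFPFInfty ∧ Dss z ⊆ Set.Icc 1 n ×ˢ Set.Icc 1 n}

/-- `ℓ_fpf(z) = |D^ss(z)|`. -/
noncomputable def ellFpf (z : Equiv.Perm ℕ) : ℕ := (Dss z).ncard

/-- Bruhat order on `I^FPF_∞`: reflexive-transitive closure of `z < (i,j) z (i,j)`
whenever `i < j` and `ℓ_fpf` goes up by exactly one. -/
def fpfBruhatLe (z y : Equiv.Perm ℕ) : Prop :=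
  Relation.ReflTransGen
    (fun a b => ∃ i j : ℕ, 1 ≤ i ∧ i < j ∧
      b = Equiv.swap i j * a * Equiv.swap i j ∧ ellFpf b = ellFpf a + 1) z y

/-- `i` is a visible descent of `z` if `i ≥ 1` and `z(i+1) < min(i, z(i))`. -/
def visibleDescent (z : Equiv.Perm ℕ) (i : ℕ) : Prop :=
  1 ≤ i ∧ z (i + 1) < min i (z i)

/-- `Ψ(z, p) = {(p,r) z (p,r) : r > p, ℓ_fpf((p,r) z (p,r)) = ℓ_fpf(z) + 1}`. -/
def PsiSet (z : Equiv.Perm ℕ) (p : ℕ) : Set (Equiv.Perm ℕ) :=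
  {y | ∃ r : ℕ, p < r ∧ y = Equiv.swap p r * z * Equiv.swap p r ∧ ellFpf y = ellFpf z + 1}

/-- The dominant component `dom(z) = {(i,j) : i, j ≥ 1, r_z(i,j) = 0}`. -/
def domSet (z : Equiv.Perm ℕ) : Set (ℕ × ℕ) :=
  {p | 1 ≤ p.1 ∧ 1 ≤ p.2 ∧ rnk z p.1 p.2 = 0}

/-- `(p, q)` is an outer corner of `dom(z)`. -/
def IsOuterCorner (z : Equiv.Perm ℕ) (p q : ℕ) : Prop :=
  1 ≤ p ∧ 1 ≤ q ∧ (p, q) ∉ domSet z ∧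
    (p = 1 ∨ (p - 1, q) ∈ domSet z) ∧ (q = 1 ∨ (p, q - 1) ∈ domSet z)

/-- `I_n`: involutions in `S_∞` fixing every `i > n`. -/
def InvolIn (n : ℕ) : Set (Equiv.Perm ℕ) :=
  {w | w 0 = 0 ∧ w * w = 1 ∧ ∀ i, n < i → w i = i}

/-- The fixed points of `z` lying in `[n]`. -/
def fixedPtsIn (n : ℕ) (z : Equiv.Perm ℕ) : Finset ℕ :=
  (Finset.Icc 1 n).filter fun i => z i = i

/-- The function swapping `m + 2t - 1` and `m + 2t` for every `t ≥ 1`, fixing all other points. -/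
def tailSwapFun (m : ℕ) : ℕ → ℕ := fun i =>
  if i ≤ m then i else if (i - m) % 2 = 1 then i + 1 else i - 1

theorem tailSwapFun_involutive (m : ℕ) : Function.Involutive (tailSwapFun m) := by
  intro i
  unfold tailSwapFun
  split_ifs <;> omega

/-- The involution swapping `m + 2t - 1` and `m + 2t` for every `t ≥ 1`. -/
def tailSwap (m : ℕ) : Equiv.Perm ℕ :=
  Function.Involutive.toPerm _ (tailSwapFun_involutive m)

/-- The fixed-point-free standardization `FPF_n(z) = z ⋅ (i_1,n+1)⋯(i_k,n+k) ⋅ c`,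
where `i_1 < ⋯ < i_k` are the fixed points of `z` in `[n]` and `c` swaps
`n+k+2t-1, n+k+2t` for all `t ≥ 1`. -/
noncomputable def fpfStd (n : ℕ) (z : Equiv.Perm ℕ) : Equiv.Perm ℕ :=
  z *
    (List.ofFn fun t : Fin (fixedPtsIn n z).card =>
      Equiv.swap ((fixedPtsIn n z).orderEmbOfFin rfl t) (n + (t : ℕ) + 1)).prod *
    tailSwap (n + (fixedPtsIn n z).card)

/-- `Mat^ss_n(K)`: skew-symmetric `n × n` matrices (transpose is the negative, zero diagonal).
Row/column index `a : Fin n` corresponds to the (1-indexed) row/column `a + 1`. -/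
def MatSS (K : Type*) [CommRing K] (n : ℕ) : Set (Matrix (Fin n) (Fin n) K) :=
  {A | A.transpose = -A ∧ ∀ i, A i i = 0}

/-- The skew-symmetric matrix Schubert variety
`X^ss_z = {A ∈ Mat^ss_n : rank A_{[i][j]} ≤ r_z(i,j) for all i, j ∈ [n]}`. -/
noncomputable def Xss (K : Type*) [Field K] (n : ℕ) (z : Equiv.Perm ℕ) :
    Set (Matrix (Fin n) (Fin n) K) :=
  {A | A ∈ MatSS K n ∧ ∀ (i j : ℕ) (hi : i ≤ n) (hj : j ≤ n), 1 ≤ i → 1 ≤ j →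
    (A.submatrix (Fin.castLE hi) (Fin.castLE hj)).rank ≤ rnk z i j}

/-- `#{(i,j) : i > j, j < z(i), i < z(j)}` for a permutation of `Fin N`
(the `0`-indexed version of `ℓ_fpf`). -/
def ellFpfFin {N : ℕ} (z : Equiv.Perm (Fin N)) : ℕ :=
  (Finset.univ.filter fun p : Fin N × Fin N => p.2 < p.1 ∧ p.2 < z p.1 ∧ p.1 < z p.2).card

/-- The Pfaffian of an `N × N` matrix:
`pf(A) = ∑_{z fpf involution of [N]} (-1)^{ℓ_fpf(z)} ∏_{z(i) < i} A_{z(i), i}`.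
(The sum is empty, hence `0`, when `N` is odd.) -/
noncomputable def Pfaffian {R : Type*} [CommRing R] {N : ℕ} (A : Matrix (Fin N) (Fin N) R) : R :=
  ∑ z ∈ Finset.univ.filter (fun z : Equiv.Perm (Fin N) => (∀ i, z i ≠ i) ∧ ∀ i, z (z i) = i),
    (-1 : R) ^ ellFpfFin z * ∏ i ∈ Finset.univ.filter (fun i : Fin N => z i < i), A (z i) i

/-- Index set for the variables `u_{ij}`, `n ≥ i > j ≥ 1`, of the coordinate ring
`R_n = K[Mat^ss_n]`; the variable `⟨(a, b), _⟩` is `u_{a+1, b+1}`. -/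
abbrev SSVar (n : ℕ) : Type := {p : Fin n × Fin n // p.2 < p.1}

/-- The generic skew-symmetric matrix `U^ss` over `R_n`. -/
noncomputable def Uss (K : Type*) [CommRing K] (n : ℕ) :
    Matrix (Fin n) (Fin n) (MvPolynomial (SSVar n) K) :=
  Matrix.of fun i j =>
    if h : j < i then MvPolynomial.X ⟨(i, j), h⟩
    else if h' : i < j then -MvPolynomial.X ⟨(j, i), h'⟩
    else 0

/-- The ideal of polynomials vanishing on a set `X`, where a point `A` is evaluated
via `ev A : σ → K`. -/
noncomputable def vanishingIdeal {K : Type*} [CommRing K] {σ M : Type*}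
    (X : Set M) (ev : M → σ → K) : Ideal (MvPolynomial σ K) where
  carrier := {f | ∀ A ∈ X, MvPolynomial.eval (ev A) f = 0}
  zero_mem' := by simp
  add_mem' := by
    intro f g hf hg
    simp only [Set.mem_setOf_eq] at *
    intro A hA
    rw [map_add, hf A hA, hg A hA, add_zero]
  smul_mem' := by
    intro c f hf
    simp only [Set.mem_setOf_eq] at *
    intro A hA
    rw [smul_eq_mul, map_mul, hf A hA, mul_zero]

/-- `I(X^ss_z) ⊆ R_n`, where `u_{ij}` is evaluated at `A` as `A_{ij}`. -/
noncomputable def IXss (K : Type*) [Field K] (n : ℕ) (z : Equiv.Perm ℕ) :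
    Ideal (MvPolynomial (SSVar n) K) :=
  vanishingIdeal (Xss K n z) fun A v => A v.1.1 v.1.2

/-- `pf(U^ss_{RR})` for a finite row/column set `R` (listed in increasing order). -/
noncomputable def pfUss (K : Type*) [CommRing K] {n : ℕ} (R : Finset (Fin n)) :
    MvPolynomial (SSVar n) K :=
  Pfaffian ((Uss K n).submatrix (fun s => R.orderEmbOfFin rfl s) fun t => R.orderEmbOfFin rfl t)

/-- The ideal `I^ss_z`, generated by the Pfaffians `pf(U^ss_{RR})` over all nonempty
even-size `R ⊆ [n]` such that `R ⊆ [i]` and `|R ∩ [j]| > r_z(i,j)` for some `i ≥ j`. -/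
noncomputable def IssIdeal (K : Type*) [Field K] (n : ℕ) (z : Equiv.Perm ℕ) :
    Ideal (MvPolynomial (SSVar n) K) :=
  Ideal.span {f : MvPolynomial (SSVar n) K | ∃ R : Finset (Fin n),
    R.Nonempty ∧ Even R.card ∧
    (∃ i j : ℕ, 1 ≤ j ∧ j ≤ i ∧ i ≤ n ∧ (∀ a ∈ R, (a : ℕ) + 1 ≤ i) ∧
      rnk z i j < (R.filter fun a : Fin n => (a : ℕ) + 1 ≤ j).card) ∧
    f = pfUss K R}

/-- The square-free monomial `u^ss_{AB}`: zero if `A ⊙ B` meets the diagonal, and otherwise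
the product of the variables `u_{ij}` over the pairs `i > j` with `(i,j)` or `(j,i)` in
`A ⊙ B = {(a_0, b_r), (a_1, b_{r-1}), ..., (a_r, b_0)}`. -/
noncomputable def ussMon (K : Type*) [CommRing K] {n : ℕ} (A B : Finset (Fin n)) :
    MvPolynomial (SSVar n) K :=
  if h : A.card = B.card then
    if ∃ t : Fin A.card, (A.orderEmbOfFin rfl t : Fin n) = B.orderEmbOfFin h.symm t.rev then 0
    else
      ∏ v ∈ Finset.univ.filter (fun v : SSVar n => ∃ t : Fin A.card,
          (A.orderEmbOfFin rfl t = v.1.1 ∧ B.orderEmbOfFin h.symm t.rev = v.1.2) ∨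
          (A.orderEmbOfFin rfl t = v.1.2 ∧ B.orderEmbOfFin h.symm t.rev = v.1.1)),
        MvPolynomial.X v
  else 0

/-- The monomial ideal `J^ss_r` of a symmetric rank table `r`, generated by the monomials
`u^ss_{AB}` with `A ⊆ [i]`, `B ⊆ [j]`, `|A| = |B| = r(i,j) + 1` for some `n ≥ i ≥ j ≥ 1`. -/
noncomputable def JssIdealOfTable (K : Type*) [CommRing K] (n : ℕ) (r : ℕ → ℕ → ℕ) :
    Ideal (MvPolynomial (SSVar n) K) :=
  Ideal.span {g : MvPolynomial (SSVar n) K | ∃ (i j : ℕ) (A B : Finset (Fin n)),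
    1 ≤ j ∧ j ≤ i ∧ i ≤ n ∧
    (∀ a ∈ A, (a : ℕ) + 1 ≤ i) ∧ (∀ b ∈ B, (b : ℕ) + 1 ≤ j) ∧
    A.card = r i j + 1 ∧ B.card = r i j + 1 ∧ g = ussMon K A B}

/-- `J^ss_z = J^ss_{r_z}`. -/
noncomputable def JssIdeal (K : Type*) [CommRing K] (n : ℕ) (z : Equiv.Perm ℕ) :
    Ideal (MvPolynomial (SSVar n) K) :=
  JssIdealOfTable K n (rnk z)

/-- Total degree of a monomial (exponent vector). -/
def totalDeg {σ : Type*} (m : σ →₀ ℕ) : ℕ := m.sum fun _ e => e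

/-- The lexicographic order on the variables `u_{ij}` by the pair `(i, j)`. -/
def varLT {n : ℕ} (v w : SSVar n) : Prop :=
  v.1.1 < w.1.1 ∨ (v.1.1 = w.1.1 ∧ v.1.2 < w.1.2)

/-- The (graded) reverse lexicographic term order on monomials of `R_n`:
`m₁ < m₂` iff `deg m₁ < deg m₂`, or the degrees agree and the lexicographically largest
variable with different exponents has strictly larger exponent in `m₁`. -/
def revlexLT {n : ℕ} (m₁ m₂ : SSVar n →₀ ℕ) : Prop :=
  totalDeg m₁ < totalDeg m₂ ∨
    (totalDeg m₁ = totalDeg m₂ ∧ ∃ v, m₂ v < m₁ v ∧ ∀ w, varLT v w → m₁ w = m₂ w)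

/-- The initial ideal of `I` with respect to a strict term order `lt`: the ideal
generated by the leading monomials `init(f)` of the nonzero `f ∈ I`. -/
noncomputable def initIdeal {K : Type*} [CommRing K] {σ : Type*}
    (lt : (σ →₀ ℕ) → (σ →₀ ℕ) → Prop) (I : Ideal (MvPolynomial σ K)) :
    Ideal (MvPolynomial σ K) :=
  Ideal.span {g : MvPolynomial σ K | ∃ f ∈ I, f ≠ 0 ∧ ∃ m : σ →₀ ℕ, m ∈ f.support ∧
    (∀ m' ∈ f.support, m' ≠ m → lt m' m) ∧ g = MvPolynomial.monomial m (1 : K)}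

/-- A term order on the monomials of a polynomial ring: a linear order in which `1` is
the unique minimum and multiplication by a fixed monomial preserves order. -/
structure TermOrder (σ : Type*) where
  le : (σ →₀ ℕ) → (σ →₀ ℕ) → Prop
  trans : ∀ a b c, le a b → le b c → le a c
  antisymm : ∀ a b, le a b → le b a → a = b
  total : ∀ a b, le a b ∨ le b a
  zero_le : ∀ a, le 0 a
  add_le_add_right : ∀ a b c, le a b → le (a + c) (b + c)

/-- The initial ideal of `I` with respect to a term order `τ`. -/
noncomputable def initIdealLe {K : Type*} [CommRing K] {σ : Type*}
    (τ : TermOrder σ) (I : Ideal (MvPolynomial σ K)) : Ideal (MvPolynomial σ K) :=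
  Ideal.span {g : MvPolynomial σ K | ∃ f ∈ I, f ≠ 0 ∧ ∃ m : σ →₀ ℕ, m ∈ f.support ∧
    (∀ m' ∈ f.support, τ.le m' m) ∧ g = MvPolynomial.monomial m (1 : K)}

/-- An ideal is homogeneous (w.r.t. total degree) iff it contains all homogeneous
components of its elements. -/
def IsHomogIdeal {K : Type*} [CommSemiring K] {σ : Type*}
    (I : Ideal (MvPolynomial σ K)) : Prop :=
  ∀ f ∈ I, ∀ d : ℕ, MvPolynomial.homogeneousComponent d f ∈ I

/-- The reading order on boxes: rows top to bottom, each row right to left. -/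
def pdRel (p q : ℕ × ℕ) : Prop := p.1 < q.1 ∨ (p.1 = q.1 ∧ q.2 ≤ p.2)

instance : DecidableRel pdRel := fun p q => by unfold pdRel; infer_instance

instance : IsTrans (ℕ × ℕ) pdRel :=
  ⟨fun a b c hab hbc => by unfold pdRel at *; omega⟩

instance : IsAntisymm (ℕ × ℕ) pdRel :=
  ⟨fun a b hab hba => by
    unfold pdRel at hab hba
    exact Prod.ext_iff.mpr ⟨by omega, by omega⟩⟩

instance : IsTotal (ℕ × ℕ) pdRel :=
  ⟨fun a b => by unfold pdRel; omega⟩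

/-- The pipe dream reading word of a finite set `D` of boxes: the letters `i + j - 1`
over `(i, j) ∈ D`, in the order making `(i, -j)` increase lexicographically. -/
def pdWord (D : Finset (ℕ × ℕ)) : List ℕ :=
  (D.sort pdRel).map fun p => p.1 + p.2 - 1

/-- The product `s_{i_1} s_{i_2} ⋯ s_{i_l}` of simple transpositions. -/
def wordProd (l : List ℕ) : Equiv.Perm ℕ :=
  (l.map fun i => Equiv.swap i (i + 1)).prod

/-- `l` is a reduced word for `w`: a minimal-length word of positive letters whose
product of simple transpositions is `w`. -/
def IsReducedWordOf (w : Equiv.Perm ℕ) (l : List ℕ) : Prop :=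
  (∀ a ∈ l, 1 ≤ a) ∧ wordProd l = w ∧
    ∀ l' : List ℕ, (∀ a ∈ l', 1 ≤ a) → wordProd l' = w → l.length ≤ l'.length

/-- The set `RP(w)` of reduced pipe dreams for `w`. -/
def RP (w : Equiv.Perm ℕ) : Set (Finset (ℕ × ℕ)) :=
  {D | (∀ p ∈ D, 1 ≤ p.1 ∧ 1 ≤ p.2) ∧ IsReducedWordOf w (pdWord D)}

/-- `I^FPF_m`: involutions in `S_∞` that are fixed-point-free on `[m]` and fix
all `i > m`. -/
def IFPFm (m : ℕ) : Set (Equiv.Perm ℕ) :=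
  {y | y 0 = 0 ∧ y * y = 1 ∧ (∀ i, 1 ≤ i → i ≤ m → y i ≠ i) ∧ ∀ i, m < i → y i = i}

/-- `z = FPF_m(y)`: `z` agrees with `y` on `[m]` and swaps `m + 2k - 1, m + 2k`
for all `k ≥ 1`. -/
def IsFPFStdOf (m : ℕ) (y z : Equiv.Perm ℕ) : Prop :=
  (∀ i, i ≤ m → z i = y i) ∧
    ∀ k : ℕ, z (m + 2 * k + 1) = m + 2 * k + 2 ∧ z (m + 2 * k + 2) = m + 2 * k + 1

/-- The set `FP(z)` of fpf-involution pipe dreams for `z ∈ I^FPF_∞`. -/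
def FP (z : Equiv.Perm ℕ) : Set (Finset (ℕ × ℕ)) :=
  {E | ∃ (m : ℕ) (y : Equiv.Perm ℕ) (D : Finset (ℕ × ℕ)), Even m ∧ y ∈ IFPFm m ∧
    IsFPFStdOf m y z ∧ D ∈ RP y ∧ D.image Prod.swap = D ∧
    E = D.filter fun p => p.2 < p.1}

/-- The minor `det(U_{AB})` of the generic `m × n` matrix `U`, with rows `A` and
columns `B` listed in increasing order. -/
noncomputable def genMinor (K : Type*) [CommRing K] {m n : ℕ}
    (A : Finset (Fin m)) (B : Finset (Fin n)) (h : A.card = B.card) :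
    MvPolynomial (Fin m × Fin n) K :=
  (Matrix.of fun s t : Fin A.card =>
    (MvPolynomial.X (A.orderEmbOfFin rfl s, B.orderEmbOfFin h.symm t) :
      MvPolynomial (Fin m × Fin n) K)).det

/-- The antidiagonal monomial `u_{AB} = ∏_{(a,b) ∈ A ⊙ B} u_{ab}`. -/
noncomputable def genMon (K : Type*) [CommRing K] {m n : ℕ}
    (A : Finset (Fin m)) (B : Finset (Fin n)) (h : A.card = B.card) :
    MvPolynomial (Fin m × Fin n) K :=
  ∏ t : Fin A.card, MvPolynomial.X (A.orderEmbOfFin rfl t, B.orderEmbOfFin h.symm t.rev)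

/-- The exponent vector of the antidiagonal monomial `u_{AB}`. -/
noncomputable def antidiagExp {m n : ℕ} (A : Finset (Fin m)) (B : Finset (Fin n))
    (h : A.card = B.card) : (Fin m × Fin n) →₀ ℕ :=
  ∑ t : Fin A.card, Finsupp.single (A.orderEmbOfFin rfl t, B.orderEmbOfFin h.symm t.rev) 1

/-- The ideal `I_w`, generated by the minors `det(U_{AB})` with `A ⊆ [i]`, `B ⊆ [j]`,
`|A| = |B| = r_w(i,j) + 1` for some `(i,j) ∈ [m] × [n]`. -/
noncomputable def IwIdeal (K : Type*) [Field K] (m n : ℕ) (w : Equiv.Perm ℕ) :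
    Ideal (MvPolynomial (Fin m × Fin n) K) :=
  Ideal.span {g : MvPolynomial (Fin m × Fin n) K |
    ∃ (i j : ℕ) (A : Finset (Fin m)) (B : Finset (Fin n)) (h : A.card = B.card),
      1 ≤ i ∧ i ≤ m ∧ 1 ≤ j ∧ j ≤ n ∧ (∀ a ∈ A, (a : ℕ) + 1 ≤ i) ∧
      (∀ b ∈ B, (b : ℕ) + 1 ≤ j) ∧ A.card = rnk w i j + 1 ∧ g = genMinor K A B h}

/-- The monomial ideal `J_w`, generated by the monomials `u_{AB}` with `A ⊆ [i]`,
`B ⊆ [j]`, `|A| = |B| = r_w(i,j) + 1` for some `(i,j) ∈ [m] × [n]`. -/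
noncomputable def JwIdeal (K : Type*) [Field K] (m n : ℕ) (w : Equiv.Perm ℕ) :
    Ideal (MvPolynomial (Fin m × Fin n) K) :=
  Ideal.span {g : MvPolynomial (Fin m × Fin n) K |
    ∃ (i j : ℕ) (A : Finset (Fin m)) (B : Finset (Fin n)) (h : A.card = B.card),
      1 ≤ i ∧ i ≤ m ∧ 1 ≤ j ∧ j ≤ n ∧ (∀ a ∈ A, (a : ℕ) + 1 ≤ i) ∧
      (∀ b ∈ B, (b : ℕ) + 1 ≤ j) ∧ A.card = rnk w i j + 1 ∧ g = genMon K A B h}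

/-- The matrix Schubert variety
`X_w = {A ∈ Mat_{m×n} : rank A_{[i][j]} ≤ r_w(i,j) for all (i,j) ∈ [m] × [n]}`. -/
noncomputable def Xw (K : Type*) [Field K] (m n : ℕ) (w : Equiv.Perm ℕ) :
    Set (Matrix (Fin m) (Fin n) K) :=
  {A | ∀ (i j : ℕ) (hi : i ≤ m) (hj : j ≤ n), 1 ≤ i → 1 ≤ j →
    (A.submatrix (Fin.castLE hi) (Fin.castLE hj)).rank ≤ rnk w i j}

/-- `I(X_w)`: the ideal of polynomials vanishing on `X_w`. -/
noncomputable def IXw (K : Type*) [Field K] (m n : ℕ) (w : Equiv.Perm ℕ) :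
    Ideal (MvPolynomial (Fin m × Fin n) K) :=
  vanishingIdeal (Xw K m n w) fun A v => A v.1 v.2

/-- The variable `u_{pq}` (with `1 ≤ q < p ≤ n`) of `R_n`. -/
def ssvar {n : ℕ} (p q : ℕ) (hp : p ≤ n) (hq : 1 ≤ q) (hqp : q < p) : SSVar n :=
  ⟨(⟨p - 1, by omega⟩, ⟨q - 1, by omega⟩), Fin.mk_lt_mk.mpr (by omega)⟩

/-- Index set for the variables `u_{ij}`, `i > j ≥ 1`, over all positive integers. -/
abbrev PVar : Type := {p : ℕ × ℕ // 1 ≤ p.2 ∧ p.2 < p.1}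

/-- The generic skew-symmetric array `U^ss` over the positive integers:
`u_{xy}` if `x > y`, `-u_{yx}` if `x < y`, `0` if `x = y`. -/
noncomputable def UssP (K : Type*) [CommRing K] (x y : ℕ) : MvPolynomial PVar K :=
  if h : 1 ≤ y ∧ y < x then MvPolynomial.X ⟨(x, y), h⟩
  else if h' : 1 ≤ x ∧ x < y then -MvPolynomial.X ⟨(y, x), h'⟩
  else 0

/-- `pf(U^ss_{RR})` for a finite set `R` of positive integers. -/
noncomputable def pfUssP (K : Type*) [CommRing K] (R : Finset ℕ) : MvPolynomial PVar K :=
  Pfaffian (Matrix.of fun s t : Fin R.card =>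
    UssP K (R.orderEmbOfFin rfl s) (R.orderEmbOfFin rfl t))

/-- `g_{AB}`: the Pfaffian of the `(|B|+|A|) × (|B|+|A|)` skew-symmetric matrix whose
rows and columns are labeled by `B` (increasing) followed by `A` (increasing), with
entry `U^ss_{xy}` at a position labeled `(x, y)`, except that the entry is `0` when
both labels come from the `A`-block. -/
noncomputable def gAB (K : Type*) [CommRing K] (A B : Finset ℕ) : MvPolynomial PVar K :=
  Pfaffian ((Matrix.of fun p q : Fin B.card ⊕ Fin A.card =>
      match p, q with
      | Sum.inl s, Sum.inl t => UssP K (B.orderEmbOfFin rfl s) (B.orderEmbOfFin rfl t)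
      | Sum.inl s, Sum.inr t => UssP K (B.orderEmbOfFin rfl s) (A.orderEmbOfFin rfl t)
      | Sum.inr s, Sum.inl t => UssP K (A.orderEmbOfFin rfl s) (B.orderEmbOfFin rfl t)
      | Sum.inr _, Sum.inr _ => (0 : MvPolynomial PVar K)).submatrix
    finSumFinEquiv.symm finSumFinEquiv.symm)

/-- The exponent of the sign `⟨T, S⟩ = (-1)^{|S||T| + C(|S|,2) + ∑ of the (1-indexed)
positions in the increasing enumeration of `T` occupied by elements of `S`}`. -/
def setSgnExp (T S : Finset ℕ) : ℕ :=
  S.card * T.card + Nat.choose S.card 2 +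
    ∑ t : Fin T.card, if T.orderEmbOfFin rfl t ∈ S then (t : ℕ) + 1 else 0

/-!
Let `J` be the signed permutation matrix of a fixed-point-free involution `w`. For triangular `β`
the matrix `β J βᵀ` satisfies the rank conditions of `w`, so the ideal of the rank locus of `w` is
contained in the kernel of `u ↦ β J βᵀ` for generic `β`, which is prime. The Pfaffian ideal is
contained in the ideal of the rank locus, so it suffices to show that it contains this kernel.

Call a monomial standard if the antidiagonals in its support have at most as many cells as the
rank table of `w` allows. In a suitable lexicographic order, every longer antidiagonal contains the
support of the leading monomial of a combination of Pfaffians, so modulo the Pfaffian ideal every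
polynomial is a combination of standard monomials. It remains to see that no nonzero such
combination `f` lies in the kernel.

This is an induction along the transition `w ↦ w'` of the first cycle `(q, w q)` of `w` through a
second cycle. A one-parameter degeneration of `β` shows that the kernel of `w` is contained in that
of `w'`, and the variable `u` at `(w q, q)` lies in the kernel of `w'` but not in that of `w`. Write
`f = u f' + g` with `u` not occurring in `g`. Then `g` lies in the kernel of every `w'`, while the
leading monomial of a nonzero `g` is still standard for one of them; hence `g = 0`. As the kernel of
`w` is prime, it contains `f'`, which has lower degree.
-/

open MvPolynomial

/-! ### Pfaffians -/

/-- Fixed-point-free involutions of a type, encoded as plain self-maps. -/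
structure IsFPFInvolution {α : Type*} (w : α → α) : Prop where
  involutive : Function.Involutive w
  apply_ne : ∀ a, w a ≠ a

namespace IsFPFInvolution

variable {α : Type*} {w : α → α}

theorem apply_eq_iff (hw : IsFPFInvolution w) {a b : α} : w a = b ↔ a = w b :=
  hw.involutive.eq_iff

theorem conj {s : α → α} (hw : IsFPFInvolution w) (hs : Function.Involutive s) :
    IsFPFInvolution (s ∘ w ∘ s) where
  involutive i := by simp only [Function.comp_apply, hs (w _), hw.involutive (s i), hs i]
  apply_ne i h := hw.apply_ne (s i) (hs.eq_iff.1 h)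

end IsFPFInvolution

theorem swap_involutive {α : Type*} [DecidableEq α] (a b : α) :
    Function.Involutive (Equiv.swap a b) := fun x => by simp

section Signs

variable {N : ℕ} {z : Equiv.Perm (Fin N)} {k k' : Fin N}

/-- The perfect matchings of `Fin N`, each encoded as the fixed-point-free involution exchanging
the two ends of every edge. -/
def matchings (N : ℕ) : Finset (Equiv.Perm (Fin N)) :=
  Finset.univ.filter fun z => (∀ i, z i ≠ i) ∧ ∀ i, z (z i) = i

theorem mem_matchings : z ∈ matchings N ↔ IsFPFInvolution z := by
  simp only [matchings, Finset.mem_filter_univ]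
  exact ⟨fun h => ⟨h.2, h.1⟩, fun h => ⟨h.apply_ne, h.involutive⟩⟩

theorem swap_lt_swap_iff (hk : (k' : ℕ) = k + 1) (x y : Fin N) :
    Equiv.swap k k' x < Equiv.swap k k' y ↔
      (x < y ∧ ¬ (x = k ∧ y = k')) ∨ (x = k' ∧ y = k) := by
  simp only [Equiv.swap_apply_def, Fin.lt_def, Fin.ext_iff]
  split_ifs <;> omega

/-- The pairs counted by `ellFpfFin z`, each listed in both orders so that the condition on a pair
is symmetric and survives a relabelling of `Fin N`. -/
def fpfInversions (z : Equiv.Perm (Fin N)) : Finset (Fin N × Fin N) :=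
  Finset.univ.filter fun p => p.1 ≠ p.2 ∧ p.2 < z p.1 ∧ p.1 < z p.2

theorem mem_fpfInversions {a b : Fin N} :
    (a, b) ∈ fpfInversions z ↔ a ≠ b ∧ b < z a ∧ a < z b := by
  simp [fpfInversions]

theorem card_fpfInversions (z : Equiv.Perm (Fin N)) :
    (fpfInversions z).card = 2 * ellFpfFin z := by
  set D := Finset.univ.filter fun p : Fin N × Fin N => p.2 < p.1 ∧ p.2 < z p.1 ∧ p.1 < z p.2
    with hD
  have hunion : fpfInversions z = D ∪ D.map (Equiv.prodComm _ _).toEmbedding := by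
    ext ⟨a, b⟩
    simp only [mem_fpfInversions, hD, Finset.mem_filter_univ, Finset.mem_union,
      Finset.mem_map_equiv, Equiv.prodComm_symm, Equiv.prodComm_apply, Prod.swap_prod_mk,
      ne_iff_lt_or_gt]
    tauto
  have hdisj : Disjoint D (D.map (Equiv.prodComm _ _).toEmbedding) := by
    rw [Finset.disjoint_left]
    rintro ⟨a, b⟩
    simp only [hD, Finset.mem_filter_univ, Finset.mem_map_equiv, Equiv.prodComm_symm,
      Equiv.prodComm_apply, Prod.swap_prod_mk]
    exact fun h h' => lt_asymm h.1 h'.1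
  rw [hunion, Finset.card_union_of_disjoint hdisj, Finset.card_map, ← two_mul]
  rfl

theorem fpfInversions_eq_insert_insert (hz : IsFPFInvolution z) (hk : (k' : ℕ) = k + 1)
    (hlt : z k' < z k) (hne : z k ≠ k') :
    fpfInversions z = insert (k, z k') (insert (z k', k)
      ((fpfInversions (Equiv.swap k k' * z * Equiv.swap k k')).map
        ((Equiv.swap k k').prodCongr (Equiv.swap k k')).toEmbedding)) := by
  have hkk' : k < k' := Fin.lt_def.2 (by omega)
  have hcov : ∀ x, k < x → x ≠ k' → k' < x := fun x h h' => by
    rw [Fin.lt_def] at *; rw [Ne, Fin.ext_iff] at h'; omega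
  have hk'k : z k' ≠ k := fun h => hne (by rw [← h, hz.involutive])
  ext ⟨a, b⟩
  simp only [Finset.mem_insert, Finset.mem_map_equiv, Equiv.prodCongr_symm, Equiv.symm_swap,
    Equiv.prodCongr_apply, Prod.map_apply, mem_fpfInversions, Equiv.Perm.coe_mul,
    Function.comp_apply, Equiv.swap_apply_self, swap_lt_swap_iff hk, ne_eq, Prod.mk.injEq,
    EmbeddingLike.apply_eq_iff_eq, hz.apply_eq_iff]
  have ha := hz.apply_ne a
  have hb := hz.apply_ne b
  have hzk := hz.apply_ne k
  have hzk' := hz.apply_ne k'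
  have hinv := hz.involutive k
  have hinv' := hz.involutive k'
  by_cases ha' : a = z k'
  · subst ha'
    rw [hinv'] at *
    grind
  · by_cases hb' : b = z k'
    · subst hb'
      rw [hinv'] at *
      grind
    · grind

theorem ellFpfFin_eq_succ_of_gt (hz : IsFPFInvolution z) (hk : (k' : ℕ) = k + 1)
    (hlt : z k' < z k) (hne : z k ≠ k') :
    ellFpfFin z = ellFpfFin (Equiv.swap k k' * z * Equiv.swap k k') + 1 := by
  have hk'k : z k' ≠ k := fun h => hne (by rw [← h, hz.involutive])
  have hcard := congrArg Finset.card (fpfInversions_eq_insert_insert hz hk hlt hne)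
  rw [Finset.card_insert_of_notMem, Finset.card_insert_of_notMem, Finset.card_map,
    card_fpfInversions, card_fpfInversions] at hcard
  · omega
  all_goals
    simp only [Finset.mem_insert, Finset.mem_map_equiv, Equiv.prodCongr_symm, Equiv.symm_swap,
      Equiv.prodCongr_apply, Prod.map_apply, mem_fpfInversions, Equiv.Perm.coe_mul,
      Function.comp_apply, Equiv.swap_apply_self, swap_lt_swap_iff hk, hz.involutive k']
    grind

theorem neg_one_pow_ellFpfFin_conj_swap (R : Type*) [Ring R] (hz : IsFPFInvolution z)
    (hk : (k' : ℕ) = k + 1) (hne : z k ≠ k') :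
    (-1 : R) ^ ellFpfFin (Equiv.swap k k' * z * Equiv.swap k k') = -(-1) ^ ellFpfFin z := by
  have hkk : k ≠ k' := fun h => by rw [h] at hk; omega
  rcases lt_or_gt_of_ne (z.injective.ne hkk.symm) with h | h
  · rw [ellFpfFin_eq_succ_of_gt hz hk h hne, pow_succ, mul_neg_one, neg_neg]
  · have hne' : z k' ≠ k := fun h => hne (by rw [← h, hz.involutive])
    have hconj : Equiv.swap k k' * (Equiv.swap k k' * z * Equiv.swap k k') * Equiv.swap k k' = z :=
      by ext x; simp
    rw [ellFpfFin_eq_succ_of_gt (hz.conj (swap_involutive k k')) hk _ _, hconj, pow_succ,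
      mul_neg_one]
    · simpa [Equiv.swap_apply_of_ne_of_ne, hne, hne', hz.apply_ne] using h
    · simp [Equiv.swap_apply_of_ne_of_ne, hne', hz.apply_ne]

theorem swap_mul_mul_swap_eq_self (hz : IsFPFInvolution z) (h : z k = k') :
    Equiv.swap k k' * z * Equiv.swap k k' = z := by
  have h' : z k' = k := by rw [← h, hz.involutive]
  rw [mul_assoc, Equiv.mul_swap_eq_swap_mul, h, h', Equiv.swap_comm k' k]
  ext
  simp

end Signs

section AlternatingMatrices

variable {R : Type*} [CommRing R] {M N : ℕ} {A : Matrix (Fin N) (Fin N) R}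

theorem mem_matSS_iff :
    A ∈ MatSS R N ↔ (∀ i j, A i j = -A j i) ∧ ∀ i, A i i = 0 :=
  and_congr_left' ⟨fun h i j => congrFun₂ h j i, fun h => Matrix.ext fun i j => h j i⟩

theorem apply_eq_neg_of_mem_matSS (hA : A ∈ MatSS R N) (i j : Fin N) : A i j = -A j i :=
  (mem_matSS_iff.1 hA).1 i j

theorem submatrix_mem_matSS (hA : A ∈ MatSS R N) (f : Fin M → Fin N) :
    A.submatrix f f ∈ MatSS R M :=
  mem_matSS_iff.2 ⟨fun _ _ => apply_eq_neg_of_mem_matSS hA _ _, fun _ => hA.2 _⟩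

end AlternatingMatrices

section PfaffianSymmetry

variable {R : Type*} [CommRing R] {N : ℕ} {A : Matrix (Fin N) (Fin N) R}
  {z : Equiv.Perm (Fin N)} {k k' : Fin N}

/-- The signed term of a perfect matching `z` in the Pfaffian of `A`. -/
def pfaffianTerm (A : Matrix (Fin N) (Fin N) R) (z : Equiv.Perm (Fin N)) : R :=
  (-1) ^ ellFpfFin z * ∏ i ∈ Finset.univ.filter (fun i => z i < i), A (z i) i

theorem pfaffian_eq_sum (A : Matrix (Fin N) (Fin N) R) :
    Pfaffian A = ∑ z ∈ matchings N, pfaffianTerm A z := rfl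

theorem pfaffianTerm_conj_swap (hz : IsFPFInvolution z) (hk : (k' : ℕ) = k + 1) (hne : z k ≠ k') :
    pfaffianTerm A (Equiv.swap k k' * z * Equiv.swap k k') =
      -pfaffianTerm (A.submatrix (Equiv.swap k k') (Equiv.swap k k')) z := by
  have hswap : ∀ x, Equiv.swap k k' x < Equiv.swap k k' (z x) ↔ x < z x := fun x => by
    have := hz.involutive x
    rw [swap_lt_swap_iff hk]
    grind
  rw [pfaffianTerm, pfaffianTerm, neg_one_pow_ellFpfFin_conj_swap R hz hk hne, neg_mul]
  congr 2
  refine Finset.prod_equiv (Equiv.swap k k') (fun i => ?_) fun i _ => ?_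
  · have hi := hswap (z (Equiv.swap k k' i))
    rw [hz.involutive, Equiv.swap_apply_self] at hi
    rw [Finset.mem_filter_univ, Finset.mem_filter_univ]
    exact hi
  · simp only [Matrix.submatrix_apply, Equiv.Perm.mul_apply, Equiv.swap_apply_self]

theorem pfaffianTerm_submatrix_swap (hA : A ∈ MatSS R N) (hz : IsFPFInvolution z)
    (hk : (k' : ℕ) = k + 1) (hzk : z k = k') :
    pfaffianTerm (A.submatrix (Equiv.swap k k') (Equiv.swap k k')) z = -pfaffianTerm A z := by
  have hzk' : z k' = k := by rw [← hzk, hz.involutive]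
  have hmem : k' ∈ Finset.univ.filter (fun i => z i < i) := by
    rw [Finset.mem_filter_univ, hzk', Fin.lt_def]
    omega
  rw [pfaffianTerm, pfaffianTerm, ← mul_neg, ← Finset.mul_prod_erase _ _ hmem,
    ← Finset.mul_prod_erase _ _ hmem, ← neg_mul, hzk']
  congr 2
  · simpa using apply_eq_neg_of_mem_matSS hA k' k
  · refine Finset.prod_congr rfl fun i hi => ?_
    simp only [Finset.mem_erase, Finset.mem_filter_univ] at hi
    have hik : i ≠ k := fun h => by rw [h, hzk, Fin.lt_def] at hi; omega
    have hzi : z i ≠ k := fun h => hi.1 (by rw [← hzk, ← h, hz.involutive])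
    have hzi' : z i ≠ k' := fun h => hik (by rw [← hzk', ← h, hz.involutive])
    simp [Equiv.swap_apply_of_ne_of_ne, hik, hi.1, hzi, hzi']

theorem pfaffian_submatrix_swap (hA : A ∈ MatSS R N) (hk : (k' : ℕ) = k + 1) :
    Pfaffian (A.submatrix (Equiv.swap k k') (Equiv.swap k k')) = -Pfaffian A := by
  have hinv : Function.Involutive fun z : Equiv.Perm (Fin N) =>
      Equiv.swap k k' * z * Equiv.swap k k' := fun z => by ext; simp
  rw [pfaffian_eq_sum, pfaffian_eq_sum, ← Finset.sum_neg_distrib]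
  refine Finset.sum_equiv hinv.toPerm (fun z => ?_) fun z hz => ?_
  · rw [mem_matchings, mem_matchings]
    refine ⟨fun hz => hz.conj (swap_involutive k k'), fun hz => ?_⟩
    rw [← hinv z]
    exact hz.conj (swap_involutive k k')
  · rw [mem_matchings] at hz
    by_cases h : z k = k'
    · rw [pfaffianTerm_submatrix_swap hA hz hk h, Function.Involutive.coe_toPerm,
        swap_mul_mul_swap_eq_self hz h]
    · rw [Function.Involutive.coe_toPerm, pfaffianTerm_conj_swap hz hk h, neg_neg]

theorem pfaffian_submatrix_perm (hA : A ∈ MatSS R N) (σ : Equiv.Perm (Fin N)) :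
    Pfaffian (A.submatrix σ σ) = (Equiv.Perm.sign σ : ℤ) * Pfaffian A := by
  cases N with
  | zero => simp [Subsingleton.elim σ 1]
  | succ N =>
    have hσ : σ ∈ Submonoid.closure (Set.range fun i : Fin N => Equiv.swap i.castSucc i.succ) := by
      rw [Equiv.Perm.mclosure_swap_castSucc_succ]
      trivial
    induction hσ using Submonoid.closure_induction generalizing A with
    | mem x hx =>
      obtain ⟨i, rfl⟩ := hx
      rw [pfaffian_submatrix_swap hA (by simp), Equiv.Perm.sign_swap (by simp [Fin.ext_iff])]
      simp
    | one => simp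
    | mul x y _ _ ihx ihy =>
      have hcomp : A.submatrix (x * y : Equiv.Perm _) (x * y : Equiv.Perm _) =
        (A.submatrix x x).submatrix y y := rfl
      rw [hcomp, ihy (submatrix_mem_matSS hA x), ihx hA, Equiv.Perm.sign_mul]
      push_cast
      ring

theorem pfaffian_mem_of_submatrix_perm_mem (hA : A ∈ MatSS R N) {I : Ideal R}
    (σ : Equiv.Perm (Fin N)) (h : Pfaffian (A.submatrix σ σ) ∈ I) : Pfaffian A ∈ I := by
  rw [pfaffian_submatrix_perm hA] at h
  rcases Int.units_eq_one_or (Equiv.Perm.sign σ) with hσ | hσ <;> simpa [hσ] using h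

theorem exists_perm_apply_eq_and_apply_eq {α : Type*} {a b c d : α} (hab : a ≠ b) (hcd : c ≠ d) :
    ∃ σ : Equiv.Perm α, σ a = c ∧ σ b = d :=
  MulAction.is_two_pretransitive_iff.1 (Equiv.Perm.isMultiplyPretransitive α 2) hab hcd

end PfaffianSymmetry

section RepeatedRows

variable {R : Type*} [CommRing R] {N : ℕ} {A : Matrix (Fin N) (Fin N) R} {k k' : Fin N}

theorem pfaffianTerm_eq_zero_of_apply_eq_zero {z : Equiv.Perm (Fin N)} {i : Fin N} (hi : z i < i)
    (h : A (z i) i = 0) : pfaffianTerm A z = 0 := by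
  have hprod : ∏ i ∈ Finset.univ.filter (fun i => z i < i), A (z i) i = 0 :=
    Finset.prod_eq_zero ((Finset.mem_filter_univ i).2 hi) h
  rw [pfaffianTerm, hprod, mul_zero]

-- Skew-symmetry under the swap would only give `2 * Pfaffian A = 0`.
theorem pfaffian_eq_zero_of_adjacent_rows_eq (hA : A ∈ MatSS R N) (hk : (k' : ℕ) = k + 1)
    (h : A k = A k') : Pfaffian A = 0 := by
  have hcol : ∀ j, A j k = A j k' := fun j => by
    rw [apply_eq_neg_of_mem_matSS hA, h, ← apply_eq_neg_of_mem_matSS hA]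
  have hswap : A.submatrix (Equiv.swap k k') (Equiv.swap k k') = A := by
    ext i j
    simp only [Matrix.submatrix_apply, Equiv.swap_apply_def]
    split_ifs <;> simp_all
  have hedge : ∀ z : Equiv.Perm (Fin N), IsFPFInvolution z → z k = k' → pfaffianTerm A z = 0 := by
    intro z hz hzk
    have hzk' : z k' = k := by rw [← hzk, hz.involutive]
    refine pfaffianTerm_eq_zero_of_apply_eq_zero (i := k') ?_ ?_
    · rw [hzk', Fin.lt_def]
      omega
    · rw [hzk', ← hcol, hA.2]
  rw [pfaffian_eq_sum]
  refine Finset.sum_involution (fun z _ => Equiv.swap k k' * z * Equiv.swap k k')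
    (fun z hz => ?_) (fun z hz hne heq => ?_) (fun z hz => ?_) fun z _ => by ext; simp
  · rw [mem_matchings] at hz
    by_cases hzk : z k = k'
    · rw [swap_mul_mul_swap_eq_self hz hzk, hedge z hz hzk, add_zero]
    · rw [pfaffianTerm_conj_swap hz hk hzk, hswap, add_neg_cancel]
  · rw [mem_matchings] at hz
    have hzk : z k ≠ k' := fun hzk => hne (hedge z hz hzk)
    have hzk' : z k' ≠ k := fun h => hzk (by rw [← h, hz.involutive])
    have heqk : z k' = z k := by
      simpa [Equiv.swap_apply_of_ne_of_ne hzk' (hz.apply_ne k')] using DFunLike.congr_fun heq k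
    have := congrArg Fin.val (z.injective heqk)
    omega
  · rw [mem_matchings] at hz ⊢
    exact hz.conj (swap_involutive k k')

theorem pfaffian_eq_zero_of_rows_eq (hA : A ∈ MatSS R N) {a b : Fin N} (hab : a ≠ b)
    (h : A a = A b) : Pfaffian A = 0 := by
  have hN : 1 < N := by simpa using Fintype.one_lt_card_iff.2 ⟨a, b, hab⟩
  obtain ⟨σ, ha, hb⟩ := exists_perm_apply_eq_and_apply_eq
    (a := (⟨0, by omega⟩ : Fin N)) (b := ⟨1, hN⟩) (by simp) hab
  refine (Submodule.mem_bot R).1 (pfaffian_mem_of_submatrix_perm_mem hA σ ?_)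
  refine pfaffian_eq_zero_of_adjacent_rows_eq (submatrix_mem_matSS hA σ) (k := ⟨0, by omega⟩)
    (k' := ⟨1, hN⟩) rfl ?_
  ext j
  simp [ha, hb, h]

end RepeatedRows

section Kernel

variable {R : Type*} [CommRing R] {N : ℕ} {A : Matrix (Fin N) (Fin N) R}

/-- The alternating matrix obtained from `A` by replacing row `k` by `c` and column `k` by `-c`. -/
def updateCross (A : Matrix (Fin N) (Fin N) R) (k : Fin N) (c : Fin N → R) :
    Matrix (Fin N) (Fin N) R :=
  Matrix.of fun i j => if i = k then if j = k then 0 else c j else if j = k then -c i else A i j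

theorem updateCross_mem_matSS (hA : A ∈ MatSS R N) (k : Fin N) (c : Fin N → R) :
    updateCross A k c ∈ MatSS R N := by
  refine mem_matSS_iff.2 ⟨fun i j => ?_, fun i => ?_⟩
  · simp only [updateCross, Matrix.of_apply]
    split_ifs <;> simp [apply_eq_neg_of_mem_matSS hA i j]
  · by_cases h : i = k <;> simp [updateCross, h, hA.2]

theorem updateCross_row_self (hA : A ∈ MatSS R N) (k : Fin N) : updateCross A k (A k) = A := by
  ext i j
  simp only [updateCross, Matrix.of_apply]
  split_ifs with hi hj hj
  · rw [hi, hj, hA.2]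
  · rw [hi]
  · rw [hj, ← apply_eq_neg_of_mem_matSS hA]
  · rfl

theorem pfaffian_updateCross_row_of_ne (hA : A ∈ MatSS R N) {k l : Fin N} (hl : l ≠ k) :
    Pfaffian (updateCross A k (A l)) = 0 := by
  refine pfaffian_eq_zero_of_rows_eq (updateCross_mem_matSS hA k _) hl ?_
  ext j
  by_cases h : j = k <;> simp [updateCross, h, hl, hA.2]

theorem exists_pfaffianTerm_updateCross_eq_mul (A : Matrix (Fin N) (Fin N) R) (k : Fin N)
    {z : Equiv.Perm (Fin N)} (hz : IsFPFInvolution z) :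
    ∃ d : R, ∀ c : Fin N → R, pfaffianTerm (updateCross A k c) z = c (z k) * d := by
  set e : Fin N := if z k < k then k else z k with he
  have hmem : e ∈ Finset.univ.filter (fun i => z i < i) := by
    rw [Finset.mem_filter_univ, he]
    split_ifs with h
    · exact h
    · rw [hz.involutive]
      exact lt_of_le_of_ne (not_lt.1 h) (hz.apply_ne k).symm
  have hother : ∀ i ∈ (Finset.univ.filter (fun i => z i < i)).erase e, z i ≠ k ∧ i ≠ k := by
    intro i hi
    simp only [Finset.mem_erase, Finset.mem_filter_univ] at hi
    have := hz.involutive i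
    grind
  refine ⟨(-1) ^ ellFpfFin z * ((if z k < k then -1 else 1) *
    ∏ i ∈ (Finset.univ.filter (fun i => z i < i)).erase e, A (z i) i), fun c => ?_⟩
  rw [pfaffianTerm, ← Finset.mul_prod_erase _ _ hmem]
  have hprod : ∀ i ∈ (Finset.univ.filter (fun i => z i < i)).erase e,
      updateCross A k c (z i) i = A (z i) i := fun i hi => by
    simp [updateCross, hother i hi]
  have hedge : updateCross A k c (z e) e = c (z k) * if z k < k then -1 else 1 := by
    by_cases h : z k < k <;> simp [he, h, updateCross, hz.apply_ne k, hz.involutive k]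
  rw [Finset.prod_congr rfl hprod, hedge]
  ring

theorem exists_pfaffian_updateCross_eq_sum (A : Matrix (Fin N) (Fin N) R) (k : Fin N) :
    ∃ d : Equiv.Perm (Fin N) → R, ∀ c : Fin N → R,
      Pfaffian (updateCross A k c) = ∑ z ∈ matchings N, c (z k) * d z := by
  choose! d hd using fun (z : Equiv.Perm (Fin N)) (hz : z ∈ matchings N) =>
    exists_pfaffianTerm_updateCross_eq_mul A k (mem_matchings.1 hz)
  exact ⟨d, fun c => Finset.sum_congr rfl fun z hz => hd z hz c⟩

open scoped Matrix in
theorem mul_pfaffian_eq_zero_of_vecMul_eq_zero (hA : A ∈ MatSS R N) {v : Fin N → R}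
    (hv : v ᵥ* A = 0) (k : Fin N) : v k * Pfaffian A = 0 := by
  obtain ⟨d, hd⟩ := exists_pfaffian_updateCross_eq_sum A k
  calc v k * Pfaffian A = ∑ l, v l * Pfaffian (updateCross A k (A l)) := by
        rw [Finset.sum_eq_single k, updateCross_row_self hA]
        · intro l _ hl
          rw [pfaffian_updateCross_row_of_ne hA hl, mul_zero]
        · simp
    _ = ∑ z ∈ matchings N, (v ᵥ* A) (z k) * d z := by
        simp_rw [hd, Finset.mul_sum, Matrix.vecMul, dotProduct, Finset.sum_mul, ← mul_assoc]
        rw [Finset.sum_comm]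
    _ = 0 := by simp [hv]

open scoped Matrix in
theorem pfaffian_eq_zero_of_vecMul_eq_zero [NoZeroDivisors R] (hA : A ∈ MatSS R N)
    {v : Fin N → R} (hv0 : v ≠ 0) (hv : v ᵥ* A = 0) : Pfaffian A = 0 := by
  obtain ⟨k, hk⟩ := Function.ne_iff.1 hv0
  exact (mul_eq_zero.1 (mul_pfaffian_eq_zero_of_vecMul_eq_zero hA hv k)).resolve_left hk

end Kernel

section AdjoinArc

variable {N : ℕ} {z : Equiv.Perm (Fin N)}

/-- The matching of `Fin (N + 2)` obtained from a matching `z` of `Fin N` by adding an arc joining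
the last two points. -/
def adjoinArc (z : Equiv.Perm (Fin N)) : Equiv.Perm (Fin (N + 2)) :=
  finSumFinEquiv.permCongr (Equiv.sumCongr z (Equiv.swap (0 : Fin 2) 1))

theorem adjoinArc_castAdd (z : Equiv.Perm (Fin N)) (i : Fin N) :
    adjoinArc z (Fin.castAdd 2 i) = Fin.castAdd 2 (z i) := by
  simp [adjoinArc, Equiv.permCongr_apply]

theorem adjoinArc_natAdd_zero (z : Equiv.Perm (Fin N)) :
    adjoinArc z (Fin.natAdd N 0) = Fin.natAdd N 1 := by
  simp [adjoinArc, Equiv.permCongr_apply]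

theorem adjoinArc_natAdd_one (z : Equiv.Perm (Fin N)) :
    adjoinArc z (Fin.natAdd N 1) = Fin.natAdd N 0 := by
  simp [adjoinArc, Equiv.permCongr_apply]

theorem castAdd_two_or_natAdd (i : Fin (N + 2)) :
    (∃ j, i = Fin.castAdd 2 j) ∨ i = Fin.natAdd N 0 ∨ i = Fin.natAdd N 1 := by
  induction i using Fin.addCases with
  | left j => exact Or.inl ⟨j, rfl⟩
  | right j => right; fin_cases j <;> simp

theorem adjoinArc_injective : Function.Injective (adjoinArc (N := N)) := fun y z h => by
  ext i : 1
  simpa [adjoinArc_castAdd] using DFunLike.congr_fun h (Fin.castAdd 2 i)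

theorem isFPFInvolution_adjoinArc (hz : IsFPFInvolution z) : IsFPFInvolution (adjoinArc z) where
  involutive i := by
    rcases castAdd_two_or_natAdd i with ⟨j, rfl⟩ | rfl | rfl
    · rw [adjoinArc_castAdd, adjoinArc_castAdd, hz.involutive]
    · rw [adjoinArc_natAdd_zero, adjoinArc_natAdd_one]
    · rw [adjoinArc_natAdd_one, adjoinArc_natAdd_zero]
  apply_ne i := by
    rcases castAdd_two_or_natAdd i with ⟨j, rfl⟩ | rfl | rfl
    · rw [adjoinArc_castAdd, Ne, Fin.castAdd_inj]
      exact hz.apply_ne j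
    · simp [adjoinArc_natAdd_zero, Fin.ext_iff]
    · simp [adjoinArc_natAdd_one, Fin.ext_iff]

theorem exists_adjoinArc_eq {z : Equiv.Perm (Fin (N + 2))} (hz : IsFPFInvolution z)
    (h : z (Fin.natAdd N 0) = Fin.natAdd N 1) :
    ∃ y : Equiv.Perm (Fin N), IsFPFInvolution y ∧ adjoinArc y = z := by
  have h' : z (Fin.natAdd N 1) = Fin.natAdd N 0 := by rw [← h, hz.involutive]
  have hcast : ∀ i : Fin N, ∃ j : Fin N, z (Fin.castAdd 2 i) = Fin.castAdd 2 j := fun i => by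
    rcases castAdd_two_or_natAdd (z (Fin.castAdd 2 i)) with hi | hi | hi
    · exact hi
    · rw [hz.apply_eq_iff, h, Fin.ext_iff, Fin.val_castAdd, Fin.val_natAdd] at hi
      omega
    · rw [hz.apply_eq_iff, h', Fin.ext_iff, Fin.val_castAdd, Fin.val_natAdd] at hi
      omega
  choose y hy using hcast
  have hinv : Function.Involutive y := fun i => by
    simpa [hy] using hz.involutive (Fin.castAdd 2 i)
  refine ⟨hinv.toPerm, ⟨hinv, fun i hi => hz.apply_ne (Fin.castAdd 2 i) ?_⟩, ?_⟩
  · exact (hy i).trans (congrArg _ hi)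
  · ext i : 1
    rcases castAdd_two_or_natAdd i with ⟨j, rfl⟩ | rfl | rfl
    · rw [adjoinArc_castAdd, hy, Function.Involutive.coe_toPerm]
    · rw [adjoinArc_natAdd_zero, h]
    · rw [adjoinArc_natAdd_one, h']

theorem ellFpfFin_adjoinArc (z : Equiv.Perm (Fin N)) : ellFpfFin (adjoinArc z) = ellFpfFin z := by
  refine Eq.trans (congrArg Finset.card ?_)
    (Finset.card_map ((Fin.castAddEmb 2).prodMap (Fin.castAddEmb 2)))
  ext ⟨a, b⟩
  simp only [Finset.mem_filter_univ, Finset.mem_map, Function.Embedding.coe_prodMap, Prod.exists,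
    Prod.map_apply, Fin.castAddEmb_apply, Prod.mk.injEq]
  constructor
  · rintro ⟨hba, hb, ha⟩
    rcases castAdd_two_or_natAdd b with ⟨b, rfl⟩ | rfl | rfl
    · rcases castAdd_two_or_natAdd a with ⟨a, rfl⟩ | rfl | rfl
      · rw [adjoinArc_castAdd] at ha hb
        exact ⟨a, b, ⟨hba, hb, ha⟩, rfl, rfl⟩
      all_goals
        rw [adjoinArc_castAdd, Fin.lt_def, Fin.val_castAdd, Fin.val_natAdd] at ha
        omega
    all_goals
      simp only [adjoinArc_natAdd_zero, adjoinArc_natAdd_one, Fin.lt_def, Fin.val_natAdd,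
        Fin.val_zero, Fin.val_one] at ha hba
      omega
  · rintro ⟨a, b, hab, rfl, rfl⟩
    rw [adjoinArc_castAdd, adjoinArc_castAdd]
    exact hab

end AdjoinArc

section EntryChange

variable {R : Type*} [CommRing R] {N : ℕ} {A A' : Matrix (Fin (N + 2)) (Fin (N + 2)) R}

theorem pfaffianTerm_adjoinArc (A : Matrix (Fin (N + 2)) (Fin (N + 2)) R)
    (z : Equiv.Perm (Fin N)) :
    pfaffianTerm A (adjoinArc z) = A (Fin.natAdd N 0) (Fin.natAdd N 1) *
      pfaffianTerm (A.submatrix (Fin.castAdd 2) (Fin.castAdd 2)) z := by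
  rw [pfaffianTerm, pfaffianTerm, ellFpfFin_adjoinArc, mul_left_comm]
  congr 1
  rw [Finset.prod_filter, Finset.prod_filter, Fin.prod_univ_add, Fin.prod_univ_two,
    adjoinArc_natAdd_zero, adjoinArc_natAdd_one, if_neg (by simp [Fin.lt_def]),
    if_pos (by simp [Fin.lt_def]), one_mul, mul_comm]
  congr 1
  refine Finset.prod_congr rfl fun i _ => ?_
  simp only [adjoinArc_castAdd, Fin.lt_def, Fin.val_castAdd, Matrix.submatrix_apply]

theorem pfaffian_eq_mul_add_sum (A : Matrix (Fin (N + 2)) (Fin (N + 2)) R) :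
    Pfaffian A = A (Fin.natAdd N 0) (Fin.natAdd N 1) *
      Pfaffian (A.submatrix (Fin.castAdd 2) (Fin.castAdd 2)) +
      ∑ z ∈ (matchings (N + 2)).filter (fun z => z (Fin.natAdd N 0) ≠ Fin.natAdd N 1),
        pfaffianTerm A z := by
  rw [pfaffian_eq_sum A, ← Finset.sum_filter_add_sum_filter_not _
    (fun z : Equiv.Perm (Fin (N + 2)) => z (Fin.natAdd N 0) = Fin.natAdd N 1)]
  congr 1
  rw [pfaffian_eq_sum, Finset.mul_sum]
  refine (Finset.sum_bij (fun z _ => adjoinArc z) (fun z hz => ?_)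
    (fun _ _ _ _ h => adjoinArc_injective h) (fun z hz => ?_)
    fun z _ => (pfaffianTerm_adjoinArc A z).symm).symm
  · rw [Finset.mem_filter, mem_matchings]
    exact ⟨isFPFInvolution_adjoinArc (mem_matchings.1 hz), adjoinArc_natAdd_zero z⟩
  · rw [Finset.mem_filter, mem_matchings] at hz
    obtain ⟨y, hy, hyz⟩ := exists_adjoinArc_eq hz.1 hz.2
    exact ⟨y, mem_matchings.2 hy, hyz⟩

theorem pfaffian_eq_add_of_last_entry (h : ∀ i j,
      s(i, j) ≠ s(Fin.natAdd N 0, Fin.natAdd N 1) → A i j = A' i j) :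
    Pfaffian A = Pfaffian A' +
      (A (Fin.natAdd N 0) (Fin.natAdd N 1) - A' (Fin.natAdd N 0) (Fin.natAdd N 1)) *
        Pfaffian (A.submatrix (Fin.castAdd 2) (Fin.castAdd 2)) := by
  have hcorner : A.submatrix (Fin.castAdd 2) (Fin.castAdd 2) =
      A'.submatrix (Fin.castAdd 2) (Fin.castAdd 2) := by
    ext i j
    refine h _ _ fun hij => ?_
    simp only [Sym2.eq_iff, Fin.ext_iff, Fin.val_castAdd, Fin.val_natAdd] at hij
    omega
  have hrest : ∀ z ∈ (matchings (N + 2)).filter (fun z => z (Fin.natAdd N 0) ≠ Fin.natAdd N 1),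
      pfaffianTerm A z = pfaffianTerm A' z := by
    intro z hz
    rw [Finset.mem_filter, mem_matchings] at hz
    refine congrArg _ (Finset.prod_congr rfl fun i _ => h _ _ fun hi => hz.2 ?_)
    rcases Sym2.eq_iff.1 hi with ⟨hi₀, hi₁⟩ | ⟨hi₁, hi₀⟩
    · rw [← hi₀, hz.1.involutive, hi₁]
    · rw [← hi₀, hi₁]
  rw [pfaffian_eq_mul_add_sum A, pfaffian_eq_mul_add_sum A', hcorner,
    Finset.sum_congr rfl hrest]
  ring

theorem pfaffian_mem_of_entry_change {I : Ideal R} (hA : A ∈ MatSS R (N + 2))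
    (hA' : A' ∈ MatSS R (N + 2)) {s t : Fin (N + 2)} (hst : s ≠ t)
    (h : ∀ i j, s(i, j) ≠ s(s, t) → A i j = A' i j) (hA'I : Pfaffian A' ∈ I)
    (hminor : ∀ f : Fin N → Fin (N + 2), Function.Injective f → Set.range f = {s, t}ᶜ →
      Pfaffian (A.submatrix f f) ∈ I) : Pfaffian A ∈ I := by
  obtain ⟨σ, hs, ht⟩ := exists_perm_apply_eq_and_apply_eq
    (a := Fin.natAdd N (0 : Fin 2)) (b := Fin.natAdd N 1) (by simp [Fin.ext_iff]) hst
  refine pfaffian_mem_of_submatrix_perm_mem hA σ ?_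
  rw [pfaffian_eq_add_of_last_entry (A' := A'.submatrix σ σ)]
  · refine I.add_mem ?_ (I.mul_mem_left _
      (hminor (σ ∘ Fin.castAdd 2) (σ.injective.comp (Fin.castAdd_injective _ _)) ?_))
    · rw [pfaffian_submatrix_perm hA']
      exact I.mul_mem_left _ hA'I
    · ext x
      obtain ⟨y, rfl⟩ := σ.surjective x
      rcases castAdd_two_or_natAdd y with ⟨y, rfl⟩ | rfl | rfl
      all_goals
        simp only [Set.mem_range, Function.comp_apply, EmbeddingLike.apply_eq_iff_eq, ← hs, ← ht,
          Set.mem_compl_iff, Set.mem_insert_iff, Set.mem_singleton_iff, Fin.ext_iff,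
          Fin.val_castAdd, Fin.val_natAdd]
        first
          | exact iff_of_true ⟨y, rfl⟩ (by omega)
          | exact iff_of_false (fun ⟨_, _⟩ => by omega) (by simp)
  · intro i j hij
    refine h _ _ fun hσ => hij (Sym2.map.injective σ.injective ?_)
    simpa [hs, ht] using hσ

end EntryChange

section MinorCriterion

variable {R : Type*} [CommRing R] {N : ℕ}

theorem pfaffian_eq_zero_of_odd (hN : Odd N) (A : Matrix (Fin N) (Fin N) R) : Pfaffian A = 0 := by
  rw [pfaffian_eq_sum, Finset.sum_eq_zero]
  intro z hz
  rw [mem_matchings] at hz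
  obtain ⟨a, ha⟩ := Equiv.Perm.exists_fixed_point_of_prime (p := 2) (n := 1) (σ := z)
    (by simpa [← even_iff_two_dvd] using hN) (Equiv.ext hz.involutive)
  exact absurd ha (hz.apply_ne a)

/-- The matrix `A` with the entries at `(s, t)` and `(t, s)` replaced by those of `G`. -/
def replaceEntry (A G : Matrix (Fin N) (Fin N) R) (s t : Fin N) : Matrix (Fin N) (Fin N) R :=
  Matrix.of fun i j => if s(i, j) = s(s, t) then G i j else A i j

theorem replaceEntry_mem_matSS {A G : Matrix (Fin N) (Fin N) R} (hA : A ∈ MatSS R N)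
    (hG : G ∈ MatSS R N) (s t : Fin N) : replaceEntry A G s t ∈ MatSS R N := by
  refine mem_matSS_iff.2 ⟨fun i j => ?_, fun i => ?_⟩
  · simp only [replaceEntry, Matrix.of_apply, Sym2.eq_swap (a := j)]
    split_ifs
    exacts [apply_eq_neg_of_mem_matSS hG i j, apply_eq_neg_of_mem_matSS hA i j]
  · simp [replaceEntry, hA.2, hG.2]

/- Changing one entry outside the rows and columns in `B` to its value in `G` alters the Pfaffian by
a multiple of a smaller one, which has fewer entries still to be changed. -/
theorem pfaffian_mem_of_minors_mem {I : Ideal R} {H G : Matrix (Fin N) (Fin N) R}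
    (hH : H ∈ MatSS R N) (hG : G ∈ MatSS R N) (B : Set (Fin N))
    (hHG : ∀ s t, s ∈ B → H s t = G s t)
    (hminor : ∀ (M : ℕ) (f : Fin M → Fin N), Function.Injective f → B ⊆ Set.range f →
      Pfaffian (G.submatrix f f) ∈ I) : Pfaffian H ∈ I := by
  induction hd : {p : Fin N × Fin N | H p.1 p.2 ≠ G p.1 p.2}.ncard using Nat.strong_induction_on
    generalizing N with
  | _ d ih =>
  subst hd
  by_cases hall : H = G
  · simpa [hall] using hminor N id Function.injective_id (by simp)
  obtain ⟨s, t, hst⟩ : ∃ s t, H s t ≠ G s t := by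
    simpa [← Matrix.ext_iff] using hall
  have hsB : s ∉ B := fun hs => hst (hHG s t hs)
  have htB : t ∉ B := fun ht => hst (by
    rw [apply_eq_neg_of_mem_matSS hH, hHG t s ht, ← apply_eq_neg_of_mem_matSS hG])
  have hne : s ≠ t := fun h => hst (by rw [h, hH.2, hG.2])
  have hN : 1 < N := by simpa using Fintype.one_lt_card_iff.2 ⟨s, t, hne⟩
  obtain ⟨M, rfl⟩ : ∃ M, N = M + 2 := ⟨N - 2, by omega⟩
  refine pfaffian_mem_of_entry_change hH (replaceEntry_mem_matSS hH hG s t) hne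
    (fun i j hij => (if_neg hij).symm) ?_ fun f hf hrange => ?_
  · refine ih _ ?_ (replaceEntry_mem_matSS hH hG s t) hG B (fun a b ha => ?_) hminor rfl
    · refine Set.ncard_lt_ncard ⟨fun p hp => ?_, fun hsub => ?_⟩
      · exact fun h => hp (by simp only [replaceEntry, Matrix.of_apply, h, ite_self])
      · exact hsub (a := (s, t)) hst (by simp [replaceEntry])
    · simp [replaceEntry, hHG a b ha]
  · refine ih _ ?_ (submatrix_mem_matSS hH f) (submatrix_mem_matSS hG f) (f ⁻¹' B)
      (fun a b ha => hHG _ _ ha) (fun M' g hg hB => ?_) rfl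
    · rw [← Set.ncard_image_of_injective _ (hf.prodMap hf)]
      refine Set.ncard_lt_ncard ⟨?_, fun hsub => ?_⟩
      · rintro _ ⟨p, hp, rfl⟩
        exact hp
      · obtain ⟨p, -, hp⟩ := hsub (a := (s, t)) hst
        have : s ∈ Set.range f := ⟨p.1, congrArg Prod.fst hp⟩
        simp [hrange] at this
    · refine hminor M' (f ∘ g) (hf.comp hg) fun b hb => ?_
      obtain ⟨a, rfl⟩ : b ∈ Set.range f := by
        rw [hrange]
        rintro (rfl | rfl) <;> contradiction
      exact (hB hb).imp fun _ h => congrArg f h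

end MinorCriterion

section PfaffianIdeal

variable {K : Type*} [CommRing K] {n N : ℕ}

/-- The ideal of `R_n` attached to a rank table `r`: it is generated by the Pfaffians
`pf(U^ss_{RR})` over the nonempty even-size `R ⊆ [i]` with `|R ∩ [j]| > r i j` for some `i ≥ j`. -/
noncomputable def pfaffianIdeal (K : Type*) [CommRing K] (n : ℕ) (r : ℕ → ℕ → ℕ) :
    Ideal (MvPolynomial (SSVar n) K) :=
  Ideal.span {f | ∃ R : Finset (Fin n), R.Nonempty ∧ Even R.card ∧
    (∃ i j : ℕ, 1 ≤ j ∧ j ≤ i ∧ i ≤ n ∧ (∀ a ∈ R, (a : ℕ) + 1 ≤ i) ∧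
      r i j < (R.filter fun a : Fin n => (a : ℕ) + 1 ≤ j).card) ∧
    f = pfUss K R}

theorem uss_mem_matSS (K : Type*) [CommRing K] (n : ℕ) : Uss K n ∈ MatSS _ n := by
  refine mem_matSS_iff.2 ⟨fun i j => ?_, fun i => by simp [Uss]⟩
  rcases lt_trichotomy i j with h | rfl | h
  · simp [Uss, h, h.not_gt]
  · simp [Uss]
  · simp [Uss, h, h.not_gt]

theorem pfUss_eq_of_card_eq {R : Finset (Fin n)} (h : R.card = N) :
    pfUss K R = Pfaffian ((Uss K n).submatrix (R.orderEmbOfFin h) (R.orderEmbOfFin h)) := by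
  subst h
  rfl

theorem pfaffian_submatrix_uss_mem {I : Ideal (MvPolynomial (SSVar n) K)} {lab : Fin N → Fin n}
    (hlab : Function.Injective lab) (h : pfUss K (Finset.univ.image lab) ∈ I) :
    Pfaffian ((Uss K n).submatrix lab lab) ∈ I := by
  have hcard : (Finset.univ.image lab).card = N := by
    rw [Finset.card_image_of_injective _ hlab, Finset.card_fin]
  have hrange : ∀ x, ∃ y, lab y = (Finset.univ.image lab).orderEmbOfFin hcard x := fun x => by
    simpa only [Finset.mem_image, Finset.mem_univ, true_and] using
      Finset.orderEmbOfFin_mem (Finset.univ.image lab) hcard x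
  choose f hf using hrange
  have hfinj : Function.Injective f := fun x y hxy => by
    rw [← (Finset.orderEmbOfFin _ hcard).injective.eq_iff, ← hf, ← hf, hxy]
  refine pfaffian_mem_of_submatrix_perm_mem (submatrix_mem_matSS (uss_mem_matSS K n) lab)
    (Equiv.ofBijective f (Finite.injective_iff_bijective.1 hfinj)) ?_
  rw [pfUss_eq_of_card_eq hcard] at h
  convert h using 2
  ext1 s t
  simp [hf]

/- The matrix `H` may be arbitrary on the pairs of positions outside `B`. -/
theorem pfaffian_mem_pfaffianIdeal {r : ℕ → ℕ → ℕ} {i j : ℕ} (hji : j ≤ i) (hi : i ≤ n)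
    {H : Matrix (Fin N) (Fin N) (MvPolynomial (SSVar n) K)} (hH : H ∈ MatSS _ N)
    {lab : Fin N → Fin n} {B : Finset (Fin N)}
    (hHU : ∀ s t, s ∈ B → H s t = Uss K n (lab s) (lab t)) (hlab : ∀ s, (lab s : ℕ) < i)
    (hB : ∀ s ∈ B, (lab s : ℕ) < j) (hr : r i j < B.card) :
    Pfaffian H ∈ pfaffianIdeal K n r := by
  have hU {M : ℕ} (l : Fin M → Fin n) : (Uss K n).submatrix l l ∈ MatSS _ M :=
    submatrix_mem_matSS (uss_mem_matSS K n) l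
  refine pfaffian_mem_of_minors_mem hH (hU lab) (B : Set (Fin N)) hHU fun M f _ hBf => ?_
  rw [Matrix.submatrix_submatrix]
  rcases Nat.even_or_odd M with hM | hM
  swap
  · simp [pfaffian_eq_zero_of_odd hM]
  by_cases hinj : Function.Injective (lab ∘ f)
  swap
  · obtain ⟨a, b, hab, hne⟩ : ∃ a b, (lab ∘ f) a = (lab ∘ f) b ∧ a ≠ b := by
      simpa [Function.Injective] using hinj
    rw [pfaffian_eq_zero_of_rows_eq (hU (lab ∘ f)) hne
      (funext fun t => by simp only [Matrix.submatrix_apply, hab])]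
    exact zero_mem _
  have hcard : B.card ≤
      ((Finset.univ.image (lab ∘ f)).filter fun a : Fin n => (a : ℕ) + 1 ≤ j).card := by
    refine Finset.card_le_card_of_injOn lab (fun s hs => ?_) fun s hs t ht hst => ?_
    · obtain ⟨a, rfl⟩ := hBf hs
      simpa using hB _ hs
    · obtain ⟨a, rfl⟩ := hBf hs
      obtain ⟨b, rfl⟩ := hBf ht
      exact congrArg f (hinj hst)
  obtain ⟨s, hs⟩ : B.Nonempty := Finset.card_pos.1 (by omega)
  refine pfaffian_submatrix_uss_mem hinj (Ideal.subset_span ⟨_, ?_, ?_,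
    ⟨i, j, (hB s hs).pos, hji, hi, ?_, hr.trans_le hcard⟩, rfl⟩)
  · exact (Finset.card_pos.1 (hr.trans_le hcard).pos).mono (Finset.filter_subset _ _)
  · rwa [Finset.card_image_of_injective _ hinj, Finset.card_fin]
  · simpa using fun a => hlab (f a)

end PfaffianIdeal

/-! ### Leading monomials -/

section MonomialOrder

open scoped MonomialOrder

theorem lex_lt_of_forall_mem_support_lt {σ : Type*} [LinearOrder σ] [WellFoundedGT σ]
    {a b : σ →₀ ℕ} {u : σ} (ha : ∀ v ∈ a.support, u < v) (hb : b u ≠ 0) :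
    a ≺[MonomialOrder.lex] b := by
  have hne : b.support.Nonempty := ⟨u, Finsupp.mem_support_iff.2 hb⟩
  have ha0 : ∀ v ≤ u, a v = 0 := fun v hv => by
    by_contra h
    exact hv.not_gt (ha v (Finsupp.mem_support_iff.2 h))
  have hle : b.support.min' hne ≤ u := Finset.min'_le _ _ (Finsupp.mem_support_iff.2 hb)
  rw [MonomialOrder.lex_lt_iff, Finsupp.Lex.lt_iff]
  refine ⟨b.support.min' hne, fun v hv => ?_, ?_⟩
  · have hbv : b v = 0 := by
      by_contra h
      exact hv.not_ge (Finset.min'_le _ _ (Finsupp.mem_support_iff.2 h))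
    simp only [ofLex_toLex, hbv, ha0 v (hv.le.trans hle)]
  · simpa [ha0 _ hle, Nat.pos_iff_ne_zero] using
      Finsupp.mem_support_iff.1 (b.support.min'_mem hne)

theorem sum_ne_zero_and_degree_sum_eq {σ ι R : Type*} [CommSemiring R] {m : MonomialOrder σ}
    {s : Finset ι} {f : ι → MvPolynomial σ R} {t : ι} (ht : t ∈ s) (hft : f t ≠ 0)
    (h : ∀ i ∈ s, i ≠ t → f i ≠ 0 → m.degree (f i) ≺[m] m.degree (f t)) :
    ∑ i ∈ s, f i ≠ 0 ∧ m.degree (∑ i ∈ s, f i) = m.degree (f t) := by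
  have hcoeff : (∑ i ∈ s, f i).coeff (m.degree (f t)) = m.leadingCoeff (f t) := by
    rw [coeff_sum]
    refine Finset.sum_eq_single_of_mem t ht fun i hi hit => ?_
    by_cases hfi : f i = 0
    · rw [hfi, coeff_zero]
    · exact m.coeff_eq_zero_of_lt (h i hi hit hfi)
  have hmem : m.degree (f t) ∈ (∑ i ∈ s, f i).support := by
    rwa [mem_support_iff, hcoeff, m.leadingCoeff_ne_zero_iff]
  refine ⟨fun h0 => by simp [h0] at hmem, m.toSyn.injective (le_antisymm ?_ (m.le_degree hmem))⟩
  refine m.degree_sum_le.trans (Finset.sup_le fun i hi => ?_)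
  by_cases hit : i = t
  · rw [hit]
  by_cases hfi : f i = 0
  · simp [hfi]
  · exact (h i hi hit hfi).le

/-- The lexicographic monomial order in which the variables are compared through an injection `f`
into a linear order; variables with smaller value of `f` are more important. -/
noncomputable def lexOrderVia {σ κ : Type*} [Finite σ] [LinearOrder κ] {f : σ → κ}
    (hf : Function.Injective f) : MonomialOrder σ :=
  letI : LinearOrder σ := LinearOrder.lift' f hf
  haveI : WellFoundedGT σ := Finite.to_wellFoundedGT
  MonomialOrder.lex

theorem lexOrderVia_lt {σ κ : Type*} [Finite σ] [LinearOrder κ] {f : σ → κ}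
    (hf : Function.Injective f) {a b : σ →₀ ℕ} {u : σ} (ha : ∀ v ∈ a.support, f u < f v)
    (hb : b u ≠ 0) : a ≺[lexOrderVia hf] b :=
  letI : LinearOrder σ := LinearOrder.lift' f hf
  haveI : WellFoundedGT σ := Finite.to_wellFoundedGT
  lex_lt_of_forall_mem_support_lt ha hb

/-- The position of the variable `u_{ij}` in decreasing order of importance: variables with larger
row `i` come first, then those with smaller column `j`. -/
def varKey {n : ℕ} (v : SSVar n) : (Fin n)ᵒᵈ ×ₗ Fin n := toLex (OrderDual.toDual v.1.1, v.1.2)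

theorem varKey_injective (n : ℕ) : Function.Injective (varKey (n := n)) := fun v w h => by
  simpa [varKey, Subtype.ext_iff, Prod.ext_iff] using h

theorem varKey_lt_varKey_iff {n : ℕ} {v w : SSVar n} :
    varKey v < varKey w ↔ w.1.1 < v.1.1 ∨ v.1.1 = w.1.1 ∧ v.1.2 < w.1.2 := by
  simp [varKey, Prod.Lex.toLex_lt_toLex]

/-- The lexicographic monomial order in which the variables are compared by `varKey`; the leading
monomials of the Pfaffians below are products over antidiagonals. -/
noncomputable def antidiagOrder (n : ℕ) : MonomialOrder (SSVar n) :=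
  lexOrderVia (varKey_injective n)

end MonomialOrder

section LeadingMonomial

open scoped MonomialOrder

variable {K : Type*} [CommRing K] {n N : ℕ}

theorem degree_pfaffianTerm [IsDomain K] {σ : Type*} (m : MonomialOrder σ)
    {H : Matrix (Fin N) (Fin N) (MvPolynomial σ K)} {z : Equiv.Perm (Fin N)}
    (h : pfaffianTerm H z ≠ 0) :
    m.degree (pfaffianTerm H z) =
      ∑ i ∈ Finset.univ.filter (fun i => z i < i), m.degree (H (z i) i) := by
  rw [pfaffianTerm] at h ⊢
  have hprod := Finset.prod_ne_zero_iff.1 (right_ne_zero_of_mul h)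
  rw [← m.degree_prod hprod]
  rcases neg_one_pow_eq_or (MvPolynomial σ K) (ellFpfFin z) with hs | hs <;>
    simp only [hs, one_mul, neg_mul, m.degree_neg]

theorem apply_ne_zero_of_pfaffianTerm_ne_zero {R : Type*} [CommRing R]
    {H : Matrix (Fin N) (Fin N) R} (hH : H ∈ MatSS _ N) {z : Equiv.Perm (Fin N)}
    (hz : IsFPFInvolution z) (h : pfaffianTerm H z ≠ 0) (i : Fin N) : H (z i) i ≠ 0 := by
  intro hi
  rcases (hz.apply_ne i).lt_or_gt with hlt | hlt
  · exact h (pfaffianTerm_eq_zero_of_apply_eq_zero hlt hi)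
  · refine h (pfaffianTerm_eq_zero_of_apply_eq_zero (i := z i) (by rwa [hz.involutive]) ?_)
    rw [hz.involutive, apply_eq_neg_of_mem_matSS hH, hi, neg_zero]

variable {H : Matrix (Fin N) (Fin N) (MvPolynomial (SSVar n) K)} {τ : Equiv.Perm (Fin N)}
  {ρ : Fin N → ℕ} {u : Fin N → SSVar n}

theorem exists_apply_lt_and_label_eq (hH : H ∈ MatSS _ N) (hτ : IsFPFInvolution τ)
    (hρ : ∀ s, ρ (τ s) = ρ s)
    (hdeg : ∀ s, (antidiagOrder n).degree (H (τ s) s) = Finsupp.single (u s) 1) (s : Fin N) :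
    ∃ i, τ i < i ∧ ρ i = ρ s ∧ u i = u s := by
  rcases (hτ.apply_ne s).lt_or_gt with h | h
  · exact ⟨s, h, rfl, rfl⟩
  · refine ⟨τ s, by rwa [hτ.involutive], hρ s, ?_⟩
    have hdeg' := hdeg (τ s)
    rw [hτ.involutive, apply_eq_neg_of_mem_matSS hH, MonomialOrder.degree_neg, hdeg] at hdeg'
    exact (Finsupp.single_left_injective one_ne_zero hdeg').symm

theorem le_apply_of_agree (hρ : ∀ s, ρ (τ s) = ρ s) {z : Equiv.Perm (Fin N)}
    (hz : IsFPFInvolution z) {s i : Fin N} (hagree : ∀ t, ρ t < ρ s → z t = τ t)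
    (hi : ρ s ≤ ρ i) : ρ s ≤ ρ (z i) := by
  by_contra! h
  have hτi : τ (z i) = i := by rw [← hagree _ h, hz.involutive]
  exact hi.not_gt (by rwa [← hτi, hρ])

/- Cancel the arcs shared by `z` and `τ` of priority less than that of the first vertex `s` where
they differ; the arc of `τ` at `s` then precedes all that is left of `z`. -/
theorem degree_pfaffianTerm_lt [IsDomain K] (hH : H ∈ MatSS _ N) (hτ : IsFPFInvolution τ)
    (hρ : ∀ s, ρ (τ s) = ρ s)
    (hdeg : ∀ s, (antidiagOrder n).degree (H (τ s) s) = Finsupp.single (u s) 1)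
    (hlt : ∀ s p q, ρ s ≤ ρ p → ρ s ≤ ρ q → H p q ≠ 0 → s(p, q) ≠ s(s, τ s) →
      ∀ v ∈ ((antidiagOrder n).degree (H p q)).support, varKey (u s) < varKey v)
    (hτ0 : pfaffianTerm H τ ≠ 0) {z : Equiv.Perm (Fin N)} (hz : IsFPFInvolution z) (hzτ : z ≠ τ)
    (hz0 : pfaffianTerm H z ≠ 0) :
    (antidiagOrder n).degree (pfaffianTerm H z) ≺[antidiagOrder n]
      (antidiagOrder n).degree (pfaffianTerm H τ) := by
  have hex : (Finset.univ.filter fun s => z s ≠ τ s).Nonempty := by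
    simpa [Finset.filter_nonempty_iff, Equiv.ext_iff] using hzτ
  obtain ⟨s, hs, hmin⟩ := Finset.exists_min_image _ ρ hex
  replace hs : z s ≠ τ s := (Finset.mem_filter.1 hs).2
  have hagree : ∀ t, ρ t < ρ s → z t = τ t := fun t ht => by
    by_contra h
    exact ht.not_ge (hmin t (Finset.mem_filter.2 ⟨Finset.mem_univ _, h⟩))
  rw [degree_pfaffianTerm _ hz0, degree_pfaffianTerm _ hτ0,
    ← Finset.sum_filter_add_sum_filter_not _ (fun i => ρ i < ρ s),
    ← Finset.sum_filter_add_sum_filter_not _ (fun i => ρ i < ρ s)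
      (fun i => (antidiagOrder n).degree (H (τ i) i)), map_add, map_add]
  refine add_lt_add_of_le_of_lt (le_of_eq ?_) (lexOrderVia_lt _ (u := u s) ?_ ?_)
  · rw [Finset.filter_filter, Finset.filter_filter]
    refine congrArg _ (Finset.sum_congr (Finset.filter_congr fun i _ => ?_) fun i hi => ?_)
    · exact and_congr_left fun h => by rw [hagree i h]
    · rw [hagree i (Finset.mem_filter.1 hi).2.2]
  · intro v hv
    obtain ⟨i, hi, hvi⟩ := Finset.mem_biUnion.1 (Finsupp.support_finsetSum hv)
    obtain ⟨-, hρi⟩ := Finset.mem_filter.1 hi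
    rw [not_lt] at hρi
    refine hlt s _ _ (le_apply_of_agree hρ hz hagree hρi) hρi
      (apply_ne_zero_of_pfaffianTerm_ne_zero hH hz hz0 i) ?_ v hvi
    rw [ne_eq, Sym2.eq_iff]
    rintro (⟨rfl, h⟩ | ⟨h, rfl⟩)
    · exact hs (by rw [hz.involutive, ← h])
    · exact hs h
  · obtain ⟨i, hi, hρi, hui⟩ := exists_apply_lt_and_label_eq hH hτ hρ hdeg s
    rw [Finsupp.finsetSum_apply, ne_eq, Finset.sum_eq_zero_iff]
    intro h
    simpa [hdeg, hui] using h i (by simp [hi, hρi])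

theorem pfaffian_ne_zero_and_degree_eq [IsDomain K] (hH : H ∈ MatSS _ N) (hτ : IsFPFInvolution τ)
    (hρ : ∀ s, ρ (τ s) = ρ s)
    (hdeg : ∀ s, (antidiagOrder n).degree (H (τ s) s) = Finsupp.single (u s) 1)
    (hlt : ∀ s p q, ρ s ≤ ρ p → ρ s ≤ ρ q → H p q ≠ 0 → s(p, q) ≠ s(s, τ s) →
      ∀ v ∈ ((antidiagOrder n).degree (H p q)).support, varKey (u s) < varKey v) :
    Pfaffian H ≠ 0 ∧ (antidiagOrder n).degree (Pfaffian H) =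
      ∑ i ∈ Finset.univ.filter (fun i => τ i < i), Finsupp.single (u i) 1 := by
  have hτ0 : pfaffianTerm H τ ≠ 0 := by
    refine mul_ne_zero (pow_ne_zero _ (neg_ne_zero.2 one_ne_zero))
      (Finset.prod_ne_zero_iff.2 fun i _ h0 => ?_)
    simpa [h0, eq_comm] using hdeg i
  obtain ⟨h0, hd⟩ := sum_ne_zero_and_degree_sum_eq (mem_matchings.2 hτ) hτ0
    fun z hz hzτ hz0 => degree_pfaffianTerm_lt hH hτ hρ hdeg hlt hτ0 (mem_matchings.1 hz) hzτ hz0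
  rw [pfaffian_eq_sum]
  refine ⟨h0, hd.trans ?_⟩
  rw [degree_pfaffianTerm _ hτ0]
  exact Finset.sum_congr rfl fun i _ => hdeg i

theorem exists_degree_uss_eq [Nontrivial K] {a b : Fin n} (h : Uss K n a b ≠ 0)
    (m : MonomialOrder (SSVar n)) :
    ∃ v : SSVar n, s(v.1.1, v.1.2) = s(a, b) ∧ m.degree (Uss K n a b) = Finsupp.single v 1 := by
  rcases lt_trichotomy a b with hab | rfl | hab
  · exact ⟨⟨(b, a), hab⟩, Sym2.eq_swap, by simp [Uss, hab, hab.not_gt, m.degree_X]⟩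
  · exact absurd ((uss_mem_matSS K n).2 a) h
  · exact ⟨⟨(a, b), hab⟩, rfl, by simp [Uss, hab, m.degree_X]⟩

end LeadingMonomial

/-! ### Arc configurations -/

section ArcConfig

open scoped MonomialOrder

variable {n i j : ℕ} {U L : Finset (SSVar n)}

/-- The arc `v` lies strictly under the arc `u`, where a variable `u_{ab}` is regarded as an arc
with ends `b < a`. -/
def Inside (u v : SSVar n) : Prop := u.1.2 < v.1.2 ∧ v.1.1 < u.1.1

/-- A set of pairwise nested arcs; in the matrix, these are the antidiagonals. -/
def IsNested (S : Finset (SSVar n)) : Prop := (S : Set (SSVar n)).Pairwise fun u v =>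
  Inside u v ∨ Inside v u

/-- Two nested families of arcs, any two of which overlap, that together fit the rank condition at
`(i, j)`: all row indices of `U` and all column indices of `L` are less than `j`, so that
`#U + #L` bounds a rank of the top-left `i × j` submatrix. -/
structure ArcConfig (U L : Finset (SSVar n)) (i j : ℕ) : Prop where
  nested_upper : IsNested U
  nested_lower : IsNested L
  overlap : ∀ u ∈ U, ∀ v ∈ L, u.1.2 < v.1.1 ∧ v.1.2 < u.1.1
  upper_row_lt : ∀ u ∈ U, (u.1.1 : ℕ) < j
  lower_col_lt : ∀ v ∈ L, (v.1.2 : ℕ) < j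
  lower_row_lt : ∀ v ∈ L, (v.1.1 : ℕ) < i

/-- The end of an arc selected by a flag: its row index for `true`, its column index for
`false`. -/
def arcEnd (x : SSVar n × Bool) : Fin n := if x.2 then x.1.1.1 else x.1.1.2

/-- The ends of arcs that contribute an index to the rank condition: the row ends of `U` and the
column ends of `L`. -/
def IsMarked (U L : Finset (SSVar n)) (x : SSVar n × Bool) : Prop :=
  if x.2 then x.1 ∈ U else x.1 ∈ L

/-- The rank of an arc in the order in which the arcs of a configuration are compared with competing
perfect matchings: by decreasing row, the arcs of `U` first. -/
def arcPriority (U : Finset (SSVar n)) (a : SSVar n) : ℕ :=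
  2 * (n - a.1.1) + if a ∈ U then 0 else 1

theorem IsMarked.fst_mem {p : SSVar n × Bool} (hp : IsMarked U L p) : p.1 ∈ U ∪ L := by
  obtain ⟨a, _ | _⟩ := p
  · exact Finset.mem_union_right _ hp
  · exact Finset.mem_union_left _ hp

theorem varKey_lt_of_ends {a v : SSVar n} {x y : Fin n} (hv : s(v.1.1, v.1.2) = s(x, y))
    (h : (x < a.1.1 ∧ y < a.1.1) ∨ (x ≤ a.1.1 ∧ y ≤ a.1.1 ∧ a.1.2 < x ∧ a.1.2 < y)) :
    varKey a < varKey v := by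
  rw [varKey_lt_varKey_iff]
  rcases Sym2.eq_iff.1 hv with ⟨rfl, rfl⟩ | ⟨rfl, rfl⟩ <;> omega

theorem ArcConfig.arcEnd_bounds (hc : ArcConfig U L i j) (hUL : ∀ u ∈ U, ∀ v ∈ L, ¬ v < u)
    {a : SSVar n} {p : SSVar n × Bool} (ha : a ∈ U ∪ L) (hp : p.1 ∈ U ∪ L) (hne : a ≠ p.1)
    (hap : arcPriority U a ≤ arcPriority U p.1) :
    arcEnd p ≤ a.1.1 ∧ (IsMarked U L p → a.1.2 < arcEnd p ∧ arcEnd p < a.1.1) ∧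
      (a ∈ U → a.1.2 < arcEnd p) ∧ (a ∈ L → arcEnd p < a.1.1) := by
  obtain ⟨b, side⟩ := p
  have hnormal : a ∈ U → b ∈ L → ¬ (b.1.1 ≤ a.1.1 ∧ b.1.2 ≤ a.1.2) := fun haU hbL h =>
    hUL a haU b hbL (lt_of_le_of_ne h (Ne.symm hne))
  have hUU := fun h h' => hc.nested_upper (x := a) h (y := b) h' hne
  have hLL := fun h h' => hc.nested_lower (x := a) h (y := b) h' hne
  have hab := fun h h' => hc.overlap a h b h'
  have hba := fun h h' => hc.overlap b h a h'
  have := a.2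
  have := b.2
  simp only [Inside, Finset.mem_coe, Finset.mem_union, arcPriority, arcEnd, IsMarked] at *
  clear hc hUL hne
  by_cases haU : a ∈ U <;> by_cases haL : a ∈ L <;> by_cases hbU : b ∈ U <;>
    by_cases hbL : b ∈ L <;> cases side <;>
    simp only [haU, haL, hbU, hbL, if_true, if_false, forall_const, or_self, or_true, true_or,
      Bool.false_eq_true, false_imp_iff, true_and, and_true] at * <;> omega

theorem ArcConfig.varKey_lt_of_fst_eq (hc : ArcConfig U L i j) (hUL : ∀ u ∈ U, ∀ v ∈ L, ¬ v < u)
    {a v : SSVar n} {p q : SSVar n × Bool} (ha : a ∈ U ∪ L) (hpa : p.1 = a) (hq : q.1 ∈ U ∪ L)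
    (haq : arcPriority U a ≤ arcPriority U q.1) (hmark : IsMarked U L p ∨ IsMarked U L q)
    (hne : a ≠ q.1) (hv : s(v.1.1, v.1.2) = s(arcEnd p, arcEnd q)) : varKey a < varKey v := by
  obtain ⟨hle, hmarked, hU, hL⟩ := hc.arcEnd_bounds hUL ha hq hne haq
  have hlt := a.2
  obtain ⟨a, _ | _⟩ := p <;> subst hpa
  · refine varKey_lt_of_ends hv (Or.inl ⟨hlt, ?_⟩)
    exact hmark.elim (fun haL => hL (by simpa [IsMarked] using haL)) fun h => (hmarked h).2
  · refine varKey_lt_of_ends hv (Or.inr ⟨le_rfl, hle, hlt, ?_⟩)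
    exact hmark.elim (fun haU => hU (by simpa [IsMarked] using haU)) fun h => (hmarked h).1

theorem ArcConfig.varKey_lt (hc : ArcConfig U L i j) (hUL : ∀ u ∈ U, ∀ v ∈ L, ¬ v < u)
    {a v : SSVar n} {p q : SSVar n × Bool} (ha : a ∈ U ∪ L) (hp : p.1 ∈ U ∪ L) (hq : q.1 ∈ U ∪ L)
    (hap : arcPriority U a ≤ arcPriority U p.1) (haq : arcPriority U a ≤ arcPriority U q.1)
    (hmark : IsMarked U L p ∨ IsMarked U L q) (hpq : ¬ (p.1 = a ∧ q.1 = a))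
    (hv : s(v.1.1, v.1.2) = s(arcEnd p, arcEnd q)) : varKey a < varKey v := by
  by_cases hpa : p.1 = a
  · exact hc.varKey_lt_of_fst_eq hUL ha hpa hq haq hmark (fun h => hpq ⟨hpa, h.symm⟩) hv
  by_cases hqa : q.1 = a
  · exact hc.varKey_lt_of_fst_eq hUL ha hqa hp hap hmark.symm (Ne.symm hpa)
      (hv.trans Sym2.eq_swap)
  obtain ⟨hple, -, hpU, hpL⟩ := hc.arcEnd_bounds hUL ha hp (Ne.symm hpa) hap
  obtain ⟨hqle, -, hqU, hqL⟩ := hc.arcEnd_bounds hUL ha hq (Ne.symm hqa) haq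
  refine varKey_lt_of_ends hv ((Finset.mem_union.1 ha).symm.imp (fun haL => ?_) fun haU => ?_)
  · exact ⟨hpL haL, hqL haL⟩
  · exact ⟨hple, hqle, hpU haU, hqU haU⟩

/-- The other end of the same arc. -/
def otherEnd : Equiv.Perm (SSVar n × Bool) := Equiv.prodCongr (Equiv.refl _) Equiv.boolNot

open Classical in
/-- The skew-symmetric matrix on a list of arc ends obtained from `U^ss` by deleting the entries
between two unmarked ends. -/
noncomputable def arcMatrix (K : Type*) [CommRing K] (U L : Finset (SSVar n)) {N : ℕ}
    (x : Fin N → SSVar n × Bool) : Matrix (Fin N) (Fin N) (MvPolynomial (SSVar n) K) :=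
  Matrix.of fun s t => if IsMarked U L (x s) ∨ IsMarked U L (x t) then
    Uss K n (arcEnd (x s)) (arcEnd (x t)) else 0

variable {K : Type*} [CommRing K] {N : ℕ} {x : Fin N → SSVar n × Bool}

theorem arcMatrix_apply (s t : Fin N) (h : IsMarked U L (x s) ∨ IsMarked U L (x t)) :
    arcMatrix K U L x s t = Uss K n (arcEnd (x s)) (arcEnd (x t)) := if_pos h

theorem isMarked_of_arcMatrix_ne_zero {s t : Fin N} (h : arcMatrix K U L x s t ≠ 0) :
    IsMarked U L (x s) ∨ IsMarked U L (x t) := by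
  by_contra hm
  exact h (if_neg hm)

theorem arcMatrix_mem_matSS : arcMatrix K U L x ∈ MatSS _ N := by
  refine mem_matSS_iff.2 ⟨fun s t => ?_, fun s => ?_⟩
  · by_cases h : IsMarked U L (x s) ∨ IsMarked U L (x t)
    · rw [arcMatrix_apply s t h, arcMatrix_apply t s h.symm]
      exact apply_eq_neg_of_mem_matSS (uss_mem_matSS K n) _ _
    · simp [arcMatrix, h, or_comm.not.1 h]
  · by_cases h : IsMarked U L (x s) <;> simp [arcMatrix, h, (uss_mem_matSS K n).2]

theorem isMarked_or_isMarked_otherEnd {p : SSVar n × Bool} (hp : p.1 ∈ U ∪ L) :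
    IsMarked U L p ∨ IsMarked U L (otherEnd p) := by
  obtain ⟨a, _ | _⟩ := p <;> simpa [IsMarked, otherEnd, or_comm] using hp

/-- `x` lists both ends of every arc of `S`, and `τ` matches the two ends of an arc. -/
structure IsArcEnumeration (S : Finset (SSVar n)) (x : Fin N → SSVar n × Bool)
    (τ : Equiv.Perm (Fin N)) : Prop where
  injective : Function.Injective x
  mem_range : ∀ p, p ∈ Set.range x ↔ p.1 ∈ S
  apply_matching : ∀ s, x (τ s) = otherEnd (x s)

theorem exists_isArcEnumeration (S : Finset (SSVar n)) :
    ∃ (N : ℕ) (x : Fin N → SSVar n × Bool) (τ : Equiv.Perm (Fin N)), IsArcEnumeration S x τ := by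
  let e := Fintype.equivFin {p : SSVar n × Bool // p.1 ∈ S}
  refine ⟨_, fun s => (e.symm s).1, e.permCongr (otherEnd.subtypePerm fun p => Iff.rfl), ?_, ?_, ?_⟩
  · exact Subtype.val_injective.comp e.symm.injective
  · exact fun p => ⟨by rintro ⟨s, rfl⟩; exact (e.symm s).2, fun h => ⟨e ⟨p, h⟩, by simp⟩⟩
  · exact fun s => by simp only [Equiv.permCongr_apply, Equiv.symm_apply_apply]; rfl

namespace IsArcEnumeration

variable {S : Finset (SSVar n)} {τ : Equiv.Perm (Fin N)}

theorem fst_mem (hx : IsArcEnumeration S x τ) (s : Fin N) : (x s).1 ∈ S :=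
  (hx.mem_range _).1 ⟨s, rfl⟩

theorem isFPFInvolution (hx : IsArcEnumeration S x τ) : IsFPFInvolution τ where
  involutive s := hx.injective (by simp [hx.apply_matching, otherEnd, Prod.ext_iff])
  apply_ne s h := by simpa [hx.apply_matching, otherEnd, Prod.ext_iff] using congrArg x h

theorem eq_or_eq_of_fst_eq (hx : IsArcEnumeration S x τ) {s t : Fin N}
    (h : (x s).1 = (x t).1) : s = t ∨ s = τ t := by
  rw [← hx.injective.eq_iff, ← hx.injective.eq_iff, hx.apply_matching]
  simp only [otherEnd, Prod.ext_iff, h]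
  simpa using Bool.eq_or_eq_not _ _

theorem sum_single_fst (hx : IsArcEnumeration S x τ) :
    ∑ s ∈ Finset.univ.filter (fun s => τ s < s), Finsupp.single (x s).1 1 =
      ∑ a ∈ S, Finsupp.single a 1 := by
  refine Finset.sum_nbij (fun s => (x s).1) (fun s _ => hx.fst_mem s) (fun s hs t ht hst => ?_)
    (fun a ha => ?_) fun _ _ => rfl
  · simp only [Finset.coe_filter, Finset.mem_univ, true_and, Set.mem_ofPred_eq] at hs ht
    rcases hx.eq_or_eq_of_fst_eq hst with h | rfl
    · exact h
    · rw [hx.isFPFInvolution.involutive] at hs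
      exact absurd hs ht.not_gt
  · obtain ⟨s, hs⟩ := (hx.mem_range (a, true)).2 ha
    rcases (hx.isFPFInvolution.apply_ne s).lt_or_gt with h | h
    · exact ⟨s, by simpa using h, by simp [hs]⟩
    · exact ⟨τ s, by simpa [hx.isFPFInvolution.involutive s] using h,
        by simp [hx.apply_matching, hs, otherEnd]⟩

open Classical in
theorem card_add_card_eq (hx : IsArcEnumeration (U ∪ L) x τ) :
    (Finset.univ.filter fun s => IsMarked U L (x s)).card = U.card + L.card := by
  have himage : (Finset.univ.filter fun s => IsMarked U L (x s)).image x =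
      U ×ˢ {true} ∪ L ×ˢ {false} := by
    have hmarked : ∀ p, p ∈ U ×ˢ {true} ∪ L ×ˢ {false} ↔ IsMarked U L p := by
      rintro ⟨a, _ | _⟩ <;> simp [IsMarked]
    ext p
    rw [hmarked, Finset.mem_image]
    refine ⟨by rintro ⟨s, hs, rfl⟩; exact (Finset.mem_filter.1 hs).2, fun hp => ?_⟩
    obtain ⟨s, rfl⟩ := (hx.mem_range p).2 (hp.fst_mem)
    exact ⟨s, by simpa using hp, rfl⟩
  rw [← Finset.card_image_of_injective _ hx.injective, himage, Finset.card_union_of_disjoint]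
  · simp
  · simp [Finset.disjoint_left]

end IsArcEnumeration

theorem ArcConfig.arcEnd_lt (hc : ArcConfig U L i j) (hji : j ≤ i) {p : SSVar n × Bool}
    (hp : p.1 ∈ U ∪ L) : (arcEnd p : ℕ) < i := by
  obtain ⟨a, side⟩ := p
  have hrow : (a.1.1 : ℕ) < i := (Finset.mem_union.1 hp).elim
    (fun h => (hc.upper_row_lt a h).trans_le hji) (hc.lower_row_lt a)
  cases side
  · exact lt_trans (Fin.lt_def.1 a.2) hrow
  · exact hrow

theorem ArcConfig.arcEnd_lt_of_isMarked (hc : ArcConfig U L i j) {p : SSVar n × Bool}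
    (hp : IsMarked U L p) : (arcEnd p : ℕ) < j := by
  obtain ⟨a, _ | _⟩ := p
  · exact hc.lower_col_lt a hp
  · exact hc.upper_row_lt a hp

theorem IsArcEnumeration.degree_arcMatrix [Nontrivial K] {τ : Equiv.Perm (Fin N)}
    (hx : IsArcEnumeration (U ∪ L) x τ) (m : MonomialOrder (SSVar n)) (s : Fin N) :
    m.degree (arcMatrix K U L x (τ s) s) = Finsupp.single (x s).1 1 := by
  have hmarked := isMarked_or_isMarked_otherEnd (hx.fst_mem s)
  rw [← hx.apply_matching] at hmarked
  rw [arcMatrix_apply _ _ hmarked.symm, hx.apply_matching]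
  obtain ⟨⟨⟨a, b⟩, hba⟩, _ | _⟩ := x s
  · simp only [Uss, otherEnd, arcEnd]
    simp [hba, m.degree_X]
  · simp [Uss, otherEnd, arcEnd, hba, hba.not_gt, m.degree_X]

theorem ArcConfig.varKey_lt_of_mem_support [Nontrivial K] {τ : Equiv.Perm (Fin N)}
    (hc : ArcConfig U L i j) (hUL : ∀ u ∈ U, ∀ v ∈ L, ¬ v < u)
    (hx : IsArcEnumeration (U ∪ L) x τ) {s p q : Fin N}
    (hsp : arcPriority U (x s).1 ≤ arcPriority U (x p).1)
    (hsq : arcPriority U (x s).1 ≤ arcPriority U (x q).1)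
    (hpq : arcMatrix K U L x p q ≠ 0) (hne : s(p, q) ≠ s(s, τ s)) {v : SSVar n}
    {m : MonomialOrder (SSVar n)} (hv : v ∈ (m.degree (arcMatrix K U L x p q)).support) :
    varKey (x s).1 < varKey v := by
  have hmarked := isMarked_of_arcMatrix_ne_zero hpq
  have hpq_ne : p ≠ q := by
    rintro rfl
    exact hpq (arcMatrix_mem_matSS.2 p)
  rw [arcMatrix_apply _ _ hmarked] at hpq hv
  obtain ⟨w, hw, hdeg⟩ := exists_degree_uss_eq hpq m
  obtain rfl : v = w := by
    simpa using Finsupp.support_single_subset (hdeg ▸ hv)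
  refine hc.varKey_lt hUL (hx.fst_mem s) (hx.fst_mem p) (hx.fst_mem q) hsp hsq hmarked ?_ hw
  rintro ⟨hps, hqs⟩
  rcases hx.eq_or_eq_of_fst_eq hps with rfl | rfl <;>
    rcases hx.eq_or_eq_of_fst_eq hqs with rfl | rfl
  · exact hpq_ne rfl
  · exact hne rfl
  · exact hne Sym2.eq_swap
  · exact hpq_ne rfl

/- The Pfaffian of the arc matrix qualifies: its leading term comes from the matching `τ`. -/
theorem ArcConfig.exists_mem_pfaffianIdeal_degree_eq [IsDomain K] (hc : ArcConfig U L i j)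
    (hUL : ∀ u ∈ U, ∀ v ∈ L, ¬ v < u) (hji : j ≤ i) (hi : i ≤ n) {r : ℕ → ℕ → ℕ}
    (hr : r i j < U.card + L.card) :
    ∃ f ∈ pfaffianIdeal K n r, f ≠ 0 ∧
      (antidiagOrder n).degree f = ∑ a ∈ U ∪ L, Finsupp.single a 1 := by
  classical
  obtain ⟨N, x, τ, hx⟩ := exists_isArcEnumeration (U ∪ L)
  have hmem : Pfaffian (arcMatrix K U L x) ∈ pfaffianIdeal K n r :=
    pfaffian_mem_pfaffianIdeal hji hi arcMatrix_mem_matSS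
      (fun s t hs => arcMatrix_apply s t (Or.inl (Finset.mem_filter.1 hs).2))
      (fun s => hc.arcEnd_lt hji (hx.fst_mem s))
      (fun s hs => hc.arcEnd_lt_of_isMarked (Finset.mem_filter.1 hs).2)
      (hr.trans_eq hx.card_add_card_eq.symm)
  obtain ⟨h0, hdeg⟩ := pfaffian_ne_zero_and_degree_eq (H := arcMatrix K U L x)
    (ρ := fun s => arcPriority U (x s).1)
    arcMatrix_mem_matSS hx.isFPFInvolution (fun s => by simp [hx.apply_matching, otherEnd])
    (hx.degree_arcMatrix _) fun s p q hsp hsq hpq hne v hv =>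
      hc.varKey_lt_of_mem_support hUL hx hsp hsq hpq hne hv
  exact ⟨_, hmem, h0, hdeg.trans hx.sum_single_fst⟩

end ArcConfig

section ArcExchange

variable {n i j : ℕ} {U L S T : Finset (SSVar n)} {a b u v : SSVar n}

theorem IsNested.mono (hT : IsNested T) (hST : S ⊆ T) : IsNested S :=
  Set.Pairwise.mono (Finset.coe_subset.2 hST) hT

theorem IsNested.union (hS : IsNested S) (hT : IsNested T)
    (h : ∀ s ∈ S, ∀ t ∈ T, Inside t s) : IsNested (S ∪ T) := by
  rw [IsNested, Finset.coe_union, Set.pairwise_union]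
  exact ⟨hS, hT, fun s hs t ht _ => ⟨Or.inr (h s hs t ht), Or.inl (h s hs t ht)⟩⟩

theorem disjoint_of_inside (h : ∀ s ∈ S, ∀ t ∈ T, Inside t s) : Disjoint S T :=
  Finset.disjoint_left.2 fun a haS haT => (h a haS a haT).1.false

theorem IsNested.overlap (hS : IsNested S) (ha : a ∈ S) (hb : b ∈ S) :
    a.1.2 < b.1.1 ∧ b.1.2 < a.1.1 := by
  have ha21 := a.2
  have hb21 := b.2
  rcases eq_or_ne a b with rfl | hab
  · exact ⟨ha21, ha21⟩
  · rcases hS ha hb hab with ⟨_, _⟩ | ⟨_, _⟩ <;> omega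

theorem IsNested.not_lt (hS : IsNested S) (ha : a ∈ S) (hb : b ∈ S) : ¬ a < b := by
  intro hab
  have hrow : a.1.1 ≤ b.1.1 := hab.le.1
  have hcol : a.1.2 ≤ b.1.2 := hab.le.2
  rcases hS ha hb hab.ne with ⟨_, _⟩ | ⟨_, _⟩ <;> omega

theorem IsNested.inside_of_row_lt (hS : IsNested S) (ha : a ∈ S) (hb : b ∈ S)
    (h : a.1.1 < b.1.1) : Inside b a := by
  refine (hS ha hb ?_).resolve_left fun hab => h.not_gt hab.2
  rintro rfl
  exact h.false

theorem IsNested.col_le_of_row_le (hS : IsNested S) (ha : a ∈ S) (hb : b ∈ S)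
    (h : a.1.1 ≤ b.1.1) : b.1.2 ≤ a.1.2 := by
  rcases eq_or_ne a b with rfl | hab
  · exact le_rfl
  · rcases hS ha hb hab with ⟨_, _⟩ | ⟨_, _⟩ <;> omega

/-- The arcs `u ∈ U` and `v ∈ L` violate the normality condition `¬ v < u`, with `u` outermost
possible, and `v` outermost possible for this `u`. -/
structure IsExtremalPair (U L : Finset (SSVar n)) (u v : SSVar n) : Prop where
  mem_upper : u ∈ U
  mem_lower : v ∈ L
  lt : v < u
  not_lt_of_row_lt : ∀ u' ∈ U, u.1.1 < u'.1.1 → ∀ v' ∈ L, ¬ v' < u'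
  not_lt_left_of_row_lt : ∀ v' ∈ L, v.1.1 < v'.1.1 → ¬ v' < u

theorem exists_isExtremalPair (h : ∃ u ∈ U, ∃ v ∈ L, v < u) : ∃ u v, IsExtremalPair U L u v := by
  classical
  obtain ⟨u₀, hu₀, hbad⟩ := h
  obtain ⟨u, hu, humax⟩ := Finset.exists_max_image (U.filter fun u => ∃ v ∈ L, v < u)
    (fun u => u.1.1) ⟨u₀, Finset.mem_filter.2 ⟨hu₀, hbad⟩⟩
  obtain ⟨huU, v₀, hv₀, hvu₀⟩ := Finset.mem_filter.1 hu
  obtain ⟨v, hv, hvmax⟩ := Finset.exists_max_image (L.filter fun v => v < u)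
    (fun v => v.1.1) ⟨v₀, Finset.mem_filter.2 ⟨hv₀, hvu₀⟩⟩
  obtain ⟨hvL, hvu⟩ := Finset.mem_filter.1 hv
  refine ⟨u, v, huU, hvL, hvu, fun u' hu' hrow v' hv' hlt => ?_, fun v' hv' hrow hlt => ?_⟩
  · exact hrow.not_ge (humax u' (Finset.mem_filter.2 ⟨hu', v', hv', hlt⟩))
  · exact hrow.not_ge (hvmax v' (Finset.mem_filter.2 ⟨hv', hlt⟩))

namespace IsExtremalPair

theorem inside_lower (h : IsExtremalPair U L u v) (hc : ArcConfig U L i j) (ha : a ∈ U)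
    (hau : a.1.1 ≤ u.1.1) (hb : b ∈ L) (hvb : v.1.1 < b.1.1) : Inside b a := by
  have hcol : u.1.2 ≤ a.1.2 := hc.nested_upper.col_le_of_row_le ha h.mem_upper hau
  have hbv : Inside b v := hc.nested_lower.inside_of_row_lt h.mem_lower hb hvb
  have hbu : b.1.2 < u.1.2 := hbv.1.trans_le h.lt.le.2
  have hrow : u.1.1 < b.1.1 := by
    by_contra! hle
    refine h.not_lt_left_of_row_lt b hb hvb (lt_of_le_of_ne ⟨hle, hbu.le⟩ ?_)
    rintro rfl
    exact hbu.false
  exact ⟨hbu.trans_le hcol, hau.trans_lt hrow⟩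

theorem inside_upper (h : IsExtremalPair U L u v) (hc : ArcConfig U L i j) (ha : a ∈ L)
    (hav : a.1.1 ≤ v.1.1) (hb : b ∈ U) (hub : u.1.1 < b.1.1) : Inside b a := by
  have hcol : v.1.2 ≤ a.1.2 := hc.nested_lower.col_le_of_row_le ha h.mem_lower hav
  have hrow : v.1.1 < b.1.1 := lt_of_le_of_lt h.lt.le.1 hub
  have hbv : b.1.2 < v.1.2 := by
    by_contra! hle
    refine h.not_lt_of_row_lt b hb hub v h.mem_lower (lt_of_le_of_ne ⟨hrow.le, hle⟩ ?_)
    rintro rfl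
    exact hrow.false
  exact ⟨hbv.trans_le hcol, hav.trans_lt hrow⟩

theorem inside_of_mem_newLower (h : IsExtremalPair U L u v) (hc : ArcConfig U L i j) :
    ∀ a ∈ U.filter (fun a => a.1.1 ≤ u.1.1), ∀ b ∈ L.filter (fun b => ¬ b.1.1 ≤ v.1.1),
      Inside b a := fun a ha b hb => by
  rw [Finset.mem_filter] at ha hb
  exact h.inside_lower hc ha.1 ha.2 hb.1 (not_le.1 hb.2)

theorem inside_of_mem_newUpper (h : IsExtremalPair U L u v) (hc : ArcConfig U L i j) :
    ∀ a ∈ L.filter (fun a => a.1.1 ≤ v.1.1), ∀ b ∈ U.filter (fun b => ¬ b.1.1 ≤ u.1.1),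
      Inside b a := fun a ha b hb => by
  rw [Finset.mem_filter] at ha hb
  exact h.inside_upper hc ha.1 ha.2 hb.1 (not_le.1 hb.2)

theorem arcConfig_newLower (h : IsExtremalPair U L u v) (hc : ArcConfig U L i j) (hji : j ≤ i) :
    ArcConfig U (U.filter (fun a => a.1.1 ≤ u.1.1) ∪ L.filter (fun a => ¬ a.1.1 ≤ v.1.1)) i j := by
  refine ⟨hc.nested_upper, (hc.nested_upper.mono (Finset.filter_subset _ _)).union
    (hc.nested_lower.mono (Finset.filter_subset _ _)) (h.inside_of_mem_newLower hc),
    fun a ha b hb => ?_, hc.upper_row_lt, fun b hb => ?_, fun b hb => ?_⟩ <;>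
    rw [Finset.mem_union, Finset.mem_filter, Finset.mem_filter] at hb <;>
    rcases hb with ⟨hb, -⟩ | ⟨hb, -⟩
  · exact hc.nested_upper.overlap ha hb
  · exact hc.overlap a ha b hb
  · exact lt_trans (Fin.lt_def.1 b.2) (hc.upper_row_lt b hb)
  · exact hc.lower_col_lt b hb
  · exact (hc.upper_row_lt b hb).trans_le hji
  · exact hc.lower_row_lt b hb

theorem arcConfig_newUpper (h : IsExtremalPair U L u v) (hc : ArcConfig U L i j) :
    ArcConfig (L.filter (fun a => a.1.1 ≤ v.1.1) ∪ U.filter (fun a => ¬ a.1.1 ≤ u.1.1)) L i j := by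
  refine ⟨(hc.nested_lower.mono (Finset.filter_subset _ _)).union
    (hc.nested_upper.mono (Finset.filter_subset _ _)) (h.inside_of_mem_newUpper hc),
    hc.nested_lower, fun a ha b hb => ?_, fun a ha => ?_, hc.lower_col_lt, hc.lower_row_lt⟩ <;>
    rw [Finset.mem_union, Finset.mem_filter, Finset.mem_filter] at ha <;>
    rcases ha with ⟨ha, hrow⟩ | ⟨ha, -⟩
  · exact hc.nested_lower.overlap ha hb
  · exact hc.overlap a ha b hb
  · exact lt_of_le_of_lt (Fin.le_def.1 (hrow.trans h.lt.le.1)) (hc.upper_row_lt u h.mem_upper)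
  · exact hc.upper_row_lt a ha

theorem not_lt_of_mem_newLower (h : IsExtremalPair U L u v) (hc : ArcConfig U L i j)
    (ha : a ∈ U)
    (hb : b ∈ U.filter (fun a => a.1.1 ≤ u.1.1) ∪ L.filter (fun a => ¬ a.1.1 ≤ v.1.1)) :
    ¬ b < a := by
  rw [Finset.mem_union, Finset.mem_filter, Finset.mem_filter, not_le] at hb
  rcases hb with ⟨hb, -⟩ | ⟨hb, hrow⟩
  · exact hc.nested_upper.not_lt hb ha
  · have hub : u.1.1 < b.1.1 := (h.inside_lower hc h.mem_upper le_rfl hb hrow).2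
    exact fun hlt => h.not_lt_of_row_lt a ha (hub.trans_le hlt.le.1) b hb hlt

theorem not_lt_of_mem_newUpper (h : IsExtremalPair U L u v) (hc : ArcConfig U L i j)
    (ha : a ∈ L.filter (fun a => a.1.1 ≤ v.1.1) ∪ U.filter (fun a => ¬ a.1.1 ≤ u.1.1))
    (hb : b ∈ L) : ¬ b < a := by
  rw [Finset.mem_union, Finset.mem_filter, Finset.mem_filter, not_le] at ha
  rcases ha with ⟨ha, -⟩ | ⟨ha, hrow⟩
  · exact hc.nested_lower.not_lt hb ha
  · exact h.not_lt_of_row_lt a ha hrow b hb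

end IsExtremalPair

/- Exchange the inner parts of `U` and `L` cut off by an extremal pair, whichever way does not
decrease the total size. -/
theorem ArcConfig.exists_normal (hc : ArcConfig U L i j) (hji : j ≤ i) :
    ∃ U' L', ArcConfig U' L' i j ∧ (∀ u ∈ U', ∀ v ∈ L', ¬ v < u) ∧
      U.card + L.card ≤ U'.card + L'.card ∧ U' ∪ L' ⊆ U ∪ L := by
  by_cases hbad : ∃ u ∈ U, ∃ v ∈ L, v < u
  swap
  · push Not at hbad
    exact ⟨U, L, hc, hbad, le_rfl, subset_rfl⟩
  obtain ⟨u, v, h⟩ := exists_isExtremalPair hbad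
  have hcardU := Finset.card_filter_add_card_filter_not (s := U) (fun a => a.1.1 ≤ u.1.1)
  have hcardL := Finset.card_filter_add_card_filter_not (s := L) (fun a => a.1.1 ≤ v.1.1)
  rcases le_total (L.filter fun a => a.1.1 ≤ v.1.1).card (U.filter fun a => a.1.1 ≤ u.1.1).card
    with hle | hle
  · refine ⟨U, _, h.arcConfig_newLower hc hji, fun a ha b hb => h.not_lt_of_mem_newLower hc ha hb,
      ?_, ?_⟩
    · rw [Finset.card_union_of_disjoint (disjoint_of_inside (h.inside_of_mem_newLower hc))]
      omega
    · exact Finset.union_subset Finset.subset_union_left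
        (Finset.union_subset_union (Finset.filter_subset _ _) (Finset.filter_subset _ _))
  · refine ⟨_, L, h.arcConfig_newUpper hc, fun a ha b hb => h.not_lt_of_mem_newUpper hc ha hb,
      ?_, ?_⟩
    · rw [Finset.card_union_of_disjoint (disjoint_of_inside (h.inside_of_mem_newUpper hc))]
      omega
    · rw [Finset.union_comm U]
      exact Finset.union_subset (Finset.union_subset_union (Finset.filter_subset _ _)
        (Finset.filter_subset _ _)) Finset.subset_union_left

end ArcExchange

/-! ### Standard monomials -/

section Remainder

open scoped MonomialOrder

variable {σ K : Type*} [Field K]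

theorem exists_remainder (ord : MonomialOrder σ) {I : Ideal (MvPolynomial σ K)}
    {S : Set (σ →₀ ℕ)} (hS : IsLowerSet S)
    (hI : ∀ d ∉ S, ∃ b ∈ I, b ≠ 0 ∧ ord.degree b = d) (f : MvPolynomial σ K) :
    ∃ r, (∀ d ∈ r.support, d ∈ S) ∧ f - r ∈ I ∧ (f ≠ 0 → ord.degree f ∈ S → r ≠ 0) := by
  let B : Set (MvPolynomial σ K) := {b | b ∈ I ∧ b ≠ 0 ∧ ord.degree b ∉ S}
  obtain ⟨g, r, hf, hdeg, hr⟩ := ord.div_set (B := B)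
    (fun b hb => (ord.leadingCoeff_ne_zero_iff.2 hb.2.1).isUnit) f
  rw [Finsupp.linearCombination_apply] at hf
  refine ⟨r, fun d hd => ?_, ?_, fun hf0 hfS hr0 => ?_⟩
  · by_contra hdS
    obtain ⟨b, hbI, hb0, rfl⟩ := hI d hdS
    exact hr _ hd b ⟨hbI, hb0, hdS⟩ le_rfl
  · rw [hf, add_sub_cancel_right]
    exact Ideal.sum_mem _ fun b _ => I.mul_mem_left _ b.2.1
  · have hlead : ∑ b ∈ g.support, (g b • (b : MvPolynomial σ K)).coeff (ord.degree f) ≠ 0 := by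
      rw [hr0, add_zero, Finsupp.sum] at hf
      rw [← coeff_sum, ← hf]
      exact ord.leadingCoeff_ne_zero_iff.2 hf0
    obtain ⟨b, -, hb⟩ := Finset.exists_ne_zero_of_sum_ne_zero hlead
    rw [smul_eq_mul, mul_comm] at hb
    have hmul : (b : MvPolynomial σ K) * g b ≠ 0 := by
      rintro h
      rw [h, coeff_zero] at hb
      exact hb rfl
    have hle : ord.degree f ≼[ord] ord.degree ((b : MvPolynomial σ K) * g b) :=
      ord.le_degree (mem_support_iff.2 hb)
    have heq : ord.degree f = ord.degree (b : MvPolynomial σ K) + ord.degree (g b) := by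
      rw [← ord.degree_mul (left_ne_zero_of_mul hmul) (right_ne_zero_of_mul hmul)]
      exact ord.toSyn.injective (le_antisymm hle (hdeg b))
    exact b.2.2.2 (hS (heq ▸ le_self_add) hfS)

end Remainder

section Standard

open scoped MonomialOrder

variable {n i j : ℕ} {S : Set (ℕ × ℕ)} {T : Finset (ℕ × ℕ)}

/-- `T` is an antidiagonal (a chain from lower left to upper right) of cells of `S` in the top-left
`i × j` rectangle; rows and columns are counted from `0`. -/
structure IsAntidiagonalIn (S : Set (ℕ × ℕ)) (i j : ℕ) (T : Finset (ℕ × ℕ)) : Prop where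
  pairwise : (T : Set (ℕ × ℕ)).Pairwise fun e e' =>
    (e.1 < e'.1 ∧ e'.2 < e.2) ∨ (e'.1 < e.1 ∧ e.2 < e'.2)
  mem : ∀ e ∈ T, e ∈ S
  fst_lt : ∀ e ∈ T, e.1 < i
  snd_lt : ∀ e ∈ T, e.2 < j

/-- The antidiagonals of `S` respect the rank table `r`. -/
def IsStandard (n : ℕ) (S : Set (ℕ × ℕ)) (r : ℕ → ℕ → ℕ) : Prop :=
  ∀ i ≤ n, ∀ j ≤ n, ∀ T, IsAntidiagonalIn S i j T → T.card ≤ r i j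

/-- `S` is a possible set of positions of nonzero entries of a skew-symmetric `n × n` matrix. -/
structure IsSkewSupport (n : ℕ) (S : Set (ℕ × ℕ)) : Prop where
  swap_mem : ∀ e ∈ S, e.swap ∈ S
  fst_ne_snd : ∀ e ∈ S, e.1 ≠ e.2
  fst_lt : ∀ e ∈ S, e.1 < n

/-- The positions, on both sides of the diagonal, of the variables dividing a monomial in the
generic skew-symmetric matrix. -/
def monomialCells (m : SSVar n →₀ ℕ) : Set (ℕ × ℕ) :=
  {e | ∃ v : SSVar n, m v ≠ 0 ∧ s((v.1.1 : ℕ), (v.1.2 : ℕ)) = s(e.1, e.2)}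

/-- The exponents of the monomials whose antidiagonals respect the rank table `r`; if `r` is
symmetric, every other monomial is a leading monomial of `pfaffianIdeal K n r`. -/
def standardMonomials (n : ℕ) (r : ℕ → ℕ → ℕ) : Set (SSVar n →₀ ℕ) :=
  {m | IsStandard n (monomialCells m) r}

theorem IsAntidiagonalIn.mono (hT : IsAntidiagonalIn S i j T) {S' : Set (ℕ × ℕ)} {i' j' : ℕ}
    {T' : Finset (ℕ × ℕ)} (hT' : T' ⊆ T) (hS : S ⊆ S') (hi : i ≤ i') (hj : j ≤ j') :
    IsAntidiagonalIn S' i' j' T' where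
  pairwise := hT.pairwise.mono (Finset.coe_subset.2 hT')
  mem e he := hS (hT.mem e (hT' he))
  fst_lt e he := (hT.fst_lt e (hT' he)).trans_le hi
  snd_lt e he := (hT.snd_lt e (hT' he)).trans_le hj

theorem IsSkewSupport.snd_lt (hS : IsSkewSupport n S) : ∀ e ∈ S, e.2 < n :=
  fun e he => hS.fst_lt e.swap (hS.swap_mem e he)

theorem IsAntidiagonalIn.image_swap (hT : IsAntidiagonalIn S i j T) (hS : IsSkewSupport n S) :
    IsAntidiagonalIn S j i (T.image Prod.swap) where
  pairwise := by
    rw [Finset.coe_image, Set.InjOn.pairwise_image Prod.swap_injective.injOn]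
    intro e he e' he' hne
    have := hT.pairwise he he' hne
    simp only [Function.onFun, Prod.fst_swap, Prod.snd_swap]
    omega
  mem := Finset.forall_mem_image.2 fun e he => hS.swap_mem e (hT.mem e he)
  fst_lt := Finset.forall_mem_image.2 fun e he => hT.snd_lt e he
  snd_lt := Finset.forall_mem_image.2 fun e he => hT.fst_lt e he

theorem isSkewSupport_monomialCells (m : SSVar n →₀ ℕ) : IsSkewSupport n (monomialCells m) where
  swap_mem := by
    rintro e ⟨v, hv, he⟩
    exact ⟨v, hv, he.trans Sym2.eq_swap⟩
  fst_ne_snd := by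
    rintro e ⟨v, -, he⟩ heq
    have := v.2
    rcases Sym2.eq_iff.1 he with h | h <;> omega
  fst_lt := by
    rintro e ⟨v, -, he⟩
    rcases Sym2.eq_iff.1 he with h | h <;> omega

theorem mem_monomialCells_iff {m : SSVar n →₀ ℕ} (v : SSVar n) :
    ((v.1.1 : ℕ), (v.1.2 : ℕ)) ∈ monomialCells m ↔ m v ≠ 0 := by
  refine ⟨?_, fun h => ⟨v, h, rfl⟩⟩
  rintro ⟨u, hu, huv⟩
  have huv' : u = v := by
    have := u.2
    have := v.2
    rcases Sym2.eq_iff.1 huv with h | h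
    · exact Subtype.ext (Prod.ext (Fin.ext h.1) (Fin.ext h.2))
    · omega
  exact huv' ▸ hu

theorem isLowerSet_standardMonomials (n : ℕ) (r : ℕ → ℕ → ℕ) :
    IsLowerSet (standardMonomials n r) := by
  intro m m' hle hm i hi j hj T hT
  refine hm i hi j hj T (hT.mono subset_rfl ?_ le_rfl le_rfl)
  rintro e ⟨v, hv, he⟩
  exact ⟨v, ((Nat.pos_of_ne_zero hv).trans_le (hle v)).ne', he⟩

/-- The arcs whose cells above the diagonal belong to `T`. -/
def upperArcs (n : ℕ) (T : Finset (ℕ × ℕ)) : Finset (SSVar n) :=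
  Finset.univ.filter fun a => ((a.1.2 : ℕ), (a.1.1 : ℕ)) ∈ T

/-- The arcs whose cells below the diagonal belong to `T`. -/
def lowerArcs (n : ℕ) (T : Finset (ℕ × ℕ)) : Finset (SSVar n) :=
  Finset.univ.filter fun a => ((a.1.1 : ℕ), (a.1.2 : ℕ)) ∈ T

@[simp]
theorem mem_upperArcs {a : SSVar n} :
    a ∈ upperArcs n T ↔ ((a.1.2 : ℕ), (a.1.1 : ℕ)) ∈ T :=
  Finset.mem_filter_univ _

@[simp]
theorem mem_lowerArcs {a : SSVar n} :
    a ∈ lowerArcs n T ↔ ((a.1.1 : ℕ), (a.1.2 : ℕ)) ∈ T :=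
  Finset.mem_filter_univ _

theorem IsAntidiagonalIn.arcConfig (hT : IsAntidiagonalIn S i j T) :
    ArcConfig (upperArcs n T) (lowerArcs n T) i j where
  nested_upper u hu v hv huv := by
    rw [Finset.mem_coe, mem_upperArcs] at hu hv
    have := hT.pairwise hu hv fun h => huv <|
      Subtype.ext (Prod.ext (Fin.ext (congrArg Prod.snd h)) (Fin.ext (congrArg Prod.fst h)))
    simp only [Inside, Fin.lt_def]
    omega
  nested_lower u hu v hv huv := by
    rw [Finset.mem_coe, mem_lowerArcs] at hu hv
    have := hT.pairwise hu hv fun h => huv <|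
      Subtype.ext (Prod.ext (Fin.ext (congrArg Prod.fst h)) (Fin.ext (congrArg Prod.snd h)))
    simp only [Inside, Fin.lt_def]
    omega
  overlap u hu v hv := by
    rw [mem_upperArcs] at hu
    rw [mem_lowerArcs] at hv
    have hu2 := u.2
    have hv2 := v.2
    have := hT.pairwise hu hv (by simp only [ne_eq, Prod.mk.injEq]; omega)
    simp only [Fin.lt_def] at *
    omega
  upper_row_lt u hu := hT.snd_lt _ (mem_upperArcs.1 hu)
  lower_col_lt v hv := hT.snd_lt _ (mem_lowerArcs.1 hv)
  lower_row_lt v hv := hT.fst_lt _ (mem_lowerArcs.1 hv)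

theorem card_le_card_upperArcs_add_card_lowerArcs (hS : IsSkewSupport n S)
    (hT : ∀ e ∈ T, e ∈ S) : T.card ≤ (upperArcs n T).card + (lowerArcs n T).card := by
  have hsub : T ⊆ (upperArcs n T).image (fun a => ((a.1.2 : ℕ), (a.1.1 : ℕ))) ∪
      (lowerArcs n T).image (fun a => ((a.1.1 : ℕ), (a.1.2 : ℕ))) := by
    rintro ⟨a, b⟩ he
    have ha := hS.fst_lt _ (hT _ he)
    have hb := hS.snd_lt _ (hT _ he)
    rw [Finset.mem_union, Finset.mem_image, Finset.mem_image]
    rcases lt_or_gt_of_ne (hS.fst_ne_snd _ (hT _ he)) with h | h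
    · exact Or.inl ⟨⟨(⟨b, hb⟩, ⟨a, ha⟩), h⟩, mem_upperArcs.2 he, rfl⟩
    · exact Or.inr ⟨⟨(⟨a, ha⟩, ⟨b, hb⟩), h⟩, mem_lowerArcs.2 he, rfl⟩
  exact (Finset.card_le_card hsub).trans ((Finset.card_union_le _ _).trans
    (add_le_add Finset.card_image_le Finset.card_image_le))

variable {K : Type*} {r : ℕ → ℕ → ℕ}

theorem IsAntidiagonalIn.exists_mem_pfaffianIdeal_degree_eq [CommRing K] [IsDomain K]
    {m : SSVar n →₀ ℕ} (hT : IsAntidiagonalIn (monomialCells m) i j T) (hji : j ≤ i) (hi : i ≤ n)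
    (hr : r i j < T.card) :
    ∃ f ∈ pfaffianIdeal K n r, f ≠ 0 ∧ (antidiagOrder n).degree f = m := by
  have hS := isSkewSupport_monomialCells m
  obtain ⟨U, L, hc, hUL, hcard, hsub⟩ := (hT.arcConfig (n := n)).exists_normal hji
  have hcardT := card_le_card_upperArcs_add_card_lowerArcs hS hT.mem
  obtain ⟨f, hf, hf0, hdeg⟩ :=
    hc.exists_mem_pfaffianIdeal_degree_eq (K := K) (r := r) hUL hji hi (by omega)
  have hdvd : (antidiagOrder n).degree f ≤ m := by
    intro a
    rw [hdeg, Finsupp.finsetSum_apply]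
    simp only [Finsupp.single_apply, Finset.sum_ite_eq']
    split_ifs with ha
    · rw [Nat.one_le_iff_ne_zero, ← mem_monomialCells_iff]
      rcases Finset.mem_union.1 (hsub ha) with h | h
      · exact hS.swap_mem _ (hT.mem _ (mem_upperArcs.1 h))
      · exact hT.mem _ (mem_lowerArcs.1 h)
    · exact Nat.zero_le _
  classical
  have hmon : monomial (m - (antidiagOrder n).degree f) (1 : K) ≠ 0 :=
    monomial_eq_zero.not.2 one_ne_zero
  refine ⟨f * monomial (m - (antidiagOrder n).degree f) 1, Ideal.mul_mem_right _ _ hf,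
    mul_ne_zero hf0 hmon, ?_⟩
  rw [MonomialOrder.degree_mul hf0 hmon, MonomialOrder.degree_monomial, if_neg one_ne_zero,
    add_tsub_cancel_of_le hdvd]

theorem exists_mem_pfaffianIdeal_degree_eq [CommRing K] [IsDomain K]
    (hr : ∀ i j, r i j = r j i) :
    ∀ m ∉ standardMonomials n r,
      ∃ f ∈ pfaffianIdeal K n r, f ≠ 0 ∧ (antidiagOrder n).degree f = m := by
  intro m hm
  simp only [standardMonomials, Set.mem_ofPred_eq, IsStandard] at hm
  push Not at hm
  obtain ⟨i, hi, j, hj, T, hT, hcard⟩ := hm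
  rcases le_total j i with hji | hij
  · exact hT.exists_mem_pfaffianIdeal_degree_eq hji hi hcard
  · have hT' := hT.image_swap (isSkewSupport_monomialCells m)
    refine hT'.exists_mem_pfaffianIdeal_degree_eq hij hj ?_
    rwa [Finset.card_image_of_injective _ Prod.swap_injective, hr]

theorem exists_standard_remainder [Field K] (hr : ∀ i j, r i j = r j i)
    (f : MvPolynomial (SSVar n) K) :
    ∃ g, (∀ d ∈ g.support, d ∈ standardMonomials n r) ∧ f - g ∈ pfaffianIdeal K n r ∧
      (f ≠ 0 → (antidiagOrder n).degree f ∈ standardMonomials n r → g ≠ 0) :=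
  exists_remainder _ (isLowerSet_standardMonomials n r) (exists_mem_pfaffianIdeal_degree_eq hr) f

end Standard

/-! ### Rank tables of fixed-point-free involutions -/

section RankTable

variable {w : ℕ → ℕ} {q s : ℕ}

theorem IsFPFInvolution.exists_le_and_le_apply (hw : IsFPFInvolution w) (N : ℕ) :
    ∃ s, N ≤ s ∧ N ≤ w s := by
  obtain ⟨s, hs⟩ := Infinite.exists_notMem_finset (Finset.range N ∪ (Finset.range N).image w)
  simp only [Finset.mem_union, Finset.mem_image, Finset.mem_range, not_or, not_lt] at hs
  exact ⟨s, hs.1, not_lt.1 fun h => hs.2 ⟨w s, h, hw.involutive s⟩⟩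

/-- The rank of the top-left `i × j` submatrix of the permutation matrix of `w`, with rows and
columns counted from `0`. -/
def rankTable (w : ℕ → ℕ) (i j : ℕ) : ℕ := ((Finset.range i).filter fun a => w a < j).card

theorem rankTable_succ (w : ℕ → ℕ) (i j : ℕ) :
    rankTable w (i + 1) j = rankTable w i j + if w i < j then 1 else 0 := by
  rw [rankTable, rankTable, Finset.range_add_one, Finset.filter_insert]
  split_ifs
  · exact Finset.card_insert_of_notMem (by simp)
  · rfl

theorem IsFPFInvolution.rankTable_comm (hw : IsFPFInvolution w) (i j : ℕ) :
    rankTable w i j = rankTable w j i := by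
  have hmaps : ∀ i j, ∀ a ∈ (Finset.range i).filter (fun a => w a < j),
      w a ∈ (Finset.range j).filter fun a => w a < i := by
    intro i j a ha
    rw [Finset.mem_filter, Finset.mem_range] at ha ⊢
    rw [hw.involutive a]
    exact ha.symm
  exact Finset.card_nbij' w w (hmaps i j) (hmaps j i) (fun a _ => hw.involutive a)
    (fun a _ => hw.involutive a)

theorem IsFPFInvolution.even_rankTable (hw : IsFPFInvolution w) (k : ℕ) :
    Even (rankTable w k k) := by
  rw [rankTable, ← ZMod.natCast_eq_zero_iff_even, Finset.card_eq_sum_ones, Nat.cast_sum]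
  refine Finset.sum_involution (fun a _ => w a) (fun a _ => by decide)
    (fun a _ _ => hw.apply_ne a) (fun a ha => ?_) (fun a _ => hw.involutive a)
  rw [Finset.mem_filter, Finset.mem_range] at ha ⊢
  rw [hw.involutive a]
  exact ha.symm

theorem IsFPFInvolution.rankTable_max_max (hw : IsFPFInvolution w) {i j : ℕ}
    (hmin : ∀ a < max i j, w a < max i j → w a < min i j) :
    rankTable w (max i j) (max i j) = rankTable w i j := by
  refine congrArg Finset.card (Finset.ext fun a => ?_)
  simp only [Finset.mem_filter, Finset.mem_range]
  refine ⟨fun ⟨ha, hwa⟩ => ?_, fun ⟨_, _⟩ => by omega⟩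
  have h1 := hmin a ha hwa
  have h2 := hmin (w a) hwa (by rwa [hw.involutive a])
  rw [hw.involutive a] at h2
  omega

/-- The involution obtained from `w` by replacing the cycles `(q, w q)` and `(s, w s)` by
`(q, w s)` and `(s, w q)`, written as a conjugate of `w` by a transposition. -/
def transition (w : ℕ → ℕ) (q s : ℕ) : ℕ → ℕ :=
  Equiv.swap (w q) (w s) ∘ w ∘ Equiv.swap (w q) (w s)

/-- The cycle `(s, w s)` lies strictly to the lower right of the cycle `(q, w q)`, so that
`transition w q s` has smaller ranks than `w`. -/
structure IsTransition (w : ℕ → ℕ) (q s : ℕ) : Prop where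
  lt_apply : q < w q
  lt : q < s
  apply_lt : w q < w s

theorem IsFPFInvolution.transition (hw : IsFPFInvolution w) (q s : ℕ) :
    IsFPFInvolution (transition w q s) :=
  hw.conj (swap_involutive _ _)

namespace IsTransition

theorem ne_apply (ht : IsTransition w q s) (hw : IsFPFInvolution w) : s ≠ w q := fun h => by
  have := hw.apply_eq_iff.2 h
  have := ht.lt_apply
  have := ht.apply_lt
  omega

theorem transition_left (ht : IsTransition w q s) : transition w q s q = w s := by
  have := ht.lt_apply
  have := ht.apply_lt
  simp only [transition, Function.comp_apply]
  rw [Equiv.swap_apply_of_ne_of_ne (x := q) (by omega) (by omega), Equiv.swap_apply_left]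

theorem transition_right (ht : IsTransition w q s) (hw : IsFPFInvolution w) :
    transition w q s s = w q := by
  simp only [transition, Function.comp_apply]
  rw [Equiv.swap_apply_of_ne_of_ne (ht.ne_apply hw) (hw.apply_ne s).symm, Equiv.swap_apply_right]

theorem transition_apply_left (ht : IsTransition w q s) (hw : IsFPFInvolution w) :
    transition w q s (w q) = s :=
  (hw.transition q s).apply_eq_iff.2 (ht.transition_right hw).symm

theorem transition_apply_right (ht : IsTransition w q s) (hw : IsFPFInvolution w) :
    transition w q s (w s) = q :=
  (hw.transition q s).apply_eq_iff.2 ht.transition_left.symm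

theorem transition_of_ne (hw : IsFPFInvolution w) {a : ℕ} (h1 : a ≠ q) (h2 : a ≠ w q)
    (h3 : a ≠ s) (h4 : a ≠ w s) : transition w q s a = w a := by
  simp only [transition, Function.comp_apply]
  rw [Equiv.swap_apply_of_ne_of_ne h2 h4, Equiv.swap_apply_of_ne_of_ne]
  · exact fun h => h1 (hw.involutive.injective h)
  · exact fun h => h3 (hw.involutive.injective h)

theorem rankTable_eq (ht : IsTransition w q s) (hw : IsFPFInvolution w) (i j : ℕ) :
    rankTable w i j = rankTable (transition w q s) i j
      + (if q < i ∧ i ≤ s ∧ w q < j ∧ j ≤ w s then 1 else 0)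
      + (if w q < i ∧ i ≤ w s ∧ q < j ∧ j ≤ s then 1 else 0) := by
  obtain ⟨hqp, hqs, hpr⟩ := id ht
  have hsp := ht.ne_apply hw
  have hsr := hw.apply_ne s
  induction i with
  | zero => simp [rankTable]
  | succ i ih =>
    rw [rankTable_succ, rankTable_succ, ih]
    by_cases h1 : i = q
    · subst h1
      rw [ht.transition_left]
      split_ifs <;> omega
    by_cases h2 : i = w q
    · subst h2
      rw [ht.transition_apply_left hw, hw.involutive q]
      split_ifs <;> omega
    by_cases h3 : i = s
    · subst h3
      rw [ht.transition_right hw]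
      split_ifs <;> omega
    by_cases h4 : i = w s
    · subst h4
      rw [ht.transition_apply_right hw, hw.involutive s]
      split_ifs <;> omega
    rw [transition_of_ne hw h1 h2 h3 h4]
    split_ifs <;> omega

theorem rankTable_le (ht : IsTransition w q s) (hw : IsFPFInvolution w) (i j : ℕ) :
    rankTable (transition w q s) i j ≤ rankTable w i j := by
  rw [ht.rankTable_eq hw i j, add_assoc]
  exact Nat.le_add_right _ _

theorem rankTable_lt (ht : IsTransition w q s) (hw : IsFPFInvolution w) :
    rankTable (transition w q s) (q + 1) (w q + 1) < rankTable w (q + 1) (w q + 1) := by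
  have := ht.lt
  have := ht.apply_lt
  rw [ht.rankTable_eq hw, if_pos (by omega)]
  omega

end IsTransition
end RankTable

section Transition

variable {n k q s : ℕ} {S : Set (ℕ × ℕ)} {T : Finset (ℕ × ℕ)} {w : ℕ → ℕ}

theorem IsAntidiagonalIn.union_image_swap (hT : IsAntidiagonalIn S k k T)
    (hS : IsSkewSupport n S) (hside : (∀ e ∈ T, e.1 < e.2) ∨ ∀ e ∈ T, e.2 < e.1) :
    IsAntidiagonalIn S k k (T ∪ T.image Prod.swap) where
  pairwise := by
    rw [Finset.coe_union, Set.pairwise_union]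
    refine ⟨hT.pairwise, (hT.image_swap hS).pairwise, fun a ha b' hb' _ => ?_⟩
    obtain ⟨b, hb, rfl⟩ := Finset.mem_image.1 (Finset.mem_coe.1 hb')
    simp only [Prod.fst_swap, Prod.snd_swap]
    rcases eq_or_ne a b with rfl | hab
    · rcases hside with h | h <;> have := h a ha <;> omega
    · have := hT.pairwise ha hb hab
      rcases hside with h | h <;> have := h a ha <;> have := h b hb <;> omega
  mem e he := (Finset.mem_union.1 he).elim (hT.mem e) ((hT.image_swap hS).mem e)
  fst_lt e he := (Finset.mem_union.1 he).elim (hT.fst_lt e) ((hT.image_swap hS).fst_lt e)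
  snd_lt e he := (Finset.mem_union.1 he).elim (hT.snd_lt e) ((hT.image_swap hS).snd_lt e)

theorem card_union_image_swap (hside : (∀ e ∈ T, e.1 < e.2) ∨ ∀ e ∈ T, e.2 < e.1) :
    (T ∪ T.image Prod.swap).card = 2 * T.card := by
  have hdisj : Disjoint T (T.image Prod.swap) := by
    rw [Finset.disjoint_right, Finset.forall_mem_image]
    intro e he he'
    rcases hside with h | h <;> have := h e he <;> have := h _ he' <;>
      simp only [Prod.fst_swap, Prod.snd_swap] at this <;> omega
  rw [Finset.card_union_of_disjoint hdisj,
    Finset.card_image_of_injective _ Prod.swap_injective, two_mul]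

/- Each half of an antidiagonal, above or below the diagonal, can be reflected to a larger
antidiagonal of even size. -/
theorem IsAntidiagonalIn.card_add_two_le (hT : IsAntidiagonalIn S k k T) (hS : IsSkewSupport n S)
    {R : ℕ} (hR : Even R) (hlt : ∀ T', IsAntidiagonalIn S k k T' → T'.card < R) :
    T.card + 2 ≤ R := by
  have hhalf : ∀ T' ⊆ T, ((∀ e ∈ T', e.1 < e.2) ∨ ∀ e ∈ T', e.2 < e.1) → 2 * T'.card < R := by
    intro T' hsub hside
    rw [← card_union_image_swap hside]
    exact hlt _ ((hT.mono hsub subset_rfl le_rfl le_rfl).union_image_swap hS hside)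
  have hupper := hhalf (T.filter fun e => e.1 < e.2) (Finset.filter_subset _ _)
    (Or.inl fun e he => (Finset.mem_filter.1 he).2)
  have hlower := hhalf (T.filter fun e => ¬ e.1 < e.2) (Finset.filter_subset _ _)
    (Or.inr fun e he => by
      rw [Finset.mem_filter] at he
      have := hS.fst_ne_snd e (hT.mem e he.1)
      omega)
  have := Finset.card_filter_add_card_filter_not (s := T) (fun e => e.1 < e.2)
  obtain ⟨t, ht⟩ := hR
  omega

/-- The antidiagonals of `S` leave room in the rectangles on which `transition w q s` has smaller
ranks than `w`; since these come in transposed pairs, only one of each pair is tested. -/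
structure HasSlack (n : ℕ) (S : Set (ℕ × ℕ)) (w : ℕ → ℕ) (q s : ℕ) : Prop where
  card_lt : ∀ i ≤ n, ∀ j ≤ n, q < i → i ≤ s → w q < j → j ≤ w s →
    ∀ T, IsAntidiagonalIn S i j T → T.card < rankTable w i j
  apply_le : ∀ k ≤ n, k ≤ s → k ≤ w s → ∀ a < k, w a < k → w a ≤ w q

theorem HasSlack.card_add_two_le (hs : HasSlack n S w q s) (hw : IsFPFInvolution w)
    (hS : IsSkewSupport n S) {i j : ℕ} (hi : i ≤ n) (hj : j ≤ n)
    (hij : q < i ∧ i ≤ s ∧ w q < j ∧ j ≤ w s) (hji : w q < i ∧ i ≤ w s ∧ q < j ∧ j ≤ s)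
    (hT : IsAntidiagonalIn S i j T) : T.card + 2 ≤ rankTable w i j := by
  have hrank : rankTable w (max i j) (max i j) = rankTable w i j :=
    hw.rankTable_max_max fun a ha hwa => (hs.apply_le (max i j) (by omega) (by omega) (by omega)
      a ha hwa).trans_lt (by omega)
  rw [← hrank]
  exact (hT.mono subset_rfl subset_rfl (le_max_left i j) (le_max_right i j)).card_add_two_le hS
    (hw.even_rankTable _)
    (hs.card_lt _ (by omega) _ (by omega) (by omega) (by omega) (by omega) (by omega))

theorem HasSlack.isStandard_transition (hs : HasSlack n S w q s) (hw : IsFPFInvolution w)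
    (ht : IsTransition w q s) (hS : IsSkewSupport n S) (hstd : IsStandard n S (rankTable w)) :
    IsStandard n S (rankTable (transition w q s)) := by
  intro i hi j hj T hT
  have hrank := ht.rankTable_eq hw i j
  by_cases hij : q < i ∧ i ≤ s ∧ w q < j ∧ j ≤ w s <;>
    by_cases hji : w q < i ∧ i ≤ w s ∧ q < j ∧ j ≤ s
  · have := hs.card_add_two_le hw hS hi hj hij hji hT
    rw [if_pos hij, if_pos hji] at hrank
    omega
  · have := hs.card_lt i hi j hj hij.1 hij.2.1 hij.2.2.1 hij.2.2.2 T hT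
    rw [if_pos hij, if_neg hji] at hrank
    omega
  · have := hs.card_lt j hj i hi hji.2.2.1 hji.2.2.2 hji.1 hji.2.1 _ (hT.image_swap hS)
    rw [Finset.card_image_of_injective _ Prod.swap_injective, hw.rankTable_comm] at this
    rw [if_neg hij, if_pos hji] at hrank
    omega
  · have := hstd i hi j hj T hT
    rw [if_neg hij, if_neg hji] at hrank
    omega

/-- `(q, w q)` is the first cycle of `w` that meets the top-left `n × n` square. -/
structure IsFirstCycle (n : ℕ) (w : ℕ → ℕ) (q : ℕ) : Prop where
  lt : q < n
  apply_lt : w q < n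
  le_apply : ∀ a < q, n ≤ w a

namespace IsFirstCycle

theorem lt_apply (hq : IsFirstCycle n w q) (hw : IsFPFInvolution w) : q < w q := by
  have := hw.apply_ne q
  by_contra h
  have := hq.le_apply (w q) (by omega)
  rw [hw.involutive q] at this
  have := hq.lt
  omega

theorem isTransition (hq : IsFirstCycle n w q) (hw : IsFPFInvolution w) (hqs : q < s)
    (hs : w q < w s) : IsTransition w q s :=
  ⟨hq.lt_apply hw, hqs, hs⟩

end IsFirstCycle

theorem IsStandard.exists_le_apply_le (hstd : IsStandard n S (rankTable w))
    (hS : IsSkewSupport n S) {e : ℕ × ℕ} (he : e ∈ S) : ∃ c ≤ e.1, w c ≤ e.2 := by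
  have hcard := hstd (e.1 + 1) (hS.fst_lt e he) (e.2 + 1) (hS.snd_lt e he) {e}
    { pairwise := by rw [Finset.coe_singleton]; exact Set.pairwise_singleton _ _
      mem := by simpa using he
      fst_lt := by simp
      snd_lt := by simp }
  obtain ⟨c, hc⟩ := Finset.card_pos.1 hcard
  rw [Finset.mem_filter, Finset.mem_range] at hc
  exact ⟨c, by omega, by omega⟩

theorem IsStandard.le_fst (hstd : IsStandard n S (rankTable w)) (hS : IsSkewSupport n S)
    (hq : IsFirstCycle n w q) {e : ℕ × ℕ} (he : e ∈ S) : q ≤ e.1 := by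
  obtain ⟨c, hc, hwc⟩ := hstd.exists_le_apply_le hS he
  by_contra h
  have := hq.le_apply c (by omega)
  have := hS.snd_lt e he
  omega

theorem IsStandard.exists_transition_of_row_eq_empty (hstd : IsStandard n S (rankTable w))
    (hw : IsFPFInvolution w) (hS : IsSkewSupport n S) (hq : IsFirstCycle n w q)
    (hrow : ∀ c, (q, c) ∉ S) : ∃ s, IsTransition w q s ∧ HasSlack n S w q s := by
  classical
  have hex : ∃ s, q < s ∧ w q < w s := by
    obtain ⟨s, hs, hws⟩ := hw.exists_le_and_le_apply (w q + 1)
    have := hq.lt_apply hw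
    exact ⟨s, by omega, by omega⟩
  obtain ⟨hqs, hws⟩ := Nat.find_spec hex
  have hbetween : ∀ a, q ≤ a → a < Nat.find hex → w a ≤ w q := by
    intro a hqa ha
    rcases hqa.eq_or_lt with rfl | h
    · exact le_rfl
    · by_contra h'
      exact Nat.find_min hex ha ⟨h, not_le.1 h'⟩
  refine ⟨Nat.find hex, hq.isTransition hw hqs hws, ?_, fun k hk _ _ a ha hwa => ?_⟩
  · intro i _ j _ hqi his hpj _ T hT
    have hT_le : T.card ≤ (Finset.Ioo q i).card := by
      refine Finset.card_le_card_of_injOn Prod.fst (fun e he => ?_) fun e he e' he' hee => ?_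
      · have hmem := hT.mem e he
        refine Finset.mem_coe.2 (Finset.mem_Ioo.2 ⟨?_, hT.fst_lt e he⟩)
        refine (hstd.le_fst hS hq hmem).lt_of_ne fun h => hrow e.2 ?_
        rwa [h]
      · by_contra hne
        have := hT.pairwise he he' hne
        omega
    have hle_rank : (Finset.Ico q i).card ≤ rankTable w i j := by
      refine Finset.card_le_card fun a ha => ?_
      rw [Finset.mem_Ico] at ha
      rw [Finset.mem_filter, Finset.mem_range]
      have := hbetween a ha.1 (by omega)
      omega
    rw [Nat.card_Ioo] at hT_le
    rw [Nat.card_Ico] at hle_rank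
    omega
  · refine hbetween a (not_lt.1 fun h => ?_) (by omega)
    have := hq.le_apply a h
    omega

theorem IsStandard.hasSlack_of_mem_row (hstd : IsStandard n S (rankTable w))
    (hS : IsSkewSupport n S) (hq : IsFirstCycle n w q) {c : ℕ} (hcS : (q, c) ∈ S)
    (hmin : ∀ b, (q, b) ∈ S → c ≤ b) (hsc : w s ≤ c)
    (hbefore : ∀ a < s, w a ≤ c → w a ≤ w q) : HasSlack n S w q s := by
  refine ⟨fun i hi j _ hqi his hpj hjr T hT => ?_, fun k _ hks hkr a ha hwa =>
    hbefore a (by omega) (by omega)⟩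
  have hcorner : ∀ e ∈ T, q < e.1 ∧ e.2 < c := by
    intro e he
    have hec : e.2 < c := (hT.snd_lt e he).trans_le (hjr.trans hsc)
    refine ⟨(hstd.le_fst hS hq (hT.mem e he)).lt_of_ne fun h => ?_, hec⟩
    exact (hmin e.2 (h ▸ hT.mem e he)).not_gt hec
  have hT' : IsAntidiagonalIn S i (c + 1) (insert (q, c) T) :=
    { pairwise := by
        rw [Finset.coe_insert, Set.pairwise_insert]
        exact ⟨hT.pairwise, fun e he _ => ⟨Or.inl (hcorner e he), Or.inr (hcorner e he)⟩⟩
      mem := (Finset.forall_mem_insert _ _ _).2 ⟨hcS, hT.mem⟩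
      fst_lt := (Finset.forall_mem_insert _ _ _).2 ⟨hqi, hT.fst_lt⟩
      snd_lt := (Finset.forall_mem_insert _ _ _).2
        ⟨Nat.lt_succ_self c, fun e he => (hcorner e he).2.trans (Nat.lt_succ_self c)⟩ }
  have hcard := hstd i hi (c + 1) (hS.snd_lt _ hcS) _ hT'
  rw [Finset.card_insert_of_notMem fun h => lt_irrefl _ (hcorner _ h).1] at hcard
  refine Nat.lt_of_succ_le (hcard.trans (Finset.card_le_card fun a ha => ?_))
  rw [Finset.mem_filter, Finset.mem_range] at ha ⊢
  have := hbefore a (by omega) (by omega)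
  omega

theorem IsStandard.apply_lt_of_mem_row (hstd : IsStandard n S (rankTable w))
    (hS : IsSkewSupport n S) (hq : IsFirstCycle n w q) (hqS : (q, w q) ∉ S) {c : ℕ}
    (hcS : (q, c) ∈ S) : w q < c := by
  obtain ⟨a, ha, hwa⟩ := hstd.exists_le_apply_le hS hcS
  rcases ha.eq_or_lt with rfl | ha
  · exact hwa.lt_of_ne fun h => hqS (h ▸ hcS)
  · have := hq.le_apply a ha
    have := hS.snd_lt _ hcS
    omega

theorem IsStandard.exists_transition_of_mem_row (hstd : IsStandard n S (rankTable w))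
    (hw : IsFPFInvolution w) (hS : IsSkewSupport n S) (hq : IsFirstCycle n w q)
    (hqS : (q, w q) ∉ S) (hrow : ∃ c, (q, c) ∈ S) :
    ∃ s, IsTransition w q s ∧ HasSlack n S w q s := by
  classical
  obtain ⟨c, hcS, hmin⟩ : ∃ c, (q, c) ∈ S ∧ ∀ b, (q, b) ∈ S → c ≤ b :=
    ⟨Nat.find hrow, Nat.find_spec hrow, fun b hb => Nat.find_min' hrow hb⟩
  have hqc := hstd.apply_lt_of_mem_row hS hq hqS hcS
  have hex : ∃ s, q < s ∧ w q < w s ∧ w s ≤ c := by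
    refine ⟨w c, ?_, by rwa [hw.involutive c], (hw.involutive c).le⟩
    have hne : w c ≠ q := fun h => hqc.ne (hw.apply_eq_iff.1 h).symm
    by_contra h
    have := hq.le_apply (w c) (by omega)
    rw [hw.involutive c] at this
    exact this.not_gt (hS.snd_lt _ hcS)
  obtain ⟨hqs, hws, hwsc⟩ := Nat.find_spec hex
  refine ⟨Nat.find hex, hq.isTransition hw hqs hws,
    hstd.hasSlack_of_mem_row hS hq hcS hmin hwsc fun a ha hwa => ?_⟩
  rcases lt_trichotomy a q with h | rfl | h
  · exact absurd (hq.le_apply a h) (hwa.trans_lt (hS.snd_lt _ hcS)).not_ge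
  · exact le_rfl
  · by_contra h'
    exact Nat.find_min hex ha ⟨h, not_le.1 h', hwa⟩

theorem IsStandard.exists_transition (hstd : IsStandard n S (rankTable w))
    (hw : IsFPFInvolution w) (hS : IsSkewSupport n S) (hq : IsFirstCycle n w q)
    (hqS : (q, w q) ∉ S) :
    ∃ s, IsTransition w q s ∧ IsStandard n S (rankTable (transition w q s)) := by
  obtain ⟨s, ht, hs⟩ : ∃ s, IsTransition w q s ∧ HasSlack n S w q s := by
    by_cases hrow : ∃ c, (q, c) ∈ S
    · exact hstd.exists_transition_of_mem_row hw hS hq hqS hrow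
    · exact hstd.exists_transition_of_row_eq_empty hw hS hq (not_exists.1 hrow)
  exact ⟨s, ht, hs.isStandard_transition hw ht hS hstd⟩

end Transition

/-! ### Rank loci and their parametrization -/

section RankLocus

variable {K : Type*} {n N : ℕ}

theorem map_pfaffian {R S : Type*} [CommRing R] [CommRing S] (f : R →+* S)
    (A : Matrix (Fin N) (Fin N) R) : f (Pfaffian A) = Pfaffian (A.map f) := by
  simp only [Pfaffian, map_sum, map_mul, map_pow, map_neg, map_one, map_prod, Matrix.map_apply]

theorem map_eval_uss [CommRing K] {A : Matrix (Fin n) (Fin n) K} (hA : A ∈ MatSS K n) :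
    (Uss K n).map (eval fun v : SSVar n => A v.1.1 v.1.2) = A := by
  ext i j
  rcases lt_trichotomy i j with h | rfl | h
  · simp [Uss, h, h.not_gt, apply_eq_neg_of_mem_matSS hA i j]
  · simp [Uss, hA.2]
  · simp [Uss, h]

theorem eval_pfUss [CommRing K] {A : Matrix (Fin n) (Fin n) K} (hA : A ∈ MatSS K n)
    (R : Finset (Fin n)) :
    eval (fun v : SSVar n => A v.1.1 v.1.2) (pfUss K R) =
      Pfaffian (A.submatrix (R.orderEmbOfFin rfl) (R.orderEmbOfFin rfl)) := by
  rw [pfUss, map_pfaffian, ← Matrix.submatrix_map, map_eval_uss hA]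

theorem exists_mulVec_eq_zero_of_rank_lt [Field K] {ι κ : Type*} [Finite ι] [Fintype κ]
    (B : Matrix ι κ K) (T : Finset κ)
    (h : (B.submatrix id ((↑) : T → κ)).rank < T.card) : ∃ v ≠ 0, B.mulVec v = 0 := by
  classical
  cases nonempty_fintype ι
  have hdep : ¬ LinearIndependent K fun t : T => B.transpose t := fun hli => by
    have hrank := LinearIndependent.rank_matrix (M := (B.submatrix id ((↑) : T → κ)).transpose) hli
    rw [Matrix.rank_transpose, Fintype.card_coe] at hrank
    exact h.ne hrank
  obtain ⟨g, hg, t, ht⟩ := Fintype.not_linearIndependent_iff.1 hdep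
  refine ⟨fun k => if hk : k ∈ T then g ⟨k, hk⟩ else 0, fun h0 => ht ?_, ?_⟩
  · simpa using congrFun h0 t
  · rw [Matrix.mulVec_eq_sum, ← hg, ← Finset.sum_subset (Finset.subset_univ T),
      ← Finset.sum_coe_sort T]
    · simp
    · intro k _ hk
      simp [hk]

theorem pfaffian_submatrix_eq_zero_of_rank_lt [Field K] {A : Matrix (Fin n) (Fin n) K}
    (hA : A ∈ MatSS K n) {i j : ℕ} (hi : i ≤ n) (hj : j ≤ n) (lab : Fin N → Fin n)
    (hlab : ∀ s, (lab s : ℕ) < i) (T : Finset (Fin N)) (hT : ∀ s ∈ T, (lab s : ℕ) < j)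
    (hrank : (A.submatrix (Fin.castLE hi) (Fin.castLE hj)).rank < T.card) :
    Pfaffian (A.submatrix lab lab) = 0 := by
  have hB := submatrix_mem_matSS hA lab
  obtain ⟨v, hv0, hv⟩ := exists_mulVec_eq_zero_of_rank_lt (A.submatrix lab lab) T <|
    (Matrix.rank_submatrix_le (A.submatrix (Fin.castLE hi) (Fin.castLE hj))
      (fun s => ⟨lab s, hlab s⟩) (fun t : T => ⟨lab t, hT t t.2⟩)).trans_lt hrank
  refine pfaffian_eq_zero_of_vecMul_eq_zero hB hv0 ?_
  rw [← Matrix.mulVec_transpose, hB.1, Matrix.neg_mulVec, hv, neg_zero]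

/-- The skew-symmetric matrices whose top-left `i × j` submatrices have rank at most `r i j`.
For `r = rnk z` this is `Xss K n z`. -/
def rankLocus (K : Type*) [Field K] (n : ℕ) (r : ℕ → ℕ → ℕ) : Set (Matrix (Fin n) (Fin n) K) :=
  {A | A ∈ MatSS K n ∧ ∀ (i j : ℕ) (hi : i ≤ n) (hj : j ≤ n), 1 ≤ i → 1 ≤ j →
    (A.submatrix (Fin.castLE hi) (Fin.castLE hj)).rank ≤ r i j}

theorem pfaffianIdeal_le_vanishingIdeal_rankLocus [Field K] (r : ℕ → ℕ → ℕ) :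
    pfaffianIdeal K n r ≤ vanishingIdeal (rankLocus K n r) fun A v => A v.1.1 v.1.2 := by
  refine Ideal.span_le.2 ?_
  rintro f ⟨R, -, -, ⟨i, j, hj, hji, hi, hRi, hlt⟩, rfl⟩ A ⟨hA, hrank⟩
  rw [eval_pfUss hA]
  refine pfaffian_submatrix_eq_zero_of_rank_lt hA hi (hji.trans hi) _
    (fun s => hRi _ (R.orderEmbOfFin_mem rfl s))
    {s | (R.orderEmbOfFin rfl s : ℕ) < j} (fun s hs => (Finset.mem_filter.1 hs).2)
    (((hrank i j hi (hji.trans hi) (hj.trans hji) hj).trans_lt hlt).trans_eq ?_)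
  rw [← Finset.card_map (R.orderEmbOfFin rfl).toEmbedding]
  congr 1
  ext a
  have hmem : a ∈ R ↔ ∃ s, R.orderEmbOfFin rfl s = a := by
    rw [← Set.mem_range, Finset.range_orderEmbOfFin, Finset.mem_coe]
  simp only [Finset.mem_filter, Finset.mem_map, Finset.mem_univ, true_and, hmem,
    RelEmbedding.coe_toEmbedding, Nat.succ_le_iff]
  constructor
  · rintro ⟨⟨s, rfl⟩, hs⟩
    exact ⟨s, hs, rfl⟩
  · rintro ⟨s, hs, rfl⟩
    exact ⟨⟨s, rfl⟩, hs⟩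

end RankLocus

section OrbitMatrix

variable {R : Type*} [CommRing R] {n : ℕ} {w : ℕ → ℕ}

/-- The entry `J_{a, w a}` of the skew-symmetric signed permutation matrix `J` of a
fixed-point-free involution `w` whose upper triangular entries are `0` and `1`. -/
def arcSign (R : Type*) [CommRing R] (w : ℕ → ℕ) (a : ℕ) : R := if a < w a then 1 else -1

theorem IsFPFInvolution.arcSign_apply (hw : IsFPFInvolution w) (a : ℕ) :
    arcSign R w (w a) = -arcSign R w a := by
  have := hw.apply_ne a
  unfold arcSign
  rw [hw.involutive a]
  split_ifs <;> first | omega | simp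

theorem arcSign_mul_self (w : ℕ → ℕ) (a : ℕ) : arcSign R w a * arcSign R w a = 1 := by
  unfold arcSign
  split_ifs <;> simp

theorem map_arcSign {S : Type*} [CommRing S] (f : R →+* S) (w : ℕ → ℕ) (a : ℕ) :
    f (arcSign R w a) = arcSign S w a := by
  unfold arcSign
  split_ifs <;> simp

/-- The contribution of column `a` of `β` to the entry `(i, j)` of `β J βᵀ`. -/
def orbitTerm (w : ℕ → ℕ) (β : Fin n → ℕ → R) (i j : Fin n) (a : ℕ) : R :=
  arcSign R w a * (β i a * β j (w a))

/-- The matrix `β J βᵀ`, where `J` is the signed permutation matrix of `w`. The columns of `β` are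
indexed by `ℕ`; those of index at least `n` vanish when `β` is triangular. -/
def orbitMatrix (w : ℕ → ℕ) (β : Fin n → ℕ → R) : Matrix (Fin n) (Fin n) R :=
  Matrix.of fun i j => ∑ a ∈ Finset.range n, orbitTerm w β i j a

/-- Lower triangularity of a matrix with `n` rows and infinitely many columns. -/
def IsTriangular (β : Fin n → ℕ → R) : Prop := ∀ (i : Fin n) (a : ℕ), (i : ℕ) < a → β i a = 0

variable {β : Fin n → ℕ → R}

theorem IsTriangular.orbitMatrix_apply (hβ : IsTriangular β) {i j : Fin n} (s : Finset ℕ)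
    (hs : ∀ a ≤ (i : ℕ), w a ≤ (j : ℕ) → a ∈ s) :
    orbitMatrix w β i j = ∑ a ∈ s, orbitTerm w β i j a := by
  have hzero : ∀ a, a ∉ {a ∈ Finset.range n | a ≤ (i : ℕ) ∧ w a ≤ (j : ℕ)} →
      orbitTerm w β i j a = 0 := fun a ha => by
    rw [orbitTerm]
    simp only [Finset.mem_filter, Finset.mem_range, not_and, not_le] at ha
    rcases le_or_gt a (i : ℕ) with hai | hai
    · rw [hβ j (w a) (ha (hai.trans_lt i.2) hai), mul_zero, mul_zero]
    · rw [hβ i a hai, zero_mul, mul_zero]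
  calc orbitMatrix w β i j
      = ∑ a ∈ Finset.range n with a ≤ (i : ℕ) ∧ w a ≤ (j : ℕ), orbitTerm w β i j a :=
        (Finset.sum_subset (Finset.filter_subset _ _) fun a _ => hzero a).symm
    _ = ∑ a ∈ s, orbitTerm w β i j a :=
        Finset.sum_subset (fun a ha => (Finset.mem_filter.1 ha).2.elim (hs a)) fun a _ => hzero a

theorem IsTriangular.orbitMatrix_mem_matSS (hβ : IsTriangular β) (hw : IsFPFInvolution w) :
    orbitMatrix w β ∈ MatSS R n := by
  have happly : ∀ i j, orbitMatrix w β i j = ∑ a ∈ Finset.range n with w a < n,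
      orbitTerm w β i j a := fun i j =>
    hβ.orbitMatrix_apply _ fun a ha hwa =>
      Finset.mem_filter.2 ⟨Finset.mem_range.2 (ha.trans_lt i.2), hwa.trans_lt j.2⟩
  have hmaps : ∀ a ∈ {a ∈ Finset.range n | w a < n}, w a ∈ {a ∈ Finset.range n | w a < n} :=
    fun a ha => by
      rw [Finset.mem_filter, Finset.mem_range] at ha ⊢
      rw [hw.involutive a]
      exact ha.symm
  refine mem_matSS_iff.2 ⟨fun i j => ?_, fun i => ?_⟩
  · rw [happly, happly, ← Finset.sum_neg_distrib]
    refine Finset.sum_nbij' w w hmaps hmaps (fun a _ => hw.involutive a)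
      (fun a _ => hw.involutive a) fun a _ => ?_
    rw [orbitTerm, orbitTerm, hw.arcSign_apply, hw.involutive a]
    ring
  · rw [happly]
    refine Finset.sum_involution (fun a _ => w a) (fun a _ => ?_) (fun a _ _ => hw.apply_ne a) hmaps
      fun a _ => hw.involutive a
    rw [orbitTerm, orbitTerm, hw.arcSign_apply, hw.involutive a]
    ring

theorem IsTriangular.rank_orbitMatrix_submatrix_le {K : Type*} [Field K] {β : Fin n → ℕ → K}
    (hβ : IsTriangular β) {i j : ℕ} (hi : i ≤ n) (hj : j ≤ n) :
    ((orbitMatrix w β).submatrix (Fin.castLE hi) (Fin.castLE hj)).rank ≤ rankTable w i j := by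
  let s := {a ∈ Finset.range i | w a < j}
  have hfactor : (orbitMatrix w β).submatrix (Fin.castLE hi) (Fin.castLE hj) =
      (Matrix.of fun (k : Fin i) (a : s) => arcSign K w a * β (Fin.castLE hi k) a) *
        Matrix.of fun (a : s) (l : Fin j) => β (Fin.castLE hj l) (w a) := by
    ext k l
    rw [Matrix.submatrix_apply, hβ.orbitMatrix_apply s fun a ha hwa => ?_, ← Finset.sum_coe_sort,
      Matrix.mul_apply]
    · simp only [orbitTerm, Matrix.of_apply, mul_assoc]
    · exact Finset.mem_filter.2 ⟨Finset.mem_range.2 (ha.trans_lt k.2), hwa.trans_lt l.2⟩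
  rw [hfactor]
  refine (Matrix.rank_mul_le_left _ _).trans ((Matrix.rank_le_card_width _).trans ?_)
  rw [Fintype.card_coe, rankTable]

theorem IsTriangular.orbitMatrix_mem_rankLocus {K : Type*} [Field K] {β : Fin n → ℕ → K}
    (hβ : IsTriangular β) (hw : IsFPFInvolution w) :
    orbitMatrix w β ∈ rankLocus K n (rankTable w) :=
  ⟨hβ.orbitMatrix_mem_matSS hw, fun _ _ hi hj _ _ => hβ.rank_orbitMatrix_submatrix_le hi hj⟩

end OrbitMatrix

section OrbitIdeal

variable {K : Type*} [Field K] {n : ℕ} {w : ℕ → ℕ}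

/-- The lower triangular matrix whose entries on and below the diagonal are variables. -/
noncomputable def genericTriangular (K : Type*) [Field K] (n : ℕ) (i : Fin n) (a : ℕ) :
    MvPolynomial (Fin n × Fin n) K :=
  if h : a ≤ i then X (i, ⟨a, h.trans_lt i.2⟩) else 0

theorem isTriangular_eval_genericTriangular (x : Fin n × Fin n → K) :
    IsTriangular fun i a => eval x (genericTriangular K n i a) := fun i a hia => by
  simp only [genericTriangular, dif_neg hia.not_ge, map_zero]

theorem IsTriangular.eval_genericTriangular {β : Fin n → ℕ → K} (hβ : IsTriangular β) :
    (fun i a => eval (fun p : Fin n × Fin n => β p.1 p.2) (genericTriangular K n i a)) = β := by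
  funext i a
  rcases le_or_gt a (i : ℕ) with h | h
  · rw [genericTriangular, dif_pos h, eval_X]
  · rw [genericTriangular, dif_neg h.not_ge, map_zero, hβ i a h]

/-- The kernel of the comorphism of the parametrization `β ↦ β J βᵀ` by triangular matrices. -/
noncomputable def orbitIdeal (K : Type*) [Field K] (n : ℕ) (w : ℕ → ℕ) :
    Ideal (MvPolynomial (SSVar n) K) :=
  RingHom.ker (aeval fun v : SSVar n => orbitMatrix w (genericTriangular K n) v.1.1 v.1.2 :
    MvPolynomial (SSVar n) K →ₐ[K] MvPolynomial (Fin n × Fin n) K)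

instance orbitIdeal_isPrime : (orbitIdeal K n w).IsPrime := RingHom.ker_isPrime _

theorem eval_aeval_orbitMatrix (x : Fin n × Fin n → K) (f : MvPolynomial (SSVar n) K) :
    eval x (aeval (fun v : SSVar n => orbitMatrix w (genericTriangular K n) v.1.1 v.1.2) f) =
      eval (fun v : SSVar n =>
        orbitMatrix w (fun i a => eval x (genericTriangular K n i a)) v.1.1 v.1.2) f := by
  have hcomp : (eval x).comp (algebraMap K (MvPolynomial (Fin n × Fin n) K)) = RingHom.id K :=
    RingHom.ext fun c => eval_C c
  rw [map_aeval, hcomp]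
  simp only [orbitMatrix, orbitTerm, Matrix.of_apply, map_sum, map_mul, map_arcSign]
  rfl

theorem mem_orbitIdeal_iff [Infinite K] {f : MvPolynomial (SSVar n) K} :
    f ∈ orbitIdeal K n w ↔ ∀ β : Fin n → ℕ → K, IsTriangular β →
      eval (fun v : SSVar n => orbitMatrix w β v.1.1 v.1.2) f = 0 := by
  rw [orbitIdeal, RingHom.mem_ker]
  constructor
  · intro hf β hβ
    rw [← hβ.eval_genericTriangular, ← eval_aeval_orbitMatrix]
    exact (congrArg _ hf).trans (map_zero _)
  · refine fun hf => MvPolynomial.funext fun x => ?_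
    rw [map_zero]
    exact (eval_aeval_orbitMatrix x f).trans (hf _ (isTriangular_eval_genericTriangular x))

theorem IsFPFInvolution.vanishingIdeal_rankLocus_le_orbitIdeal [Infinite K]
    (hw : IsFPFInvolution w) :
    (vanishingIdeal (rankLocus K n (rankTable w)) fun A (v : SSVar n) => A v.1.1 v.1.2) ≤
      orbitIdeal K n w :=
  fun _ hf => mem_orbitIdeal_iff.2 fun _ hβ => hf _ (hβ.orbitMatrix_mem_rankLocus hw)

theorem IsFPFInvolution.pfaffianIdeal_le_orbitIdeal [Infinite K] (hw : IsFPFInvolution w) :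
    pfaffianIdeal K n (rankTable w) ≤ orbitIdeal K n w :=
  (pfaffianIdeal_le_vanishingIdeal_rankLocus _).trans hw.vanishingIdeal_rankLocus_le_orbitIdeal

end OrbitIdeal

/-! ### Degeneration along a transition -/

section Degeneration

variable {K : Type*} [Field K] {n : ℕ} {w : ℕ → ℕ} {q s : ℕ}

theorem eval_eq_zero_of_forall_ne_zero [Infinite K] {σ : Type*} {f : MvPolynomial σ K}
    {a b : σ → K} {k : ℕ} (hk : k ≠ 0)
    (h : ∀ t ≠ 0, eval (fun v => t ^ k * b v + a v) f = 0) : eval a f = 0 := by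
  let g : Polynomial K :=
    aeval (fun v => Polynomial.X ^ k * Polynomial.C (b v) + Polynomial.C (a v)) f
  have hg : ∀ t, g.eval t = eval (fun v => t ^ k * b v + a v) f := fun t => by
    have hcomp : (Polynomial.evalRingHom t).comp (algebraMap K (Polynomial K)) = RingHom.id K :=
      RingHom.ext fun c => Polynomial.eval_C
    rw [← Polynomial.coe_evalRingHom, map_aeval, hcomp]
    simp only [Polynomial.coe_evalRingHom, Polynomial.eval_add, Polynomial.eval_mul,
      Polynomial.eval_pow, Polynomial.eval_X, Polynomial.eval_C]
    rfl
  have hg0 : g = 0 := by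
    refine Polynomial.eq_zero_of_infinite_isRoot g (Set.Infinite.mono (s := {0}ᶜ) ?_ ?_)
    · exact fun t ht => (hg t).trans (h t ht)
    · exact (Set.finite_singleton 0).infinite_compl
  simpa [hg0, hk] using (hg 0).symm

/-- The columns `c` for which `c J cᵀ` (for `w`) tends, as `t → 0`, to `β J βᵀ` for the involution
`transition w q s`; only columns `q`, `w q` and `s` differ from those of `β`. -/
def degeneration (w : ℕ → ℕ) (q s : ℕ) (t : K) (β : Fin n → ℕ → K) (i : Fin n) (a : ℕ) : K :=
  if a = q then t * β i q + arcSign K (transition w q s) s * t⁻¹ * β i s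
  else if a = w q then t * β i (w q) + t⁻¹ * β i (w s)
  else if a = s then -arcSign K w s * arcSign K (transition w q s) s * (t⁻¹ * t⁻¹) * β i s
  else β i a

theorem degeneration_of_ne {t : K} {β : Fin n → ℕ → K} {i : Fin n} {a : ℕ} (h1 : a ≠ q)
    (h2 : a ≠ w q) (h3 : a ≠ s) : degeneration w q s t β i a = β i a := by
  rw [degeneration, if_neg h1, if_neg h2, if_neg h3]

/-- The variable `u_{w q, q}` at the first cycle `(q, w q)` of `w` in `[n]`. -/
def IsFirstCycle.var (hq : IsFirstCycle n w q) (hw : IsFPFInvolution w) : SSVar n :=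
  ⟨(⟨w q, hq.apply_lt⟩, ⟨q, hq.lt⟩), hq.lt_apply hw⟩

namespace IsTransition

variable {β : Fin n → ℕ → K}

theorem isTriangular_degeneration (ht : IsTransition w q s) (hβ : IsTriangular β) (t : K) :
    IsTriangular (degeneration w q s t β) := fun i a hia => by
  have hqs := ht.lt
  have hpr := ht.apply_lt
  unfold degeneration
  split_ifs with hq hp hs
  · rw [hβ i q (by omega), hβ i s (by omega), mul_zero, mul_zero, add_zero]
  · rw [hβ i (w q) (by omega), hβ i (w s) (by omega), mul_zero, mul_zero, add_zero]
  · rw [hβ i s (by omega), mul_zero]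
  · exact hβ i a hia

theorem sum_insert_four {M : Type*} [AddCommMonoid M] (ht : IsTransition w q s)
    (hw : IsFPFInvolution w) (f : ℕ → M) :
    ∑ a ∈ {q, w q, s, w s}, f a = f q + (f (w q) + (f s + f (w s))) := by
  have hqp := ht.lt_apply
  have hqs := ht.lt
  have hpr := ht.apply_lt
  have hsp := ht.ne_apply hw
  have hsr := hw.apply_ne s
  rw [Finset.sum_insert (by grind), Finset.sum_insert (by grind), Finset.sum_insert (by grind),
    Finset.sum_singleton]

theorem orbitTerm_degeneration_of_notMem (hw : IsFPFInvolution w) (t : K) (i j : Fin n) {a : ℕ}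
    (ha : a ∉ ({q, w q, s, w s} : Finset ℕ)) :
    orbitTerm w (degeneration w q s t β) i j a = orbitTerm (transition w q s) β i j a := by
  simp only [Finset.mem_insert, Finset.mem_singleton, not_or] at ha
  obtain ⟨h1, h2, h3, h4⟩ := ha
  have hwa : transition w q s a = w a := transition_of_ne hw h1 h2 h3 h4
  rw [orbitTerm, orbitTerm, arcSign, arcSign, hwa, degeneration_of_ne h1 h2 h3,
    degeneration_of_ne (mt hw.apply_eq_iff.1 h2) (hw.involutive.injective.ne h1)
      (mt hw.apply_eq_iff.1 h4)]

theorem sum_orbitTerm_transition (ht : IsTransition w q s) (hw : IsFPFInvolution w)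
    (β : Fin n → ℕ → K) (i j : Fin n) :
    ∑ a ∈ {q, w q, s, w s}, orbitTerm (transition w q s) β i j a =
      β i q * β j (w s) - β i (w s) * β j q +
        arcSign K (transition w q s) s * (β i s * β j (w q) - β i (w q) * β j s) := by
  have hsign_q : arcSign K (transition w q s) q = 1 := by
    rw [arcSign, ht.transition_left, if_pos (ht.lt_apply.trans ht.apply_lt)]
  have hsign_r : arcSign K (transition w q s) (w s) = -1 := by
    rw [← hsign_q, ← (hw.transition q s).arcSign_apply, ht.transition_left]
  have hsign_p : arcSign K (transition w q s) (w q) = -arcSign K (transition w q s) s := by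
    rw [← (hw.transition q s).arcSign_apply, ht.transition_right hw]
  simp only [ht.sum_insert_four hw, orbitTerm, ht.transition_left, ht.transition_right hw,
    ht.transition_apply_left hw, ht.transition_apply_right hw, hsign_q, hsign_p, hsign_r]
  ring

theorem sum_orbitTerm_degeneration (ht : IsTransition w q s) (hw : IsFPFInvolution w)
    (β : Fin n → ℕ → K) {t : K} (ht0 : t ≠ 0) (i j : Fin n) :
    ∑ a ∈ {q, w q, s, w s}, orbitTerm w (degeneration w q s t β) i j a =
      t ^ 2 * (β i q * β j (w q) - β i (w q) * β j q) +
        (β i q * β j (w s) - β i (w s) * β j q +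
          arcSign K (transition w q s) s * (β i s * β j (w q) - β i (w q) * β j s)) := by
  have hqp := ht.lt_apply
  have hqs := ht.lt
  have hpr := ht.apply_lt
  have hsp := ht.ne_apply hw
  have hsign_q : arcSign K w q = 1 := if_pos hqp
  have hcol_r : ∀ i, degeneration w q s t β i (w s) = β i (w s) := fun i =>
    degeneration_of_ne (by omega) (by omega) (hw.apply_ne s)
  simp only [ht.sum_insert_four hw, orbitTerm, hw.involutive q, hw.involutive s, hw.arcSign_apply,
    hsign_q, hcol_r]
  simp only [degeneration, if_true, if_neg hqp.ne', if_neg hqs.ne', if_neg hsp]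
  set α : K := arcSign K (transition w q s) s
  have hcancel : t * t⁻¹ = 1 := mul_inv_cancel₀ ht0
  linear_combination
    (β i q * β j (w s) - β i (w s) * β j q + α * (β i s * β j (w q) - β i (w q) * β j s)) * hcancel
      - α * (t⁻¹ * t⁻¹) * (β i s * β j (w s) - β i (w s) * β j s) * arcSign_mul_self (R := K) w s

theorem orbitMatrix_degeneration (ht : IsTransition w q s) (hw : IsFPFInvolution w)
    (hβ : IsTriangular β) {t : K} (ht0 : t ≠ 0) (i j : Fin n) :
    orbitMatrix w (degeneration w q s t β) i j =
      t ^ 2 * (β i q * β j (w q) - β i (w q) * β j q) + orbitMatrix (transition w q s) β i j := by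
  have hsplit : ∀ (y : ℕ → ℕ) {γ : Fin n → ℕ → K}, IsTriangular γ → orbitMatrix y γ i j =
      ∑ a ∈ Finset.range n \ {q, w q, s, w s}, orbitTerm y γ i j a +
        ∑ a ∈ {q, w q, s, w s}, orbitTerm y γ i j a := fun y γ hγ => by
    rw [← Finset.sum_union Finset.sdiff_disjoint, Finset.sdiff_union_self_eq_union]
    exact hγ.orbitMatrix_apply _ fun a ha _ =>
      Finset.mem_union_left _ (Finset.mem_range.2 (ha.trans_lt i.2))
  rw [hsplit w (ht.isTriangular_degeneration hβ t), hsplit (transition w q s) hβ,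
    ht.sum_orbitTerm_degeneration hw β ht0, ht.sum_orbitTerm_transition hw,
    Finset.sum_congr rfl fun a ha =>
      orbitTerm_degeneration_of_notMem hw t i j (Finset.mem_sdiff.1 ha).2,
    add_left_comm]

theorem orbitIdeal_le [Infinite K] (ht : IsTransition w q s) (hw : IsFPFInvolution w) :
    orbitIdeal K n w ≤ orbitIdeal K n (transition w q s) := fun f hf =>
  mem_orbitIdeal_iff.2 fun β hβ => eval_eq_zero_of_forall_ne_zero two_ne_zero fun t ht0 => by
    simpa only [ht.orbitMatrix_degeneration hw hβ ht0] using
      mem_orbitIdeal_iff.1 hf _ (ht.isTriangular_degeneration hβ t)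

theorem apply_lt_transition (ht : IsTransition w q s) (hw : IsFPFInvolution w)
    (hq : IsFirstCycle n w q) {a : ℕ} (ha : a ≤ q) : w q < transition w q s a := by
  have hqp := ht.lt_apply
  have hqs := ht.lt
  have hpr := ht.apply_lt
  rcases ha.eq_or_lt with rfl | haq
  · rwa [ht.transition_left]
  · rw [transition_of_ne hw (by omega) (by omega) (by omega) (by omega)]
    exact hq.apply_lt.trans_le (hq.le_apply a haq)

theorem X_mem_orbitIdeal [Infinite K] (ht : IsTransition w q s) (hw : IsFPFInvolution w)
    (hq : IsFirstCycle n w q) : X (hq.var hw) ∈ orbitIdeal K n (transition w q s) := by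
  refine mem_orbitIdeal_iff.2 fun β hβ => ?_
  rw [eval_X, hβ.orbitMatrix_apply ∅ fun a hap haq => ?_, Finset.sum_empty]
  have hlt := ht.apply_lt_transition hw hq haq
  rw [(hw.transition q s).involutive a] at hlt
  exact absurd hap hlt.not_ge

end IsTransition

theorem X_notMem_orbitIdeal [Infinite K] {v : SSVar n} (hv : w v.1.1 = v.1.2) :
    X v ∉ orbitIdeal K n w := fun hX => by
  have heval := mem_orbitIdeal_iff.1 hX (fun i a => if (i : ℕ) = a then 1 else 0)
    fun i a hia => if_neg hia.ne
  rw [eval_X, orbitMatrix, Matrix.of_apply, Finset.sum_eq_single (v.1.1 : ℕ)] at heval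
  · simp only [orbitTerm, hv, if_true, mul_one] at heval
    simpa [heval] using arcSign_mul_self (R := K) w v.1.1
  · intro a _ ha
    rw [orbitTerm, if_neg ha.symm, zero_mul, mul_zero]
  · exact fun h => absurd (Finset.mem_range.2 v.1.1.2) h

end Degeneration

/-! ### Independence of the standard monomials -/

section Independence

variable {K : Type*} [Field K] {n : ℕ} {w : ℕ → ℕ} {q : ℕ}

/-- The standard monomials for the rank table of `w` are linearly independent modulo the
orbit ideal of `w`. -/
def StandardIndependent (K : Type*) [Field K] (n : ℕ) (w : ℕ → ℕ) : Prop :=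
  ∀ f ∈ orbitIdeal K n w, (∀ d ∈ f.support, d ∈ standardMonomials n (rankTable w)) → f = 0

theorem eq_zero_of_mem_standardMonomials (hout : ∀ a < n, n ≤ w a) {d : SSVar n →₀ ℕ}
    (hd : d ∈ standardMonomials n (rankTable w)) : d = 0 := by
  by_contra hd0
  obtain ⟨v, hv⟩ := Finsupp.ne_iff.1 hd0
  have hT : IsAntidiagonalIn (monomialCells d) n n {((v.1.1 : ℕ), (v.1.2 : ℕ))} :=
    { pairwise := by simp
      mem := by simpa using (mem_monomialCells_iff v).2 hv
      fst_lt := by simp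
      snd_lt := by simp }
  have hcard := hd n le_rfl n le_rfl _ hT
  have hrank : rankTable w n n = 0 := Finset.card_eq_zero.2 <|
    Finset.filter_eq_empty_iff.2 fun a ha => (hout a (Finset.mem_range.1 ha)).not_gt
  rw [Finset.card_singleton, hrank] at hcard
  exact absurd hcard one_pos.not_ge

theorem standardIndependent_of_forall_le_apply (hout : ∀ a < n, n ≤ w a) :
    StandardIndependent K n w := fun f hf hstd => by
  obtain ⟨c, rfl⟩ : ∃ c, f = C c := ⟨_, totalDegree_eq_zero_iff_eq_C.1 <|
    (totalDegree_eq_zero_iff _ _).2 fun d hd v => by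
      rw [eq_zero_of_mem_standardMonomials hout (hstd d hd), Finsupp.zero_apply]⟩
  by_contra hc
  refine orbitIdeal_isPrime.ne_top (Ideal.eq_top_of_isUnit_mem _ hf ?_)
  exact (isUnit_iff_ne_zero.2 fun h => hc (by rw [h, C_0])).map C

theorem IsFirstCycle.eq_zero_of_forall_transition [Infinite K] (hq : IsFirstCycle n w q)
    (hw : IsFPFInvolution w)
    (hind : ∀ s, IsTransition w q s → StandardIndependent K n (transition w q s))
    {g : MvPolynomial (SSVar n) K}
    (hg : ∀ s, IsTransition w q s → g ∈ orbitIdeal K n (transition w q s))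
    (hstd : ∀ d ∈ g.support, d ∈ standardMonomials n (rankTable w))
    (hvar : ∀ d ∈ g.support, d (hq.var hw) = 0) : g = 0 := by
  by_contra hg0
  have hlead := (antidiagOrder n).degree_mem_support hg0
  have hcell : (q, w q) ∉ monomialCells ((antidiagOrder n).degree g) := fun hmem =>
    (mem_monomialCells_iff (hq.var hw)).1 ((isSkewSupport_monomialCells _).swap_mem _ hmem)
      (hvar _ hlead)
  obtain ⟨s, ht, hlead_std⟩ := IsStandard.exists_transition (hstd _ hlead) hw
    (isSkewSupport_monomialCells _) hq hcell
  obtain ⟨k, hkstd, hgk, hk0⟩ := exists_standard_remainder (hw.transition q s).rankTable_comm g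
  refine hk0 hg0 hlead_std (hind s ht k ?_ hkstd)
  rw [← sub_sub_cancel g k]
  exact Ideal.sub_mem _ (hg s ht) ((hw.transition q s).pfaffianIdeal_le_orbitIdeal hgk)

theorem IsFirstCycle.standardIndependent [Infinite K] (hq : IsFirstCycle n w q)
    (hw : IsFPFInvolution w)
    (hind : ∀ s, IsTransition w q s → StandardIndependent K n (transition w q s)) :
    StandardIndependent K n w := fun f => by
  induction hD : f.totalDegree using Nat.strong_induction_on generalizing f with
  | _ D ih =>
  intro hf hstd
  set v := hq.var hw
  set g := f.modMonomial (Finsupp.single v 1) with hg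
  set f' := f.divMonomial (Finsupp.single v 1) with hf'
  have hdecomp : X v * f' + g = f := divMonomial_add_modMonomial_single f v
  have hg_supp : ∀ d ∈ g.support, d ∈ f.support ∧ d v = 0 := fun d hd => by
    rw [mem_support_iff] at hd ⊢
    have hle : ¬ Finsupp.single v 1 ≤ d := fun hle => hd (coeff_modMonomial_of_le f hle)
    rw [hg, coeff_modMonomial_of_not_le f hle] at hd
    rw [Finsupp.single_le_iff] at hle
    exact ⟨hd, by omega⟩
  have hg0 : g = 0 := by
    refine hq.eq_zero_of_forall_transition hw hind (fun s ht => ?_)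
      (fun d hd => hstd d (hg_supp d hd).1) fun d hd => (hg_supp d hd).2
    rw [← add_sub_cancel_left (X v * f') g, hdecomp]
    exact Ideal.sub_mem _ (ht.orbitIdeal_le hw hf)
      (Ideal.mul_mem_right _ _ (ht.X_mem_orbitIdeal hw hq))
  rw [hg0, add_zero] at hdecomp
  by_contra hf0
  have hf'0 : f' ≠ 0 := right_ne_zero_of_mul (hdecomp ▸ hf0)
  refine hf'0 (ih f'.totalDegree ?_ f' rfl ?_ fun d hd => ?_)
  · rw [← hD, ← hdecomp, totalDegree_mul_of_isDomain (X_ne_zero v) hf'0, totalDegree_X]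
    omega
  · exact (orbitIdeal_isPrime.mem_or_mem (hdecomp ▸ hf)).resolve_left
      (X_notMem_orbitIdeal (hw.involutive q))
  · rw [mem_support_iff, hf', coeff_divMonomial, ← mem_support_iff] at hd
    exact isLowerSet_standardMonomials n _ le_add_self (hstd _ hd)

/-- The sum of the ranks recorded in the top-left `n × n` part of the rank table of `w`; it
decreases along transitions at the first cycle of `w`. -/
def totalRank (n : ℕ) (w : ℕ → ℕ) : ℕ :=
  ∑ p ∈ Finset.range (n + 1) ×ˢ Finset.range (n + 1), rankTable w p.1 p.2

theorem IsFirstCycle.totalRank_transition_lt {s : ℕ} (hq : IsFirstCycle n w q)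
    (hw : IsFPFInvolution w) (ht : IsTransition w q s) :
    totalRank n (transition w q s) < totalRank n w :=
  Finset.sum_lt_sum (fun p _ => ht.rankTable_le hw p.1 p.2)
    ⟨(q + 1, w q + 1), by simp [hq.lt, hq.apply_lt], ht.rankTable_lt hw⟩

theorem IsFPFInvolution.standardIndependent [Infinite K] (hw : IsFPFInvolution w) :
    StandardIndependent K n w := by
  induction hN : totalRank n w using Nat.strong_induction_on generalizing w with
  | _ N ih =>
  by_cases hout : ∀ a < n, n ≤ w a
  · exact standardIndependent_of_forall_le_apply hout
  push Not at hout
  classical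
  have hq : IsFirstCycle n w (Nat.find hout) :=
    ⟨(Nat.find_spec hout).1, (Nat.find_spec hout).2, fun a ha => not_lt.1 fun h =>
      Nat.find_min hout ha ⟨ha.trans (Nat.find_spec hout).1, h⟩⟩
  exact hq.standardIndependent hw fun s ht =>
    ih _ (hN ▸ hq.totalRank_transition_lt hw ht) (hw.transition _ s) rfl

theorem IsFPFInvolution.pfaffianIdeal_eq_orbitIdeal [Infinite K] (hw : IsFPFInvolution w) :
    pfaffianIdeal K n (rankTable w) = orbitIdeal K n w := by
  refine le_antisymm hw.pfaffianIdeal_le_orbitIdeal fun f hf => ?_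
  obtain ⟨g, hgstd, hfg, -⟩ := exists_standard_remainder hw.rankTable_comm f
  have hg : g ∈ orbitIdeal K n w := by
    rw [← sub_sub_cancel f g]
    exact Ideal.sub_mem _ hf (hw.pfaffianIdeal_le_orbitIdeal hfg)
  rwa [hw.standardIndependent g hg hgstd, sub_zero] at hfg

theorem IsFPFInvolution.pfaffianIdeal_eq_vanishingIdeal_rankLocus [Infinite K]
    (hw : IsFPFInvolution w) :
    pfaffianIdeal K n (rankTable w) =
      vanishingIdeal (rankLocus K n (rankTable w)) fun A v => A v.1.1 v.1.2 :=
  le_antisymm (pfaffianIdeal_le_vanishingIdeal_rankLocus _)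
    (hw.vanishingIdeal_rankLocus_le_orbitIdeal.trans hw.pfaffianIdeal_eq_orbitIdeal.ge)

end Independence

section Shift

variable {z : Equiv.Perm ℕ}

/-- The map on `ℕ` obtained from a permutation of the positive integers by lowering all indices
by one. -/
def shift (z : Equiv.Perm ℕ) (a : ℕ) : ℕ := z (a + 1) - 1

theorem shift_add_one (hz0 : z 0 = 0) (a : ℕ) : shift z a + 1 = z (a + 1) :=
  Nat.sub_add_cancel <| Nat.pos_of_ne_zero fun h =>
    absurd (z.injective (h.trans hz0.symm)) a.succ_ne_zero

theorem isFPFInvolution_shift (hz0 : z 0 = 0) (hfix : ∀ i, 1 ≤ i → z i ≠ i) (hinv : z * z = 1) :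
    IsFPFInvolution (shift z) where
  involutive a := by
    rw [shift, shift_add_one hz0, ← Equiv.Perm.mul_apply, hinv, Equiv.Perm.one_apply,
      Nat.add_sub_cancel]
  apply_ne a ha := hfix (a + 1) (Nat.succ_pos a) (by rw [← shift_add_one hz0, ha])

theorem rnk_eq_rankTable_shift (hz0 : z 0 = 0) : rnk z = rankTable (shift z) := by
  funext i j
  have himage : (Finset.Icc 1 i).filter (fun a => z a ∈ Finset.Icc 1 j) =
      ((Finset.range i).filter fun a => shift z a < j).map (addRightEmbedding 1) := by
    ext a
    rcases a with _ | a
    · simp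
    · simp [← shift_add_one hz0, Nat.succ_le_iff]
  rw [rnk, himage, Finset.card_map, rankTable]

end Shift

theorem statement5_general (K : Type*) [Field K] [Infinite K] (n : ℕ) (z : Equiv.Perm ℕ)
    (hz0 : z 0 = 0) (hfix : ∀ i, 1 ≤ i → z i ≠ i) (hinv : z * z = 1) :
    IssIdeal K n z = IXss K n z ∧ (IssIdeal K n z).IsPrime := by
  have hw := isFPFInvolution_shift hz0 hfix hinv
  have hI : IssIdeal K n z = pfaffianIdeal K n (rankTable (shift z)) := by
    rw [← rnk_eq_rankTable_shift hz0]
    rfl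
  have hX : IXss K n z = vanishingIdeal (rankLocus K n (rankTable (shift z)))
      fun A v => A v.1.1 v.1.2 := by
    rw [← rnk_eq_rankTable_shift hz0]
    rfl
  rw [hI, hX]
  refine ⟨hw.pfaffianIdeal_eq_vanishingIdeal_rankLocus, ?_⟩
  rw [hw.pfaffianIdeal_eq_orbitIdeal]
  exact orbitIdeal_isPrime

/-- For `z ∈ FPF_n(I_n)`, the Pfaffian ideal `I^ss_z` equals the
vanishing ideal `I(X^ss_z)`; in particular `I^ss_z` is prime. -/
theorem statement5 (K : Type*) [Field K] [IsAlgClosed K] (n : ℕ) (hn : 1 ≤ n)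
    (z : Equiv.Perm ℕ) (hz : z ∈ FPFIn n) :
    IssIdeal K n z = IXss K n z ∧ (IssIdeal K n z).IsPrime :=
  have ⟨hz0, hfix, hinv, _⟩ := hz.1
  statement5_general K n z hz0 hfix hinv

end Paper
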